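/- arXiv:1403.5413 — 3 statements merged into one kernel-verified Lean document; each statement's English description precedes it below -/
import Mathlib

section
/- (Improved Loéve–Young inequality.) For all p > 1 and q > 1 with 1/p + 1/q > 1, there exists a constant C_{p,q} > 0, depending only on p and q, such that: for every a < b and all functions f, g : [a;b] → ℝ with no common points of discontinuity, with f of finite p-variation and g of finite q-variation on [a;b], one has |∫_a^b f dg − f(a)·(g(b) − g(a))| ≤ C_{p,q} · ‖f‖_{p-var,[a;b]}^{p − p/q} · ‖f‖_{osc,[a;b]}^{1 + p/q − p} · ‖g‖_{q-var,[a;b]}, where ∫_a^b f dg denotes the Riemann–Stieltjes integral (which exists under these hypotheses). -/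
open Filter Set

/-- Truncated variation of `f` on `[a;b]` with truncation parameter `δ`. -/
noncomputable def truncVar (f : ℝ → ℝ) (δ a b : ℝ) : ENNReal :=
  ⨆ (n : ℕ) (t : Fin (n + 1) → ℝ) (_ : StrictMono t)
    (_ : ∀ i, t i ∈ Set.Icc a b),
    ∑ i : Fin n, ENNReal.ofReal (|f (t i.succ) - f (t i.castSucc)| - δ)

/-- p-variation of `f` on `[a;b]`. -/
noncomputable def pVar (f : ℝ → ℝ) (p a b : ℝ) : ENNReal :=
  ⨆ (n : ℕ) (t : Fin (n + 1) → ℝ) (_ : StrictMono t)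
    (_ : ∀ i, t i ∈ Set.Icc a b),
    ∑ i : Fin n, ENNReal.ofReal (|f (t i.succ) - f (t i.castSucc)| ^ p)

/-- The p-variation norm `(V^p(f,[a;b]))^{1/p}`. -/
noncomputable def pVarNorm (f : ℝ → ℝ) (p a b : ℝ) : ℝ :=
  (pVar f p a b).toReal ^ (1 / p)

/-- Oscillation norm `sup_{a ≤ s < t ≤ b} |f t - f s|`. -/
noncomputable def oscNorm (f : ℝ → ℝ) (a b : ℝ) : ℝ :=
  sSup {x | ∃ s ∈ Set.Icc a b, ∃ t ∈ Set.Icc a b, s < t ∧ x = |f t - f s|}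

/-- Sup norm `sup_{a ≤ t ≤ b} |f t|`. -/
noncomputable def supNorm (f : ℝ → ℝ) (a b : ℝ) : ℝ :=
  sSup {x | ∃ t ∈ Set.Icc a b, x = |f t|}

/-- `I` is the Riemann–Stieltjes integral `∫_a^b f dg`. -/
def RSIntegral (f g : ℝ → ℝ) (a b : ℝ) (I : ℝ) : Prop :=
  ∀ ε > (0 : ℝ), ∃ δ > (0 : ℝ), ∀ (n : ℕ) (t : Fin (n + 1) → ℝ) (ξ : Fin n → ℝ),
    StrictMono t → t 0 = a → t (Fin.last n) = b →
    (∀ i : Fin n, t i.castSucc ≤ ξ i ∧ ξ i ≤ t i.succ) →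
    (∀ i : Fin n, t i.succ - t i.castSucc < δ) →
    |∑ i : Fin n, f (ξ i) * (g (t i.succ) - g (t i.castSucc)) - I| < ε

/-- `f` is regulated on `[a;b]`: all the relevant one-sided limits exist and are finite. -/
def Regulated (f : ℝ → ℝ) (a b : ℝ) : Prop :=
  (∃ L : ℝ, Tendsto f (nhdsWithin a (Set.Ioi a)) (nhds L)) ∧
  (∃ L : ℝ, Tendsto f (nhdsWithin b (Set.Iio b)) (nhds L)) ∧
  ∀ x ∈ Set.Ioo a b,
    (∃ L : ℝ, Tendsto f (nhdsWithin x (Set.Iio x)) (nhds L)) ∧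
    (∃ L : ℝ, Tendsto f (nhdsWithin x (Set.Ioi x)) (nhds L))

/-- `f` and `g` have no common points of discontinuity on `[a;b]`. -/
def NoCommonDiscont (f g : ℝ → ℝ) (a b : ℝ) : Prop :=
  ∀ x ∈ Set.Icc a b,
    ContinuousWithinAt f (Set.Icc a b) x ∨ ContinuousWithinAt g (Set.Icc a b) x

noncomputable def prd (Q : Finset ℝ) (y : ℝ) : ℝ :=
  if h : (Q.filter (· < y)).Nonempty then (Q.filter (· < y)).max' h else y

lemma prd_eq {Q : Finset ℝ} {x y : ℝ} (hx : x ∈ Q) (hxy : x < y)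
    (h : ∀ w ∈ Q, w < y → w ≤ x) : prd Q y = x := by
  have hm : x ∈ Q.filter (· < y) := Finset.mem_filter.2 ⟨hx, hxy⟩
  have hne : (Q.filter (· < y)).Nonempty := ⟨x, hm⟩
  unfold prd
  rw [dif_pos hne]
  apply le_antisymm
  · apply Finset.max'_le
    intro w hw
    rw [Finset.mem_filter] at hw
    exact h w hw.1 hw.2
  · exact Finset.le_max' _ _ hm

lemma prd_self {Q : Finset ℝ} {y : ℝ} (h : ∀ w ∈ Q, y ≤ w) : prd Q y = y := by
  unfold prd
  rw [dif_neg]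
  rintro ⟨w, hw⟩
  rw [Finset.mem_filter] at hw
  exact absurd hw.2 (not_lt.2 (h w hw.1))

lemma prd_spec {Q : Finset ℝ} {x y : ℝ} (hx : x ∈ Q) (hxy : x < y) :
    prd Q y ∈ Q ∧ prd Q y < y ∧ ∀ w ∈ Q, w < y → w ≤ prd Q y := by
  have hm : x ∈ Q.filter (· < y) := Finset.mem_filter.2 ⟨hx, hxy⟩
  have hne : (Q.filter (· < y)).Nonempty := ⟨x, hm⟩
  have h1 := Finset.max'_mem _ hne
  unfold prd
  rw [dif_pos hne]
  rw [Finset.mem_filter] at h1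
  refine ⟨h1.1, h1.2, fun w hw hwy => Finset.le_max' _ _ (Finset.mem_filter.2 ⟨hw, hwy⟩)⟩

lemma sum_prd {n : ℕ} (t : Fin (n + 1) → ℝ) (ht : StrictMono t) (h : ℝ → ℝ → ℝ)
    (h0 : ∀ y, h y y = 0) :
    ∑ y ∈ Finset.univ.image t, h (prd (Finset.univ.image t) y) y
      = ∑ i : Fin n, h (t i.castSucc) (t i.succ) := by
  rw [Finset.sum_image (fun x _ y _ hxy => ht.injective hxy), Fin.sum_univ_succ]
  rw [prd_self, h0, zero_add]
  · apply Finset.sum_congr rfl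
    intro i _
    rw [prd_eq (x := t i.castSucc)]
    · simp
    · exact ht i.castSucc_lt_succ
    · intro w hw hlt
      simp only [Finset.mem_image, Finset.mem_univ, true_and] at hw
      obtain ⟨j, rfl⟩ := hw
      rw [ht.lt_iff_lt] at hlt
      exact ht.monotone (Fin.le_castSucc_iff.2 hlt)
  · intro w hw
    simp only [Finset.mem_image, Finset.mem_univ, true_and] at hw
    obtain ⟨j, rfl⟩ := hw
    exact ht.monotone (Fin.zero_le j)

lemma var_le {f : ℝ → ℝ} {p a b : ℝ} (hp : 1 < p) (hf : pVar f p a b < ⊤) (Q : Finset ℝ)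
    (hQ : ∀ x ∈ Q, x ∈ Set.Icc a b) :
    ∑ y ∈ Q, |f y - f (prd Q y)| ^ p ≤ (pVar f p a b).toReal := by
  rcases Q.eq_empty_or_nonempty with rfl | hne
  · simp
  obtain ⟨n, hn⟩ : ∃ n, Q.card = n + 1 := ⟨Q.card - 1, by have := hne.card_pos; omega⟩
  have ht : StrictMono (Q.orderEmbOfFin hn) := (Q.orderEmbOfFin hn).strictMono
  have him : Finset.univ.image (Q.orderEmbOfFin hn) = Q := by
    apply Finset.coe_injective
    simp
  have := sum_prd _ ht (fun x y => |f y - f x| ^ p) (by intro y; simp only [sub_self, abs_zero]; exact Real.zero_rpow (by linarith))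
  rw [him] at this
  rw [this]
  have key : ∑ i : Fin n, ENNReal.ofReal (|f (Q.orderEmbOfFin hn i.succ) - f (Q.orderEmbOfFin hn i.castSucc)| ^ p) ≤ pVar f p a b := by
    unfold pVar
    refine le_trans ?_ (le_iSup _ n)
    refine le_trans ?_ (le_iSup _ (fun i => Q.orderEmbOfFin hn i))
    refine le_trans ?_ (le_iSup _ ht)
    refine le_trans ?_ (le_iSup _ (fun i => hQ _ (Finset.orderEmbOfFin_mem Q hn i)))
    exact le_rfl
  rw [← ENNReal.ofReal_sum_of_nonneg (fun i _ => by positivity)] at key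
  exact (ENNReal.ofReal_le_iff_le_toReal hf.ne).1 key

lemma pt_le {f : ℝ → ℝ} {p a b : ℝ} (hp : 1 < p) (hf : pVar f p a b < ⊤) {x y : ℝ}
    (hx : x ∈ Set.Icc a b) (hy : y ∈ Set.Icc a b) :
    |f y - f x| ^ p ≤ (pVar f p a b).toReal := by
  wlog hxy : x < y generalizing x y
  · rcases eq_or_lt_of_le (not_lt.1 hxy) with rfl | h
    · rw [sub_self, abs_zero, Real.zero_rpow (by linarith)]; exact ENNReal.toReal_nonneg
    · rw [abs_sub_comm]; exact this hy hx h
  refine le_trans ?_ (var_le hp hf {x, y} (by simp; exact ⟨hx, hy⟩))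
  have : prd {x, y} y = x := by
    apply prd_eq
    · simp
    · exact hxy
    · intro w hw hwy
      simp at hw
      rcases hw with rfl | rfl
      · exact le_rfl
      · exact absurd hwy (lt_irrefl _)
  rw [Finset.sum_pair hxy.ne, this]
  have : 0 ≤ |f x - f (prd {x, y} x)| ^ p := by positivity
  linarith

noncomputable def RR (f g : ℝ → ℝ) (Q : Finset ℝ) : ℝ := ∑ y ∈ Q, f y * (g y - g (prd Q y))

lemma RR_erase (f g : ℝ → ℝ) (Q : Finset ℝ) {x y z : ℝ} (hx : x ∈ Q) (hy : y ∈ Q) (hz : z ∈ Q)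
    (hxy : x < y) (hyz : y < z) (h1 : ∀ w ∈ Q, w < y → w ≤ x) (h2 : ∀ w ∈ Q, y < w → z ≤ w) :
    RR f g Q - RR f g (Q.erase y) = (f y - f z) * (g y - g x) := by
  unfold RR
  rw [← Finset.sum_erase_add _ _ hy, prd_eq hx hxy h1, add_sub_right_comm, ← Finset.sum_sub_distrib]
  rw [Finset.sum_eq_single_of_mem z (Finset.mem_erase.2 ⟨hyz.ne', hz⟩)]
  · rw [prd_eq (x := y) hy hyz, prd_eq (Q := Q.erase y) (x := x) (Finset.mem_erase.2 ⟨hxy.ne, hx⟩) (hxy.trans hyz)]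
    · ring
    · intro w hw hwz
      rw [Finset.mem_erase] at hw
      rcases lt_or_gt_of_ne hw.1 with h | h
      · exact h1 w hw.2 h
      · exact absurd (h2 w hw.2 h) (not_le.2 hwz)
    · intro w hw hwz
      by_contra hc
      exact absurd (h2 w hw (not_le.1 hc)) (not_le.2 hwz)
  · intro w hw hwz
    rw [Finset.mem_erase] at hw
    have : prd (Q.erase y) w = prd Q w := by
      by_cases hex : ∃ v ∈ Q, v < w
      · obtain ⟨v, hv, hvw⟩ := hex
        obtain ⟨k1, k2, k3⟩ := prd_spec hv hvw
        apply prd_eq _ k2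
        · intro u hu; exact k3 u (Finset.mem_of_mem_erase hu)
        · rw [Finset.mem_erase]
          refine ⟨fun h => ?_, k1⟩
          rw [h] at k2 k3
          have := h2 w hw.2 k2
          have := k3 z hz (lt_of_le_of_ne this hwz.symm)
          linarith
      · push Not at hex
        rw [prd_self hex, prd_self (fun u hu => hex u (Finset.mem_of_mem_erase hu))]
    rw [this, sub_self]

lemma removal {f g : ℝ → ℝ} {p q a b F G : ℝ} (hF0 : 0 < F) (hG0 : 0 < G)
    (hF : ∀ Q : Finset ℝ, (∀ x ∈ Q, x ∈ Set.Icc a b) → ∑ y ∈ Q, |f y - f (prd Q y)| ^ p ≤ F)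
    (hG : ∀ Q : Finset ℝ, (∀ x ∈ Q, x ∈ Set.Icc a b) → ∑ y ∈ Q, |g y - g (prd Q y)| ^ q ≤ G)
    (P : Finset ℝ) (haP : a ∈ P) (hbP : b ∈ P) (B : ℕ → ℝ)
    (hB : ∀ r : ℕ, ∀ x y z, a ≤ x → x < y → y < z → z ≤ b → (∀ w ∈ P, w ≤ x ∨ z ≤ w) →
      |f z - f y| ^ p ≤ 2 * F / (r + 1) → |g y - g x| ^ q ≤ 2 * G / (r + 1) →
      |f z - f y| * |g y - g x| ≤ B r) :
    ∀ n : ℕ, ∀ Q : Finset ℝ, (∀ x ∈ Q, x ∈ Set.Icc a b) → P ⊆ Q → (Q \ P).card = n →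
      |RR f g Q - RR f g P| ≤ ∑ r ∈ Finset.range n, B r := by
  intro n
  induction n with
  | zero =>
    intro Q _ hPQ hc
    rw [Finset.card_eq_zero, Finset.sdiff_eq_empty_iff_subset] at hc
    rw [Finset.Subset.antisymm hc hPQ]; simp
  | succ n ih =>
    intro Q hQ hPQ hc
    have hK : ∀ y ∈ Q \ P, y ∈ Q ∧ y ∉ P ∧ a < y ∧ y < b := by
      intro y hy
      rw [Finset.mem_sdiff] at hy
      refine ⟨hy.1, hy.2, lt_of_le_of_ne (hQ y hy.1).1 ?_, lt_of_le_of_ne (hQ y hy.1).2 ?_⟩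
      · rintro rfl; exact hy.2 haP
      · rintro rfl; exact hy.2 hbP
    have hs : ∀ y, ∃ z, y ∈ Q \ P → z ∈ Q ∧ y < z ∧ ∀ w ∈ Q, y < w → z ≤ w := by
      intro y
      by_cases hy : y ∈ Q \ P
      · have hne : (Q.filter (y < ·)).Nonempty := ⟨b, Finset.mem_filter.2 ⟨hPQ hbP, (hK y hy).2.2.2⟩⟩
        refine ⟨(Q.filter (y < ·)).min' hne, fun _ => ?_⟩
        have h1 := Finset.min'_mem _ hne
        rw [Finset.mem_filter] at h1
        exact ⟨h1.1, h1.2, fun w hw hyw => Finset.min'_le _ _ (Finset.mem_filter.2 ⟨hw, hyw⟩)⟩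
      · exact ⟨0, fun h => absurd h hy⟩
    choose sc hsc using hs
    have hps : ∀ y ∈ Q \ P, prd Q (sc y) = y := by
      intro y hy
      obtain ⟨h1, h2, h3⟩ := hsc y hy
      apply prd_eq (hK y hy).1 h2
      intro w hw hws
      by_contra hcon
      exact absurd (h3 w hw (not_le.1 hcon)) (not_le.2 hws)
    have hf1 : ∑ y ∈ Q \ P, |f (sc y) - f y| ^ p ≤ F := by
      calc ∑ y ∈ Q \ P, |f (sc y) - f y| ^ p
          = ∑ y ∈ Q \ P, |f (sc y) - f (prd Q (sc y))| ^ p :=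
            Finset.sum_congr rfl (fun y hy => by rw [hps y hy])
        _ = ∑ z ∈ (Q \ P).image sc, |f z - f (prd Q z)| ^ p := by
            rw [Finset.sum_image]
            intro x hx y hy hxy
            rw [← hps x hx, ← hps y hy, hxy]
        _ ≤ ∑ z ∈ Q, |f z - f (prd Q z)| ^ p := by
            apply Finset.sum_le_sum_of_subset_of_nonneg
            · intro z hz
              rw [Finset.mem_image] at hz
              obtain ⟨y, hy, rfl⟩ := hz
              exact (hsc y hy).1
            · intros; positivity
        _ ≤ F := hF Q hQ
    have hg1 : ∑ y ∈ Q \ P, |g y - g (prd Q y)| ^ q ≤ G :=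
      (Finset.sum_le_sum_of_subset_of_nonneg Finset.sdiff_subset (by intros; positivity)).trans (hG Q hQ)
    have hne : (Q \ P).Nonempty := by rw [← Finset.card_pos]; omega
    have hn0 : (0 : ℝ) < (n : ℝ) + 1 := by positivity
    obtain ⟨y, hy, hle⟩ : ∃ y ∈ Q \ P, |f (sc y) - f y| ^ p / F + |g y - g (prd Q y)| ^ q / G ≤ 2 / ((n : ℝ) + 1) := by
      apply Finset.exists_le_of_sum_le hne
      rw [Finset.sum_const, hc, Finset.sum_add_distrib, ← Finset.sum_div, ← Finset.sum_div]
      have e1 : (∑ y ∈ Q \ P, |f (sc y) - f y| ^ p) / F ≤ 1 := (div_le_one hF0).2 hf1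
      have e2 : (∑ y ∈ Q \ P, |g y - g (prd Q y)| ^ q) / G ≤ 1 := (div_le_one hG0).2 hg1
      have : (n + 1) • (2 / ((n : ℝ) + 1)) = 2 := by
        rw [nsmul_eq_mul]; push_cast; field_simp
      rw [this]; linarith
    obtain ⟨hyQ, hyP, hay, hyb⟩ := hK y hy
    obtain ⟨s1, s2, s3⟩ := hsc y hy
    obtain ⟨k1, k2, k3⟩ := prd_spec (hPQ haP) hay
    have hr := RR_erase f g Q k1 hyQ s1 k2 s2 k3 s3
    have hih := ih (Q.erase y) (fun x hx => hQ x (Finset.mem_of_mem_erase hx))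
      (fun w hw => Finset.mem_erase.2 ⟨fun h => hyP (h ▸ hw), hPQ hw⟩)
      (by rw [Finset.erase_sdiff_comm, Finset.card_erase_of_mem hy, hc]; rfl)
    have p1 : 0 ≤ |f (sc y) - f y| ^ p / F := by positivity
    have p2 : 0 ≤ |g y - g (prd Q y)| ^ q / G := by positivity
    have hb := hB n (prd Q y) y (sc y) (hQ _ k1).1 k2 s2 (hQ _ s1).2
      (by
        intro w hw
        have hwy : w ≠ y := fun h => hyP (h ▸ hw)
        rcases lt_or_gt_of_ne hwy with h | h
        · exact Or.inl (k3 w (hPQ hw) h)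
        · exact Or.inr (s3 w (hPQ hw) h))
      (by
        have : |f (sc y) - f y| ^ p / F ≤ 2 / ((n : ℝ) + 1) := by linarith
        rw [div_le_iff₀ hF0] at this
        calc _ ≤ _ := this
          _ = _ := by ring)
      (by
        have : |g y - g (prd Q y)| ^ q / G ≤ 2 / ((n : ℝ) + 1) := by linarith
        rw [div_le_iff₀ hG0] at this
        calc _ ≤ _ := this
          _ = _ := by ring)
    rw [Finset.sum_range_succ]
    calc |RR f g Q - RR f g P| = |(RR f g (Q.erase y) - RR f g P) + (RR f g Q - RR f g (Q.erase y))| := by ring_nf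
      _ ≤ |RR f g (Q.erase y) - RR f g P| + |RR f g Q - RR f g (Q.erase y)| := abs_add_le _ _
      _ ≤ _ := by
        rw [hr, abs_mul, abs_sub_comm (f y)]
        linarith

lemma sum1 {c : ℝ} (hc : 0 < c) (hc1 : c ≤ 1) (m : ℕ) :
    ∑ r ∈ Finset.range m, ((r : ℝ) + 1) ^ (c - 1) ≤ (m : ℝ) ^ c / c := by
  induction m with
  | zero => simp; positivity
  | succ m ih =>
    rw [Finset.sum_range_succ]
    push_cast
    have hk : (0 : ℝ) < (m : ℝ) + 1 := by positivity
    have h1 : -1 ≤ -(1 / ((m : ℝ) + 1)) := by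
      rw [neg_le_neg_iff, div_le_one hk]; linarith [(Nat.cast_nonneg m : (0 : ℝ) ≤ m)]
    have h2 := rpow_one_add_le_one_add_mul_self h1 hc.le hc1
    have h3 : (m : ℝ) ^ c = ((m : ℝ) + 1) ^ c * (1 + -(1 / ((m : ℝ) + 1))) ^ c := by
      rw [← Real.mul_rpow hk.le (by linarith)]
      congr 1; field_simp; ring
    have h4 : ((m : ℝ) + 1) ^ (c - 1) = ((m : ℝ) + 1) ^ c / ((m : ℝ) + 1) := Real.rpow_sub_one hk.ne' c
    have h5 : (m : ℝ) ^ c ≤ ((m : ℝ) + 1) ^ c - c * ((m : ℝ) + 1) ^ (c - 1) := by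
      rw [h3, h4]
      calc _ ≤ ((m : ℝ) + 1) ^ c * (1 + c * -(1 / ((m : ℝ) + 1))) :=
            mul_le_mul_of_nonneg_left h2 (by positivity)
        _ = _ := by ring
    rw [le_div_iff₀ hc] at ih ⊢
    nlinarith

lemma sum2 {d : ℝ} (hd : 0 < d) (m n : ℕ) (hm : 1 ≤ m) (hmn : m ≤ n) :
    ∑ r ∈ Finset.Ico m n, ((r : ℝ) + 1) ^ (-1 - d) ≤ ((m : ℝ) ^ (-d) - (n : ℝ) ^ (-d)) / d := by
  induction n, hmn using Nat.le_induction with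
  | base => simp
  | succ n hmn ih =>
    rw [Finset.sum_Ico_succ_top hmn]
    push_cast
    have hn : (0 : ℝ) < n := by exact_mod_cast (by omega : 0 < n)
    have hk : (0 : ℝ) < (n : ℝ) + 1 := by positivity
    have hu : (0 : ℝ) < (n : ℝ) / (n + 1) := by positivity
    have h2 : 1 + d / ((n : ℝ) + 1) ≤ ((n : ℝ) / (n + 1)) ^ (-d) := by
      rw [Real.rpow_def_of_pos hu]
      have e1 := Real.add_one_le_exp (Real.log ((n : ℝ) / (n + 1)) * -d)
      have e2 := Real.log_le_sub_one_of_pos hu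
      have e3 : (n : ℝ) / (n + 1) - 1 = -(1 / ((n : ℝ) + 1)) := by field_simp; ring
      rw [e3] at e2
      have e4 : d / ((n : ℝ) + 1) ≤ Real.log ((n : ℝ) / (n + 1)) * -d := by
        have : d / ((n : ℝ) + 1) = -(1 / ((n : ℝ) + 1)) * -d := by ring
        rw [this]; nlinarith
      linarith
    have h3 : (n : ℝ) ^ (-d) = ((n : ℝ) + 1) ^ (-d) * ((n : ℝ) / (n + 1)) ^ (-d) := by
      rw [← Real.mul_rpow hk.le hu.le]
      congr 1; field_simp
    have h4 : ((n : ℝ) + 1) ^ (-1 - d) = ((n : ℝ) + 1) ^ (-d) / ((n : ℝ) + 1) := by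
      rw [← Real.rpow_sub_one hk.ne']; congr 1; ring
    have h5 : ((n : ℝ) + 1) ^ (-d) + d * ((n : ℝ) + 1) ^ (-1 - d) ≤ (n : ℝ) ^ (-d) := by
      rw [h3, h4]
      calc _ = ((n : ℝ) + 1) ^ (-d) * (1 + d / ((n : ℝ) + 1)) := by ring
        _ ≤ _ := mul_le_mul_of_nonneg_left h2 (by positivity)
    rw [le_div_iff₀ hd] at ih ⊢
    nlinarith

lemma gam_pos {p q : ℝ} (hp : 1 < p) (hpq : 1 / p + 1 / q > 1) : 0 < 1 + p / q - p := by
  have : p * 1 < p * (1 / p + 1 / q) := mul_lt_mul_of_pos_left hpq (by linarith)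
  have e : p * (1 / p + 1 / q) = 1 + p / q := by field_simp
  linarith

lemma series {p q : ℝ} (hp : 1 < p) (hq : 1 < q) (hpq : 1 / p + 1 / q > 1) :
    ∃ C : ℝ, 0 < C ∧ ∀ F G ω : ℝ, 0 < F → 0 < G → 0 < ω → ω ^ p ≤ F → ∀ n : ℕ,
      ∑ r ∈ Finset.range n, min ω ((2 * F / ((r : ℝ) + 1)) ^ (1 / p)) * (2 * G / ((r : ℝ) + 1)) ^ (1 / q)
        ≤ C * F ^ (1 - 1 / q) * ω ^ (1 + p / q - p) * G ^ (1 / q) := by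
  obtain ⟨c, hc⟩ : ∃ c, c = 1 - 1 / q := ⟨_, rfl⟩
  obtain ⟨d, hd⟩ : ∃ d, d = 1 / p + 1 / q - 1 := ⟨_, rfl⟩
  have hq0 : 0 < 1 / q := by positivity
  have hq1 : 1 / q < 1 := by rw [div_lt_one (by linarith)]; exact hq
  have hc0 : 0 < c := by linarith
  have hc1 : c ≤ 1 := by linarith
  have hd0 : 0 < d := by linarith
  refine ⟨2 ^ (1 / q) / c + 2 ^ (1 / p) * 2 ^ (1 / q) * 2 ^ d / d, by positivity, ?_⟩
  intro F G ω hF hG hω hωF n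
  have hωp : 0 < ω ^ p := by positivity
  obtain ⟨N, hN⟩ : ∃ N, N = F / ω ^ p := ⟨_, rfl⟩
  have hN1 : 1 ≤ N := by rw [hN, one_le_div hωp]; exact hωF
  have hN0 : 0 < N := by linarith
  obtain ⟨m, hm⟩ : ∃ m, m = ⌊N⌋₊ := ⟨_, rfl⟩
  have hm1 : 1 ≤ m := by rw [hm]; exact (Nat.one_le_floor_iff N).2 hN1
  have hmN : (m : ℝ) ≤ N := by rw [hm]; exact Nat.floor_le hN0.le
  have hNm : N / 2 ≤ m := by
    have h1 := Nat.lt_floor_add_one N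
    rw [← hm] at h1
    have : (1 : ℝ) ≤ m := by exact_mod_cast hm1
    linarith
  have hm0 : (0 : ℝ) < m := by exact_mod_cast hm1
  have t1 : ∀ r : ℕ, min ω ((2 * F / ((r : ℝ) + 1)) ^ (1 / p)) * (2 * G / ((r : ℝ) + 1)) ^ (1 / q)
      ≤ ω * (2 * G) ^ (1 / q) * ((r : ℝ) + 1) ^ (c - 1) := by
    intro r
    have hk : (0 : ℝ) < (r : ℝ) + 1 := by positivity
    have e : (2 * G / ((r : ℝ) + 1)) ^ (1 / q) = (2 * G) ^ (1 / q) * ((r : ℝ) + 1) ^ (c - 1) := by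
      rw [Real.div_rpow (by positivity) hk.le, div_eq_mul_inv, ← Real.rpow_neg hk.le]
      congr 2; rw [hc]; ring
    rw [e, mul_assoc]
    exact mul_le_mul_of_nonneg_right (min_le_left _ _) (by positivity)
  have t2 : ∀ r : ℕ, min ω ((2 * F / ((r : ℝ) + 1)) ^ (1 / p)) * (2 * G / ((r : ℝ) + 1)) ^ (1 / q)
      ≤ (2 * F) ^ (1 / p) * (2 * G) ^ (1 / q) * ((r : ℝ) + 1) ^ (-1 - d) := by
    intro r
    have hk : (0 : ℝ) < (r : ℝ) + 1 := by positivity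
    have e : (2 * F / ((r : ℝ) + 1)) ^ (1 / p) * (2 * G / ((r : ℝ) + 1)) ^ (1 / q) = (2 * F) ^ (1 / p) * (2 * G) ^ (1 / q) * ((r : ℝ) + 1) ^ (-1 - d) := by
      rw [Real.div_rpow (by positivity) hk.le, Real.div_rpow (by positivity) hk.le, div_mul_div_comm, ← Real.rpow_add hk, div_eq_mul_inv, ← Real.rpow_neg hk.le]
      congr 2; rw [hd]; ring
    rw [← e]
    exact mul_le_mul_of_nonneg_right (min_le_right _ _) (by positivity)
  have hnn : ∀ r : ℕ, 0 ≤ min ω ((2 * F / ((r : ℝ) + 1)) ^ (1 / p)) * (2 * G / ((r : ℝ) + 1)) ^ (1 / q) := by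
    intro r
    have : 0 ≤ min ω ((2 * F / ((r : ℝ) + 1)) ^ (1 / p)) := le_min hω.le (by positivity)
    positivity
  have a1 : ω * N ^ c = F ^ c * ω ^ (1 + p / q - p) := by
    rw [hN, Real.div_rpow hF.le hωp.le, ← Real.rpow_mul hω.le]
    have : 1 + p / q - p = 1 - p * c := by rw [hc]; field_simp; ring
    rw [this, Real.rpow_sub hω, Real.rpow_one]; ring
  have a2 : F ^ (1 / p) * N ^ (-d) = F ^ c * ω ^ (1 + p / q - p) := by
    rw [hN, Real.div_rpow hF.le hωp.le, ← Real.rpow_mul hω.le]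
    have : 1 + p / q - p = -(p * -d) := by rw [hd]; field_simp
    rw [this, Real.rpow_neg hω.le, ← mul_div_assoc, ← Real.rpow_add hF, div_eq_mul_inv]
    congr 2; rw [hc, hd]; ring
  calc _ ≤ ∑ r ∈ Finset.range (max m n), min ω ((2 * F / ((r : ℝ) + 1)) ^ (1 / p)) * (2 * G / ((r : ℝ) + 1)) ^ (1 / q) :=
        Finset.sum_le_sum_of_subset_of_nonneg (Finset.range_mono (le_max_right _ _)) (fun r _ _ => hnn r)
    _ = ∑ r ∈ Finset.range m, min ω ((2 * F / ((r : ℝ) + 1)) ^ (1 / p)) * (2 * G / ((r : ℝ) + 1)) ^ (1 / q)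
        + ∑ r ∈ Finset.Ico m (max m n), min ω ((2 * F / ((r : ℝ) + 1)) ^ (1 / p)) * (2 * G / ((r : ℝ) + 1)) ^ (1 / q) :=
        (Finset.sum_range_add_sum_Ico _ (le_max_left _ _)).symm
    _ ≤ ∑ r ∈ Finset.range m, ω * (2 * G) ^ (1 / q) * ((r : ℝ) + 1) ^ (c - 1)
        + ∑ r ∈ Finset.Ico m (max m n), (2 * F) ^ (1 / p) * (2 * G) ^ (1 / q) * ((r : ℝ) + 1) ^ (-1 - d) :=
        add_le_add (Finset.sum_le_sum fun r _ => t1 r) (Finset.sum_le_sum fun r _ => t2 r)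
    _ ≤ ω * (2 * G) ^ (1 / q) * (N ^ c / c)
        + (2 * F) ^ (1 / p) * (2 * G) ^ (1 / q) * (2 ^ d * N ^ (-d) / d) := by
        rw [← Finset.mul_sum, ← Finset.mul_sum]
        have b1 : ∑ r ∈ Finset.range m, ((r : ℝ) + 1) ^ (c - 1) ≤ N ^ c / c :=
          (sum1 hc0 hc1 m).trans (by gcongr)
        have b2 : ∑ r ∈ Finset.Ico m (max m n), ((r : ℝ) + 1) ^ (-1 - d) ≤ 2 ^ d * N ^ (-d) / d := by
          refine (sum2 hd0 m _ hm1 (le_max_left _ _)).trans ?_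
          apply div_le_div_of_nonneg_right _ hd0.le
          have g1 : (m : ℝ) ^ (-d) ≤ (N / 2) ^ (-d) :=
            Real.rpow_le_rpow_of_nonpos (by positivity) hNm (by linarith)
          have g2 : (N / 2) ^ (-d) = 2 ^ d * N ^ (-d) := by
            rw [Real.div_rpow hN0.le (by norm_num), Real.rpow_neg (by norm_num : (0:ℝ) ≤ 2)]
            field_simp
          have g3 : (0 : ℝ) ≤ ((max m n : ℕ) : ℝ) ^ (-d) := by positivity
          linarith
        gcongr
    _ = _ := by
        rw [Real.mul_rpow (by norm_num) hG.le, Real.mul_rpow (by norm_num) hF.le]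
        calc _ = 2 ^ (1 / q) / c * G ^ (1 / q) * (ω * N ^ c) + 2 ^ (1 / p) * 2 ^ (1 / q) * 2 ^ d / d * G ^ (1 / q) * (F ^ (1 / p) * N ^ (-d)) := by ring
          _ = _ := by rw [a1, a2, hc]; ring

lemma le_root {x y p : ℝ} (hp : 1 < p) (hx : 0 ≤ x) (h : x ^ p ≤ y) : x ≤ y ^ (1 / p) := by
  have := Real.rpow_le_rpow (by positivity) h (by positivity : 0 ≤ 1 / p)
  rwa [← Real.rpow_mul hx, mul_one_div_cancel (by linarith), Real.rpow_one] at this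

def OscLe (f : ℝ → ℝ) (ε x z : ℝ) : Prop := ∀ s ∈ Set.Icc x z, ∀ t ∈ Set.Icc x z, |f s - f t| ≤ ε

lemma cwa_ball {f : ℝ → ℝ} {S : Set ℝ} {x ε : ℝ} (hε : 0 < ε) (h : ContinuousWithinAt f S x) :
    ∃ r > 0, ∀ s ∈ S, ∀ t ∈ S, dist s x < r → dist t x < r → |f s - f t| ≤ ε := by
  obtain ⟨r, hr, H⟩ := Metric.continuousWithinAt_iff.1 h (ε / 2) (by linarith)
  refine ⟨r, hr, fun s hs t ht hsx htx => ?_⟩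
  have h1 := H hs hsx
  have h2 := H ht htx
  rw [← Real.dist_eq]
  have := dist_triangle_right (f s) (f t) (f x)
  linarith

lemma small_osc {f g : ℝ → ℝ} {a b : ℝ} (h : NoCommonDiscont f g a b) {ε : ℝ} (hε : 0 < ε) :
    ∃ δ > 0, ∀ x z, a ≤ x → x < z → z ≤ b → z - x < δ → OscLe f ε x z ∨ OscLe g ε x z := by
  have h1 : ∀ x : Set.Icc a b, ∃ r > 0,
      (∀ s ∈ Set.Icc a b, ∀ t ∈ Set.Icc a b, dist s x.1 < r → dist t x.1 < r → |f s - f t| ≤ ε) ∨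
      (∀ s ∈ Set.Icc a b, ∀ t ∈ Set.Icc a b, dist s x.1 < r → dist t x.1 < r → |g s - g t| ≤ ε) := by
    intro x
    rcases h x.1 x.2 with hc | hc
    · obtain ⟨r, hr, H⟩ := cwa_ball hε hc
      exact ⟨r, hr, Or.inl H⟩
    · obtain ⟨r, hr, H⟩ := cwa_ball hε hc
      exact ⟨r, hr, Or.inr H⟩
  choose r hr H using h1
  obtain ⟨δ, hδ, hL⟩ := lebesgue_number_lemma_of_metric (s := Set.Icc a b)
    (c := fun x : Set.Icc a b => Metric.ball x.1 (r x)) isCompact_Icc (fun _ => Metric.isOpen_ball)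
    (fun x hx => Set.mem_iUnion.2 ⟨⟨x, hx⟩, Metric.mem_ball_self (hr _)⟩)
  refine ⟨δ, hδ, fun x z hax hxz hzb hlt => ?_⟩
  obtain ⟨y, hy⟩ := hL x ⟨hax, by linarith⟩
  have hin : ∀ s ∈ Set.Icc x z, s ∈ Set.Icc a b ∧ dist s y.1 < r y := by
    intro s hs
    refine ⟨⟨hax.trans hs.1, hs.2.trans hzb⟩, hy ?_⟩
    rw [Metric.mem_ball, Real.dist_eq, abs_of_nonneg (by linarith [hs.1])]
    linarith [hs.2]
  rcases H y with h2 | h2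
  · left
    intro s hs t ht
    exact h2 s (hin s hs).1 t (hin t ht).1 (hin s hs).2 (hin t ht).2
  · right
    intro s hs t ht
    exact h2 s (hin s hs).1 t (hin t ht).1 (hin s hs).2 (hin t ht).2

lemma small_eps {K α β η : ℝ} (hα : 0 < α) (hβ : 0 < β) (hη : 0 < η) :
    ∃ ε : ℝ, 0 < ε ∧ ε ≤ 1 ∧ K * (ε ^ α + ε ^ β) < η := by
  have h1 : Tendsto (fun x : ℝ => K * (x ^ α + x ^ β)) (nhdsWithin 0 (Set.Ioi 0)) (nhds 0) := by
    have : ContinuousAt (fun x : ℝ => K * (x ^ α + x ^ β)) 0 := by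
      apply ContinuousAt.mul continuousAt_const
      exact (Real.continuousAt_rpow_const _ _ (Or.inr hα.le)).add (Real.continuousAt_rpow_const _ _ (Or.inr hβ.le))
    have h2 := this.tendsto
    simp only [Real.zero_rpow hα.ne', Real.zero_rpow hβ.ne', add_zero, mul_zero] at h2
    exact h2.mono_left nhdsWithin_le_nhds
  have h2 := h1.eventually (gt_mem_nhds hη)
  have h3 : ∀ᶠ x : ℝ in nhdsWithin 0 (Set.Ioi 0), x ∈ Set.Ioc (0:ℝ) 1 :=
    Ioc_mem_nhdsGT (by norm_num)
  obtain ⟨ε, h4, h5⟩ := (h2.and h3).exists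
  exact ⟨ε, h5.1, h5.2, h4⟩

lemma mul_small {p q A B ε : ℝ} (hp : 1 < p) (hq : 1 < q) (hpq : 1 / p + 1 / q > 1)
    (hA : 0 ≤ A) (hB : 0 ≤ B) (hε : 0 < ε) (h : A ≤ ε) :
    A * B ≤ ε ^ (1 + p / q - p) * (A ^ p + B ^ q) := by
  have hγ := gam_pos hp hpq
  rcases hA.eq_or_lt with rfl | hA0
  · rw [zero_mul]; positivity
  have hq1 : 1 / q < 1 := by rw [div_lt_one (by linarith)]; exact hq
  have e1 : A = A ^ (1 + p / q - p) * (A ^ p) ^ (1 - 1 / q) := by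
    rw [← Real.rpow_mul hA, ← Real.rpow_add hA0]
    nth_rewrite 1 [← Real.rpow_one A]
    congr 1; ring
  have e2 : B = (B ^ q) ^ (1 / q) := by
    rw [← Real.rpow_mul hB, mul_one_div_cancel (by linarith), Real.rpow_one]
  have hAp : 0 ≤ A ^ p := by positivity
  have hBq : 0 ≤ B ^ q := by positivity
  have e3 : (A ^ p) ^ (1 - 1 / q) * (B ^ q) ^ (1 / q) ≤ A ^ p + B ^ q := by
    refine (Real.geom_mean_le_arith_mean2_weighted (by linarith) (by positivity) hAp hBq (by ring)).trans ?_
    have : 0 < 1 / q := by positivity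
    nlinarith
  calc A * B = A ^ (1 + p / q - p) * ((A ^ p) ^ (1 - 1 / q) * (B ^ q) ^ (1 / q)) := by
        nth_rewrite 1 [e1]; nth_rewrite 1 [e2]; ring
    _ ≤ ε ^ (1 + p / q - p) * (A ^ p + B ^ q) := by gcongr

lemma tag {f g : ℝ → ℝ} {p q a b F G ε : ℝ} (hp : 1 < p) (hq : 1 < q) (hpq : 1 / p + 1 / q > 1)
    (hF : ∀ Q : Finset ℝ, (∀ x ∈ Q, x ∈ Set.Icc a b) → ∑ y ∈ Q, |f y - f (prd Q y)| ^ p ≤ F)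
    (hG : ∀ Q : Finset ℝ, (∀ x ∈ Q, x ∈ Set.Icc a b) → ∑ y ∈ Q, |g y - g (prd Q y)| ^ q ≤ G)
    (hε : 0 < ε) {n : ℕ} (t : Fin (n + 1) → ℝ) (ξ : Fin n → ℝ) (ht : StrictMono t)
    (hI : ∀ i, t i ∈ Set.Icc a b)
    (hξ : ∀ i : Fin n, t i.castSucc ≤ ξ i ∧ ξ i ≤ t i.succ)
    (hg : ∀ i : Fin n, OscLe f ε (t i.castSucc) (t i.succ) ∨ OscLe g ε (t i.castSucc) (t i.succ)) :
    |∑ i : Fin n, f (ξ i) * (g (t i.succ) - g (t i.castSucc)) - RR f g (Finset.univ.image t)| ≤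
      (F + G) * (ε ^ (1 + p / q - p) + ε ^ (1 + q / p - q)) := by
  have hpq' : 1 / q + 1 / p > 1 := by linarith
  have hRR : RR f g (Finset.univ.image t) = ∑ i : Fin n, f (t i.succ) * (g (t i.succ) - g (t i.castSucc)) :=
    sum_prd t ht (fun x y => f y * (g y - g x)) (by intro y; simp)
  have hGs : ∑ i : Fin n, |g (t i.succ) - g (t i.castSucc)| ^ q ≤ G := by
    rw [← sum_prd t ht (fun x y => |g y - g x| ^ q) (by intro y; simp only [sub_self, abs_zero]; exact Real.zero_rpow (by linarith))]
    apply hG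
    intro x hx
    simp only [Finset.mem_image, Finset.mem_univ, true_and] at hx
    obtain ⟨j, rfl⟩ := hx
    exact hI j
  have hFs : ∑ i : Fin n, |f (ξ i) - f (t i.succ)| ^ p ≤ F := by
    obtain ⟨Q, hQ⟩ : ∃ Q, Q = Finset.univ.image t ∪ Finset.univ.image ξ := ⟨_, rfl⟩
    have hQm : ∀ x ∈ Q, (∃ j, t j = x) ∨ (∃ j, ξ j = x) := by
      intro x hx
      rw [hQ] at hx
      simpa using hx
    have hQI : ∀ x ∈ Q, x ∈ Set.Icc a b := by
      intro x hx
      rcases hQm x hx with ⟨j, rfl⟩ | ⟨j, rfl⟩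
      · exact hI j
      · exact ⟨(hI _).1.trans (hξ j).1, (hξ j).2.trans (hI _).2⟩
    refine le_trans ?_ (hF Q hQI)
    calc ∑ i : Fin n, |f (ξ i) - f (t i.succ)| ^ p
        ≤ ∑ i : Fin n, |f (t i.succ) - f (prd Q (t i.succ))| ^ p := by
          apply Finset.sum_le_sum
          intro i _
          rcases (hξ i).2.eq_or_lt with h | h
          · rw [h, sub_self, abs_zero, Real.zero_rpow (by linarith)]; positivity
          · rw [prd_eq (x := ξ i) _ h, abs_sub_comm]
            · intro w hw hlt
              rcases hQm w hw with ⟨j, rfl⟩ | ⟨j, rfl⟩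
              · rw [ht.lt_iff_lt] at hlt
                exact (ht.monotone (Fin.le_castSucc_iff.2 hlt)).trans (hξ i).1
              · by_contra hc
                have h1 : i < j := by
                  by_contra hij
                  rcases (not_lt.1 hij).eq_or_lt with rfl | hji
                  · exact hc le_rfl
                  · have : t j.succ ≤ t i.castSucc := ht.monotone (by
                      rw [Fin.le_def]; simpa using hji)
                    exact hc (((hξ j).2.trans this).trans (hξ i).1)
                have : t i.succ ≤ t j.castSucc := ht.monotone (by
                  rw [Fin.le_def]; simpa using h1)
                exact absurd hlt (not_lt.2 (this.trans (hξ j).1))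
            · rw [hQ]; simp
      _ = ∑ y ∈ Finset.univ.image (fun i : Fin n => t i.succ), |f y - f (prd Q y)| ^ p := by
          rw [Finset.sum_image]
          intro x _ y _ hxy
          exact Fin.succ_injective _ (ht.injective hxy)
      _ ≤ ∑ y ∈ Q, |f y - f (prd Q y)| ^ p := by
          apply Finset.sum_le_sum_of_subset_of_nonneg
          · intro y hy
            rw [hQ]
            simp only [Finset.mem_image, Finset.mem_univ, true_and] at hy
            obtain ⟨j, rfl⟩ := hy
            simp
          · intros; positivity
  rw [hRR, ← Finset.sum_sub_distrib]
  refine (Finset.abs_sum_le_sum_abs _ _).trans ?_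
  have hterm : ∀ i : Fin n, |f (ξ i) * (g (t i.succ) - g (t i.castSucc)) - f (t i.succ) * (g (t i.succ) - g (t i.castSucc))|
      ≤ (|f (ξ i) - f (t i.succ)| ^ p + |g (t i.succ) - g (t i.castSucc)| ^ q) * (ε ^ (1 + p / q - p) + ε ^ (1 + q / p - q)) := by
    intro i
    rw [← sub_mul, abs_mul]
    have hlt := (ht i.castSucc_lt_succ).le
    have w1 : 0 ≤ |f (ξ i) - f (t i.succ)| ^ p := by positivity
    have w2 : 0 ≤ |g (t i.succ) - g (t i.castSucc)| ^ q := by positivity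
    have w3 : 0 ≤ ε ^ (1 + p / q - p) := by positivity
    have w4 : 0 ≤ ε ^ (1 + q / p - q) := by positivity
    rcases hg i with h | h
    · have := mul_small hp hq hpq (abs_nonneg _) (abs_nonneg (g (t i.succ) - g (t i.castSucc))) hε
        (h (ξ i) (hξ i) (t i.succ) ⟨hlt, le_rfl⟩)
      nlinarith
    · have := mul_small hq hp hpq' (abs_nonneg _) (abs_nonneg (f (ξ i) - f (t i.succ))) hε
        (h (t i.succ) ⟨hlt, le_rfl⟩ (t i.castSucc) ⟨le_rfl, hlt⟩)
      nlinarith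
  refine (Finset.sum_le_sum fun i _ => hterm i).trans ?_
  rw [← Finset.sum_mul, Finset.sum_add_distrib]
  gcongr

lemma refine_est {f g : ℝ → ℝ} {p q a b F G : ℝ} (hp : 1 < p) (hq : 1 < q) (hpq : 1 / p + 1 / q > 1)
    (hF1 : 1 ≤ F) (hG1 : 1 ≤ G)
    (hF : ∀ Q : Finset ℝ, (∀ x ∈ Q, x ∈ Set.Icc a b) → ∑ y ∈ Q, |f y - f (prd Q y)| ^ p ≤ F)
    (hG : ∀ Q : Finset ℝ, (∀ x ∈ Q, x ∈ Set.Icc a b) → ∑ y ∈ Q, |g y - g (prd Q y)| ^ q ≤ G) :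
    ∃ K : ℝ, 0 ≤ K ∧ ∀ ε : ℝ, 0 < ε → ε ≤ 1 → ∀ P : Finset ℝ, a ∈ P → b ∈ P →
      (∀ x z, a ≤ x → x < z → z ≤ b → (∀ w ∈ P, w ≤ x ∨ z ≤ w) → OscLe f ε x z ∨ OscLe g ε x z) →
      ∀ Q : Finset ℝ, (∀ x ∈ Q, x ∈ Set.Icc a b) → P ⊆ Q →
      |RR f g Q - RR f g P| ≤ K * (ε ^ (1 + p / q - p) + ε ^ (1 + q / p - q)) := by
  have hpq' : 1 / q + 1 / p > 1 := by linarith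
  obtain ⟨C1, hC1, H1⟩ := series hp hq hpq
  obtain ⟨C2, hC2, H2⟩ := series hq hp hpq'
  have hF0 : 0 < F := by linarith
  have hG0 : 0 < G := by linarith
  refine ⟨C1 * F ^ (1 - 1 / q) * G ^ (1 / q) + C2 * G ^ (1 - 1 / p) * F ^ (1 / p), by positivity, ?_⟩
  intro ε hε hε1 P haP hbP hgood Q hQ hPQ
  have hrem := removal hF0 hG0 hF hG P haP hbP
    (fun r => min ε ((2 * F / ((r : ℝ) + 1)) ^ (1 / p)) * (2 * G / ((r : ℝ) + 1)) ^ (1 / q)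
      + min ε ((2 * G / ((r : ℝ) + 1)) ^ (1 / q)) * (2 * F / ((r : ℝ) + 1)) ^ (1 / p))
    (by
      intro r x y z hax hxy hyz hzb hP hf hg
      have hf' := le_root hp (abs_nonneg _) hf
      have hg' := le_root hq (abs_nonneg _) hg
      have n1 : 0 ≤ min ε ((2 * F / ((r : ℝ) + 1)) ^ (1 / p)) := le_min hε.le (by positivity)
      have n2 : 0 ≤ min ε ((2 * G / ((r : ℝ) + 1)) ^ (1 / q)) := le_min hε.le (by positivity)
      have n3 : 0 ≤ (2 * G / ((r : ℝ) + 1)) ^ (1 / q) := by positivity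
      have n4 : 0 ≤ (2 * F / ((r : ℝ) + 1)) ^ (1 / p) := by positivity
      rcases hgood x z hax (hxy.trans hyz) hzb hP with h | h
      · have h1 := h z ⟨(hxy.trans hyz).le, le_rfl⟩ y ⟨hxy.le, hyz.le⟩
        have := mul_le_mul (le_min h1 hf') hg' (abs_nonneg _) n1
        have := mul_nonneg n2 n4
        linarith
      · have h1 := h y ⟨hxy.le, hyz.le⟩ x ⟨le_rfl, (hxy.trans hyz).le⟩
        have := mul_le_mul (le_min h1 hg') hf' (abs_nonneg _) n2
        have := mul_nonneg n1 n3
        linarith)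
    _ Q hQ hPQ rfl
  refine hrem.trans ?_
  rw [Finset.sum_add_distrib]
  have s1 := H1 F G ε hF0 hG0 hε ((Real.rpow_le_one hε.le hε1 (by linarith)).trans hF1) (Q \ P).card
  have s2 := H2 G F ε hG0 hF0 hε ((Real.rpow_le_one hε.le hε1 (by linarith)).trans hG1) (Q \ P).card
  have w1 : 0 ≤ C1 * F ^ (1 - 1 / q) * G ^ (1 / q) * ε ^ (1 + q / p - q) := by positivity
  have w2 : 0 ≤ C2 * G ^ (1 - 1 / p) * F ^ (1 / p) * ε ^ (1 + p / q - p) := by positivity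
  nlinarith

lemma mesh_fin {a b δ : ℝ} {n : ℕ} (t : Fin (n + 1) → ℝ) (h0 : t 0 = a)
    (hl : t (Fin.last n) = b) (hd : ∀ i : Fin n, t i.succ - t i.castSucc < δ) {x z : ℝ}
    (hax : a ≤ x) (hxz : x < z) (hzb : z ≤ b)
    (hP : ∀ w ∈ Finset.univ.image t, w ≤ x ∨ z ≤ w) : z - x < δ := by
  by_contra hc
  have : ∀ i : Fin (n + 1), t i ≤ x := by
    intro i
    induction i using Fin.induction with
    | zero => rw [h0]; exact hax
    | succ i ih =>
      rcases hP (t i.succ) (by simp) with h | h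
      · exact h
      · have := hd i
        exact absurd this (by linarith)
  have := this (Fin.last n)
  linarith

noncomputable def unif (a b : ℝ) (n : ℕ) : Fin (n + 2) → ℝ := fun i => a + (b - a) * (i : ℝ) / ((n : ℝ) + 1)

lemma unif_zero (a b : ℝ) (n : ℕ) : unif a b n 0 = a := by simp [unif]

lemma unif_last (a b : ℝ) (n : ℕ) : unif a b n (Fin.last (n + 1)) = b := by
  have : (n : ℝ) + 1 ≠ 0 := by positivity
  simp [unif]
  field_simp
  ring

lemma unif_step (a b : ℝ) (n : ℕ) (i : Fin (n + 1)) :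
    unif a b n i.succ - unif a b n i.castSucc = (b - a) / ((n : ℝ) + 1) := by
  simp [unif]
  ring

lemma unif_mono {a b : ℝ} (hab : a < b) (n : ℕ) : StrictMono (unif a b n) := by
  apply Fin.strictMono_iff_lt_succ.2
  intro i
  have := unif_step a b n i
  have h2 : 0 < (b - a) / ((n : ℝ) + 1) := div_pos (by linarith) (by positivity)
  linarith

lemma unif_mem {a b : ℝ} (hab : a < b) (n : ℕ) (i) : unif a b n i ∈ Set.Icc a b := by
  have h := (unif_mono hab n).monotone
  refine ⟨?_, ?_⟩
  · have := h (Fin.zero_le i); rwa [unif_zero] at this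
  · have := h (Fin.le_last i); rwa [unif_last] at this

lemma rs_exists {f g : ℝ → ℝ} {p q a b : ℝ} (hp : 1 < p) (hq : 1 < q) (hpq : 1 / p + 1 / q > 1)
    (hab : a < b) (hno : NoCommonDiscont f g a b) (hf : pVar f p a b < ⊤) (hg : pVar g q a b < ⊤) :
    ∃ I : ℝ, RSIntegral f g a b I ∧
      Tendsto (fun n => RR f g (Finset.univ.image (unif a b n))) atTop (nhds I) := by
  have hpq' : 1 / q + 1 / p > 1 := by linarith
  obtain ⟨F, hFd⟩ : ∃ F, F = (pVar f p a b).toReal + 1 := ⟨_, rfl⟩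
  obtain ⟨G, hGd⟩ : ∃ G, G = (pVar g q a b).toReal + 1 := ⟨_, rfl⟩
  have hF1 : 1 ≤ F := by rw [hFd]; linarith [ENNReal.toReal_nonneg (a := pVar f p a b)]
  have hG1 : 1 ≤ G := by rw [hGd]; linarith [ENNReal.toReal_nonneg (a := pVar g q a b)]
  have hF : ∀ Q : Finset ℝ, (∀ x ∈ Q, x ∈ Set.Icc a b) → ∑ y ∈ Q, |f y - f (prd Q y)| ^ p ≤ F := by
    intro Q hQ; have := var_le hp hf Q hQ; linarith
  have hG : ∀ Q : Finset ℝ, (∀ x ∈ Q, x ∈ Set.Icc a b) → ∑ y ∈ Q, |g y - g (prd Q y)| ^ q ≤ G := by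
    intro Q hQ; have := var_le hq hg Q hQ; linarith
  obtain ⟨K, hK, HK⟩ := refine_est hp hq hpq hF1 hG1 hF hG
  have key : ∀ η > 0, ∃ δ > 0,
      (∀ (n : ℕ) (t : Fin (n + 1) → ℝ) (ξ : Fin n → ℝ) (m : ℕ),
        StrictMono t → t 0 = a → t (Fin.last n) = b →
        (∀ i : Fin n, t i.castSucc ≤ ξ i ∧ ξ i ≤ t i.succ) →
        (∀ i : Fin n, t i.succ - t i.castSucc < δ) → (b - a) / ((m : ℝ) + 1) < δ →
        |∑ i : Fin n, f (ξ i) * (g (t i.succ) - g (t i.castSucc)) - RR f g (Finset.univ.image (unif a b m))| ≤ η ∧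
        |RR f g (Finset.univ.image t) - RR f g (Finset.univ.image (unif a b m))| ≤ η) := by
    intro η hη
    obtain ⟨ε, hε, hε1, hKε⟩ := small_eps (K := 2 * K + (F + G)) (gam_pos hp hpq) (gam_pos hq hpq') hη
    obtain ⟨δ, hδ, hosc⟩ := small_osc hno hε
    refine ⟨δ, hδ, ?_⟩
    intro n t ξ m ht h0 hl hξ hd hm
    have htI : ∀ i, t i ∈ Set.Icc a b := by
      intro i
      refine ⟨?_, ?_⟩
      · rw [← h0]; exact ht.monotone (Fin.zero_le _)
      · rw [← hl]; exact ht.monotone (Fin.le_last _)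
    have hdu : ∀ i, unif a b m (Fin.succ i) - unif a b m (Fin.castSucc i) < δ := by
      intro i; rw [unif_step]; exact hm
    obtain ⟨P1, hP1⟩ : ∃ P, P = Finset.univ.image t := ⟨_, rfl⟩
    obtain ⟨P2, hP2⟩ : ∃ P, P = Finset.univ.image (unif a b m) := ⟨_, rfl⟩
    have hQ : ∀ x ∈ P1 ∪ P2, x ∈ Set.Icc a b := by
      intro x hx
      rw [Finset.mem_union, hP1, hP2] at hx
      simp only [Finset.mem_image, Finset.mem_univ, true_and] at hx
      rcases hx with ⟨j, rfl⟩ | ⟨j, rfl⟩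
      · exact htI j
      · exact unif_mem hab m j
    have r1 := HK ε hε hε1 P1 (by rw [hP1, ← h0]; simp) (by rw [hP1, ← hl]; simp)
      (by
        intro x z hax hxz hzb hw
        rw [hP1] at hw
        exact hosc x z hax hxz hzb (mesh_fin t h0 hl hd hax hxz hzb hw))
      (P1 ∪ P2) hQ Finset.subset_union_left
    have r2 := HK ε hε hε1 P2
      (by rw [hP2]; exact Finset.mem_image.2 ⟨0, Finset.mem_univ _, unif_zero a b m⟩)
      (by rw [hP2]; exact Finset.mem_image.2 ⟨_, Finset.mem_univ _, unif_last a b m⟩)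
      (by
        intro x z hax hxz hzb hw
        rw [hP2] at hw
        exact hosc x z hax hxz hzb (mesh_fin _ (unif_zero a b m) (unif_last a b m) hdu hax hxz hzb hw))
      (P1 ∪ P2) hQ Finset.subset_union_right
    have r3 := tag hp hq hpq hF hG hε t ξ ht htI hξ
      (fun i => hosc _ _ (htI _).1 (ht i.castSucc_lt_succ) (htI _).2 (hd i))
    rw [← hP1] at r3 ⊢
    rw [← hP2]
    have w1 : 0 ≤ ε ^ (1 + p / q - p) := by positivity
    have w2 : 0 ≤ ε ^ (1 + q / p - q) := by positivity
    have w3 : 0 ≤ (F + G) * (ε ^ (1 + p / q - p) + ε ^ (1 + q / p - q)) :=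
      mul_nonneg (by linarith) (by linarith)
    rw [abs_le] at r1 r2 r3
    constructor <;> rw [abs_le] <;> constructor <;> linarith
  have hlarge : ∀ δ > 0, ∃ N : ℕ, ∀ n ≥ N, (b - a) / ((n : ℝ) + 1) < δ := by
    intro δ hδ
    obtain ⟨N, hN⟩ := exists_nat_gt ((b - a) / δ)
    refine ⟨N, fun n hn => ?_⟩
    have : (N : ℝ) ≤ n := by exact_mod_cast hn
    rw [div_lt_iff₀ hδ] at hN
    rw [div_lt_iff₀ (by positivity)]
    nlinarith
  have hcau : CauchySeq (fun n => RR f g (Finset.univ.image (unif a b n))) := by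
    rw [Metric.cauchySeq_iff']
    intro η hη
    obtain ⟨δ, hδ, H⟩ := key (η / 2) (by linarith)
    obtain ⟨N, hN⟩ := hlarge δ hδ
    refine ⟨N, fun n hn => ?_⟩
    rw [Real.dist_eq]
    have := (H (n + 1) (unif a b n) (fun i => unif a b n i.succ) N (unif_mono hab n) (unif_zero a b n)
      (unif_last a b n) (fun i => ⟨(unif_mono hab n i.castSucc_lt_succ).le, le_rfl⟩)
      (fun i => by rw [unif_step]; exact hN n hn) (hN N le_rfl)).2
    linarith
  obtain ⟨I, hI⟩ := cauchySeq_tendsto_of_complete hcau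
  refine ⟨I, ?_, hI⟩
  intro η hη
  obtain ⟨δ, hδ, H⟩ := key (η / 2) (by linarith)
  obtain ⟨N, hN⟩ := hlarge δ hδ
  refine ⟨δ, hδ, fun n t ξ ht h0 hl hξ hd => ?_⟩
  have h1 : |∑ i : Fin n, f (ξ i) * (g (t i.succ) - g (t i.castSucc)) - I| ≤ η / 2 := by
    refine le_of_tendsto (tendsto_const_nhds.sub hI).abs ?_
    filter_upwards [eventually_ge_atTop N] with m hm
    exact (H n t ξ m ht h0 hl hξ hd (hN m hm)).1
  linarith

lemma rs_bound {p q : ℝ} (hp : 1 < p) (hq : 1 < q) (hpq : 1 / p + 1 / q > 1) :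
    ∃ C : ℝ, 0 < C ∧ ∀ (a b : ℝ), a < b → ∀ f g : ℝ → ℝ,
      pVar f p a b < ⊤ → pVar g q a b < ⊤ →
      ∀ Q : Finset ℝ, (∀ x ∈ Q, x ∈ Set.Icc a b) → a ∈ Q → b ∈ Q →
        |RR f g Q - f a * (g b - g a)| ≤
          C * pVarNorm f p a b ^ (p - p / q) *
            oscNorm f a b ^ (1 + p / q - p) * pVarNorm g q a b := by
  obtain ⟨C, hC, H⟩ := series hp hq hpq
  refine ⟨C + 1, by linarith, ?_⟩
  intro a b hab f g hf hg Q hQ haQ hbQ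
  unfold pVarNorm
  obtain ⟨F, hFd⟩ : ∃ F, F = (pVar f p a b).toReal := ⟨_, rfl⟩
  obtain ⟨G, hGd⟩ : ∃ G, G = (pVar g q a b).toReal := ⟨_, rfl⟩
  obtain ⟨ω, hω⟩ : ∃ ω, ω = oscNorm f a b := ⟨_, rfl⟩
  have hptf : ∀ x ∈ Set.Icc a b, ∀ y ∈ Set.Icc a b, |f y - f x| ≤ F ^ (1 / p) := by
    intro x hx y hy
    rw [hFd]
    exact le_root hp (abs_nonneg _) (pt_le hp hf hx hy)
  have hptg : ∀ x ∈ Set.Icc a b, ∀ y ∈ Set.Icc a b, |g y - g x| ≤ G ^ (1 / q) := by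
    intro x hx y hy
    rw [hGd]
    exact le_root hq (abs_nonneg _) (pt_le hq hg hx hy)
  have hFn : 0 ≤ F := by rw [hFd]; exact ENNReal.toReal_nonneg
  have hGn : 0 ≤ G := by rw [hGd]; exact ENNReal.toReal_nonneg
  have ha : a ∈ Set.Icc a b := ⟨le_rfl, hab.le⟩
  have hb : b ∈ Set.Icc a b := ⟨hab.le, le_rfl⟩
  have hbdd : BddAbove {x | ∃ s ∈ Set.Icc a b, ∃ t ∈ Set.Icc a b, s < t ∧ x = |f t - f s|} := by
    refine ⟨F ^ (1 / p), ?_⟩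
    rintro x ⟨s, hs, t, ht, _, rfl⟩
    exact hptf s hs t ht
  have hoscf : ∀ x ∈ Set.Icc a b, ∀ y ∈ Set.Icc a b, x < y → |f y - f x| ≤ ω := by
    intro x hx y hy hxy
    rw [hω]
    exact le_csSup hbdd ⟨x, hx, y, hy, hxy, rfl⟩
  have hωn : 0 ≤ ω := (abs_nonneg _).trans (hoscf a ha b hb hab)
  have hωF : ω ≤ F ^ (1 / p) := by
    rw [hω]
    refine csSup_le ⟨|f b - f a|, a, ha, b, hb, hab, rfl⟩ ?_
    rintro x ⟨s, hs, t, ht, _, rfl⟩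
    exact hptf s hs t ht
  rw [← hFd, ← hGd, ← hω]
  have hexp : (F ^ (1 / p)) ^ (p - p / q) = F ^ (1 - 1 / q) := by
    rw [← Real.rpow_mul hFn]; congr 1; field_simp
  have hR2 : RR f g {a, b} = f b * (g b - g a) := by
    unfold RR
    rw [Finset.sum_pair hab.ne, prd_self, prd_eq (x := a)]
    · ring
    · simp
    · exact hab
    · intro w hw hwb
      simp at hw
      rcases hw with rfl | rfl
      · exact le_rfl
      · exact absurd hwb (lt_irrefl _)
    · intro w hw
      simp at hw
      rcases hw with rfl | rfl
      · exact le_rfl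
      · exact hab.le
  have hPQ : ({a, b} : Finset ℝ) ⊆ Q := by
    intro x hx
    simp at hx
    rcases hx with rfl | rfl
    · exact haQ
    · exact hbQ
  have hsplit : |RR f g Q - f a * (g b - g a)| ≤ |RR f g Q - RR f g {a, b}| + |f b - f a| * |g b - g a| := by
    rw [← abs_mul, hR2]
    refine le_trans (le_of_eq ?_) (abs_add_le _ _)
    congr 1; ring
  refine hsplit.trans ?_
  by_cases hdeg : ω = 0 ∨ G = 0
  · have hz : ∀ x y z, a ≤ x → x < y → y ≤ z → z ≤ b → ∀ v ∈ Set.Icc a b, v < z →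
        |f z - f v| * |g y - g x| ≤ 0 := by
      intro x y z hax hxy hyz hzb v hv hvz
      rcases hdeg with h | h
      · have := hoscf v hv z ⟨by linarith, hzb⟩ hvz
        rw [h] at this
        rw [le_antisymm this (abs_nonneg _), zero_mul]
      · have := hptg x ⟨hax, by linarith⟩ y ⟨by linarith, by linarith⟩
        rw [h, Real.zero_rpow (by positivity)] at this
        rw [le_antisymm this (abs_nonneg _), mul_zero]
    have h1 := removal (f := f) (g := g) (p := p) (q := q) (a := a) (b := b) (F := F + 1) (G := G + 1) (by linarith) (by linarith)
      (fun Q hQ => by have := var_le hp hf Q hQ; linarith)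
      (fun Q hQ => by have := var_le hq hg Q hQ; linarith) {a, b} (by simp) (by simp) (fun _ => 0)
      (by
        intro r x y z hax hxy hyz hzb _ _ _
        exact hz x y z hax hxy hyz.le hzb y ⟨by linarith, by linarith⟩ hyz)
      _ Q hQ hPQ rfl
    have h2 := hz a b b le_rfl hab le_rfl le_rfl a ha hab
    rw [Finset.sum_const_zero] at h1
    have : 0 ≤ (C + 1) * (F ^ (1 / p)) ^ (p - p / q) * ω ^ (1 + p / q - p) * G ^ (1 / q) := by positivity
    linarith
  · push Not at hdeg
    have hω0 : 0 < ω := lt_of_le_of_ne hωn hdeg.1.symm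
    have hG0 : 0 < G := lt_of_le_of_ne hGn hdeg.2.symm
    have hωF' : ω ^ p ≤ F := by
      have := Real.rpow_le_rpow hωn hωF (by linarith : 0 ≤ p)
      rwa [← Real.rpow_mul hFn, one_div_mul_cancel (by linarith), Real.rpow_one] at this
    have hF0 : 0 < F := lt_of_lt_of_le (by positivity) hωF'
    have h1 := removal hF0 hG0
      (fun Q hQ => by rw [hFd]; exact var_le hp hf Q hQ)
      (fun Q hQ => by rw [hGd]; exact var_le hq hg Q hQ) {a, b} (by simp) (by simp)
      (fun r => min ω ((2 * F / ((r : ℝ) + 1)) ^ (1 / p)) * (2 * G / ((r : ℝ) + 1)) ^ (1 / q))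
      (by
        intro r x y z hax hxy hyz hzb _ h2 h3
        exact mul_le_mul (le_min (hoscf y ⟨by linarith, by linarith⟩ z ⟨by linarith, hzb⟩ hyz)
          (le_root hp (abs_nonneg _) h2)) (le_root hq (abs_nonneg _) h3) (abs_nonneg _)
          (le_min hωn (by positivity)))
      _ Q hQ hPQ rfl
    have h2 := H F G ω hF0 hG0 hω0 hωF' (Q \ {a, b}).card
    have h3 : |f b - f a| * |g b - g a| ≤ ω * G ^ (1 / q) :=
      mul_le_mul (hoscf a ha b hb hab) (hptg a ha b hb) (abs_nonneg _) hωn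
    have h4 : ω ≤ F ^ (1 - 1 / q) * ω ^ (1 + p / q - p) := by
      have hq1 : 1 / q < 1 := by rw [div_lt_one (by linarith)]; exact hq
      have e1 : ω = (ω ^ p) ^ (1 - 1 / q) * ω ^ (1 + p / q - p) := by
        rw [← Real.rpow_mul hωn, ← Real.rpow_add hω0]
        nth_rewrite 1 [← Real.rpow_one ω]
        congr 1; ring
      have e2 : (ω ^ p) ^ (1 - 1 / q) ≤ F ^ (1 - 1 / q) :=
        Real.rpow_le_rpow (by positivity) hωF' (by linarith)
      calc ω = (ω ^ p) ^ (1 - 1 / q) * ω ^ (1 + p / q - p) := e1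
        _ ≤ _ := mul_le_mul_of_nonneg_right e2 (by positivity)
    have h5 : ω * G ^ (1 / q) ≤ F ^ (1 - 1 / q) * ω ^ (1 + p / q - p) * G ^ (1 / q) :=
      mul_le_mul_of_nonneg_right h4 (by positivity)
    rw [hexp]
    have h6 := h1.trans h2
    linarith

/-- Improved Loéve–Young inequality. -/
theorem improved_loeve_young
    (p q : ℝ) (hp : 1 < p) (hq : 1 < q) (hpq : 1 / p + 1 / q > 1) :
    ∃ C : ℝ, 0 < C ∧ ∀ (a b : ℝ), a < b → ∀ f g : ℝ → ℝ,
      NoCommonDiscont f g a b → pVar f p a b < ⊤ → pVar g q a b < ⊤ →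
      ∃ I : ℝ, RSIntegral f g a b I ∧
        |I - f a * (g b - g a)| ≤
          C * pVarNorm f p a b ^ (p - p / q) *
            oscNorm f a b ^ (1 + p / q - p) * pVarNorm g q a b := by
  obtain ⟨C, hC, H⟩ := rs_bound hp hq hpq
  refine ⟨C, hC, ?_⟩
  intro a b hab f g hno hf hg
  obtain ⟨I, hI, hlim⟩ := rs_exists hp hq hpq hab hno hf hg
  refine ⟨I, hI, ?_⟩
  refine le_of_tendsto (hlim.sub_const _).abs (Eventually.of_forall fun n => ?_)
  apply H a b hab f g hf hg
  · intro x hx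
    simp only [Finset.mem_image, Finset.mem_univ, true_and] at hx
    obtain ⟨j, rfl⟩ := hx
    exact unif_mem hab n j
  · exact Finset.mem_image.2 ⟨0, Finset.mem_univ _, unif_zero a b n⟩
  · exact Finset.mem_image.2 ⟨_, Finset.mem_univ _, unif_last a b n⟩
end

section
/- For all p > 1 and q > 1 with 1/p + 1/q > 1, there exists a constant C_{p,q} > 0, depending only on p and q, such that: for every a < b and all functions f, g : [a;b] → ℝ with no common points of discontinuity, with f of finite p-variation and g of finite q-variation on [a;b], one has |∫_a^b f dg − f(a)·(g(b) − g(a))| ≤ C_{p,q} · ‖f‖_{p-var,[a;b]} · ‖g‖_{q-var,[a;b]}^{q − q/p} · ‖g‖_{osc,[a;b]}^{1 + q/p − q}, where ∫_a^b f dg denotes the Riemann–Stieltjes integral (which exists under these hypotheses). -/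
open Filter Set

/-! removal -/
lemma ly_remove_sum (x y : ℕ → ℝ) (k n : ℕ) (h : k ≤ n) :
    ∑ i ∈ Finset.range (n+1), (x (i+1) - x 0) * (y (i+1) - y i) =
    ∑ i ∈ Finset.range n, (x (if i + 1 ≤ k then i + 1 else i + 2) - x 0) *
      (y (if i + 1 < k then i + 1 else i + 2) - y (if i < k then i else i + 1))
      + (x (k+1) - x k) * (y (k+1) - y k) := by
  induction n, h using Nat.le_induction with
  | base =>
    cases k with
    | zero => simp
    | succ j =>
      rw [Finset.sum_range_succ, Finset.sum_range_succ, Finset.sum_range_succ (n := j)]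
      have : ∑ i ∈ Finset.range j, (x (if i + 1 ≤ j+1 then i + 1 else i + 2) - x 0) *
          (y (if i + 1 < j+1 then i + 1 else i + 2) - y (if i < j+1 then i else i + 1))
          = ∑ i ∈ Finset.range j, (x (i+1) - x 0) * (y (i+1) - y i) := by
        apply Finset.sum_congr rfl
        intro i hi
        have := Finset.mem_range.1 hi
        rw [if_pos (by omega), if_pos (by omega), if_pos (by omega)]
      rw [this]
      simp
      ring
  | succ n hn ih =>
    rw [Finset.sum_range_succ, ih, Finset.sum_range_succ (n := n)]
    rw [if_neg (by omega : ¬ n + 1 ≤ k), if_neg (by omega : ¬ n + 1 < k),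
      if_neg (by omega : ¬ n < k)]
    ring

lemma ly_removal (f g : ℝ → ℝ) (c d : ℝ) (φ : ℕ → ℝ)
    (H : ∀ n (ξ t : ℕ → ℝ), Monotone ξ → Monotone t → (∀ i, ξ i ∈ Set.Icc c d) →
      (∀ i, t i ∈ Set.Icc c d) → ∃ k ≤ n,
        |(f (ξ (k+1)) - f (ξ k)) * (g (t (k+1)) - g (t k))| ≤ φ n) :
    ∀ n (ξ t : ℕ → ℝ), Monotone ξ → Monotone t → (∀ i, ξ i ∈ Set.Icc c d) →
      (∀ i, t i ∈ Set.Icc c d) →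
      |∑ i ∈ Finset.range n, (f (ξ (i+1)) - f (ξ 0)) * (g (t (i+1)) - g (t i))|
        ≤ ∑ m ∈ Finset.range n, φ m := by
  intro n
  induction n with
  | zero => intros; simp
  | succ n ih =>
    intro ξ t hξ ht hξc htc
    obtain ⟨k, hk, hφ⟩ := H n ξ t hξ ht hξc htc
    have e := ly_remove_sum (fun i => f (ξ i)) (fun i => g (t i)) k n hk
    rw [e, Finset.sum_range_succ]
    refine (abs_add_le _ _).trans (add_le_add ?_ hφ)
    have h1 : Monotone (fun i => ξ (if i ≤ k then i else i + 1)) := by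
      intro i j hij
      apply hξ
      split_ifs <;> omega
    have h2 : Monotone (fun i => t (if i < k then i else i + 1)) := by
      intro i j hij
      apply ht
      split_ifs <;> omega
    have := ih _ _ h1 h2 (fun i => hξc _) (fun i => htc _)
    simpa using this

/-! numeric sum lemma -/
lemma ly_head (s : ℝ) (hs0 : 0 ≤ s) (hs : s < 1) (x : ℝ) (hx : 0 ≤ x) (n : ℕ) :
    ∑ m ∈ Finset.range n, (if ((m:ℝ)+1) ≤ x then ((m:ℝ)+1) ^ (-s) else 0)
      ≤ (min (n:ℝ) x) ^ (1-s) / (1-s) := by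
  have h1s : 0 < 1 - s := by linarith
  induction n with
  | zero => simp [hx]; rw [Real.zero_rpow (by linarith)]; simp
  | succ n ih =>
    rw [Finset.sum_range_succ]
    split_ifs with h
    · push_cast
      have hn : (0:ℝ) ≤ n := Nat.cast_nonneg n
      rw [min_eq_left h]
      rw [min_eq_left (by linarith)] at ih
      have key : (n:ℝ) ^ (1-s) ≤ ((n:ℝ)+1)^(1-s) - (1-s) * ((n:ℝ)+1)^(-s) := by
        have hp : (0:ℝ) < n + 1 := by linarith
        have hb := rpow_one_add_le_one_add_mul_self (s := -1/((n:ℝ)+1)) (p := 1-s)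
          (by rw [le_div_iff₀ hp]; linarith) h1s.le (by linarith)
        have e1 : (n:ℝ) = (n+1) * (1 + -1/((n:ℝ)+1)) := by field_simp; ring
        have e0 : 0 ≤ 1 + -1/((n:ℝ)+1) := by
          have : -1 ≤ -1/((n:ℝ)+1) := by rw [le_div_iff₀ hp]; linarith
          linarith
        have e2 : ((n:ℝ)+1)^(1-s) = ((n:ℝ)+1) * ((n:ℝ)+1)^(-s) := by
          rw [sub_eq_add_neg, Real.rpow_add hp, Real.rpow_one]
        calc (n:ℝ) ^ (1-s) = ((n+1) * (1 + -1/((n:ℝ)+1)))^(1-s) := by rw [← e1]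
          _ = (n+1)^(1-s) * (1 + -1/((n:ℝ)+1))^(1-s) := Real.mul_rpow hp.le e0
          _ ≤ (n+1)^(1-s) * (1 + (1-s) * (-1/((n:ℝ)+1))) := by gcongr
          _ = _ := by rw [e2]; field_simp; ring
      have : ((n:ℝ)+1)^(-s) ≤ (((n:ℝ)+1)^(1-s) - (n:ℝ)^(1-s)) / (1-s) := by
        rw [le_div_iff₀ h1s]; linarith
      rw [sub_div] at this
      linarith
    · rw [add_zero]
      refine ih.trans ?_
      have : (n:ℝ) ≤ ((n+1:ℕ):ℝ) := by push_cast; linarith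
      gcongr

lemma ly_tail (r : ℝ) (hr : 1 < r) (x : ℝ) (hx : 0 < x) (n : ℕ) :
    ∑ m ∈ Finset.range n, (if ((m:ℝ)+1) ≤ x then 0 else ((m:ℝ)+1) ^ (-r))
      ≤ (2^r / (r-1)) * (x ^ (1-r) - (max ((n:ℝ)+1) x) ^ (1-r)) := by
  have h1 : 0 < r - 1 := by linarith
  have hc : 0 < (2:ℝ)^r / (r-1) := by positivity
  induction n with
  | zero =>
    simp only [Finset.range_zero, Finset.sum_empty]
    apply mul_nonneg hc.le
    rw [sub_nonneg]
    exact Real.rpow_le_rpow_of_nonpos hx (le_max_right _ _) (by linarith)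
  | succ n ih =>
    rw [Finset.sum_range_succ]
    split_ifs with h
    · rw [add_zero]
      refine ih.trans ?_
      apply mul_le_mul_of_nonneg_left _ hc.le
      have : (max ((((n+1:ℕ):ℝ))+1) x) ^ (1-r) ≤ (max ((n:ℝ)+1) x) ^ (1-r) := by
        apply Real.rpow_le_rpow_of_nonpos (lt_max_of_lt_right hx) _ (by linarith)
        apply max_le_max _ le_rfl
        push_cast; linarith
      linarith
    · push Not at h
      have hn : (0:ℝ) ≤ n := Nat.cast_nonneg n
      push_cast
      rw [max_eq_left h.le] at ih
      rw [max_eq_left (by linarith)]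
      have key : ((n:ℝ)+1)^(-r) ≤ 2^r/(r-1) * (((n:ℝ)+1)^(1-r) - ((n:ℝ)+1+1)^(1-r)) := by
        set y : ℝ := (n:ℝ)+1 with hy
        have hy1 : 1 ≤ y := by linarith
        have hyp : 0 < y := by linarith
        -- convexity
        have hb := one_add_mul_self_le_rpow_one_add (s := 1/y) (p := r)
          (by have : 0 < 1/y := by positivity
              linarith) hr.le
        have e1 : (y+1)^r = y^r * (1+1/y)^r := by
          rw [← Real.mul_rpow hyp.le (by positivity)]; congr 1; field_simp
        have p1 : 0 < y^r := by positivity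
        have p2 : 0 < (y+1)^r := by positivity
        have e2 : y^(1-r) = y / y^r := by rw [Real.rpow_sub hyp, Real.rpow_one]
        have e3 : (y+1)^(1-r) = (y+1) / (y+1)^r := by
          rw [Real.rpow_sub (by linarith), Real.rpow_one]
        have e4 : y^(-r) = 1 / y^r := by rw [Real.rpow_neg hyp.le, one_div]
        have e5 : (y+1)^r ≤ 2^r * y^r := by
          rw [← Real.mul_rpow (by norm_num) hyp.le]
          exact Real.rpow_le_rpow (by linarith) (by linarith) (by linarith)
        have e6 : (r-1) * y^r ≤ y * (y+1)^r - (y+1) * y^r := by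
          have : y^r * (1 + r * (1/y)) ≤ (y+1)^r := by rw [e1]; gcongr
          have h3 : y * (y^r * (1 + r * (1/y))) ≤ y * (y+1)^r := by gcongr
          have h4 : y * (y^r * (1 + r * (1/y))) = y^r * y + r * y^r := by field_simp
          linarith
        rw [e2, e3, e4, div_sub_div _ _ p1.ne' p2.ne', div_mul_div_comm, div_le_div_iff₀ p1 (by positivity)]
        have e7 : (r-1) * (y+1)^r ≤ 2^r * (y * (y+1)^r - y^r * (y+1)) := by
          calc (r-1) * (y+1)^r ≤ (r-1) * (2^r * y^r) := by gcongr
            _ = 2^r * ((r-1) * y^r) := by ring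
            _ ≤ 2^r * (y * (y+1)^r - (y+1) * y^r) := by gcongr
            _ = _ := by ring
        nlinarith
      nlinarith

lemma ly_sum (s r : ℝ) (hs0 : 0 ≤ s) (hs : s < 1) (hr : 1 < r) :
    ∃ C : ℝ, 0 < C ∧ ∀ A B : ℝ, 0 ≤ A → 0 ≤ B → ∀ n : ℕ,
      ∑ m ∈ Finset.range n, min (A * ((m:ℝ)+1)^(-s)) (B * ((m:ℝ)+1)^(-r))
        ≤ C * A ^ ((r-1)/(r-s)) * B ^ ((1-s)/(r-s)) := by
  have h1s : 0 < 1 - s := by linarith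
  have h1 : 0 < r - 1 := by linarith
  have hrs : 0 < r - s := by linarith
  refine ⟨1/(1-s) + 2^r/(r-1), by positivity, ?_⟩
  intro A B hA hB n
  rcases hA.eq_or_lt with rfl | hA
  · rw [Real.zero_rpow (by positivity)]
    simp only [mul_zero, zero_mul]
    apply Finset.sum_nonpos
    intro i _
    exact min_le_left _ _
  rcases hB.eq_or_lt with rfl | hB
  · rw [Real.zero_rpow (by positivity)]
    simp only [mul_zero, zero_mul]
    apply Finset.sum_nonpos
    intro i _
    exact min_le_right _ _
  set x : ℝ := (B/A)^(1/(r-s)) with hx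
  have hxp : 0 < x := by positivity
  have H := ly_head s hs0 hs x hxp.le n
  have T := ly_tail r hr x hxp n
  have H' : ∑ m ∈ Finset.range n, (if ((m:ℝ)+1) ≤ x then ((m:ℝ)+1) ^ (-s) else 0)
      ≤ x^(1-s)/(1-s) := by
    refine H.trans ?_
    have : 0 ≤ min (n:ℝ) x := le_min (Nat.cast_nonneg n) hxp.le
    have := min_le_right (n:ℝ) x
    gcongr
  have T' : ∑ m ∈ Finset.range n, (if ((m:ℝ)+1) ≤ x then 0 else ((m:ℝ)+1) ^ (-r))
      ≤ (2^r / (r-1)) * x ^ (1-r) := by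
    refine T.trans ?_
    have : 0 ≤ (max ((n:ℝ)+1) x) ^ (1-r) := by positivity
    have h3 : x ^ (1-r) - (max ((n:ℝ)+1) x) ^ (1-r) ≤ x^(1-r) := by linarith
    gcongr
  have eA : A * x^(1-s) = A ^ ((r-1)/(r-s)) * B ^ ((1-s)/(r-s)) := by
    rw [hx, ← Real.rpow_mul (by positivity), Real.div_rpow hB.le hA.le]
    have : A ^ ((r-1)/(r-s)) = A / A ^ (1/(r-s) * (1-s)) := by
      rw [← Real.rpow_one_sub' hA.le]
      · congr 1; field_simp; ring
      · have : 1 - 1/(r-s)*(1-s) = (r-1)/(r-s) := by field_simp; ring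
        rw [this]; positivity
    rw [this]
    have e : 1/(r-s) * (1-s) = (1-s)/(r-s) := by ring
    rw [e]; ring
  have eB : B * x^(1-r) = A ^ ((r-1)/(r-s)) * B ^ ((1-s)/(r-s)) := by
    rw [← eA]
    have : x^(1-s) = x^(1-r) * x^(r-s) := by
      rw [← Real.rpow_add hxp]; congr 1; ring
    rw [this]
    have : x^(r-s) = B/A := by
      rw [hx, ← Real.rpow_mul (by positivity), one_div, inv_mul_cancel₀ hrs.ne', Real.rpow_one]
    rw [this]; field_simp
  calc ∑ m ∈ Finset.range n, min (A * ((m:ℝ)+1)^(-s)) (B * ((m:ℝ)+1)^(-r))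
      ≤ ∑ m ∈ Finset.range n, (A * (if ((m:ℝ)+1) ≤ x then ((m:ℝ)+1) ^ (-s) else 0)
          + B * (if ((m:ℝ)+1) ≤ x then 0 else ((m:ℝ)+1) ^ (-r))) := by
        apply Finset.sum_le_sum
        intro m _
        split_ifs
        · simp
        · simp
    _ = A * ∑ m ∈ Finset.range n, (if ((m:ℝ)+1) ≤ x then ((m:ℝ)+1) ^ (-s) else 0)
          + B * ∑ m ∈ Finset.range n, (if ((m:ℝ)+1) ≤ x then 0 else ((m:ℝ)+1) ^ (-r)) := by
        rw [Finset.sum_add_distrib, Finset.mul_sum, Finset.mul_sum]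
    _ ≤ A * (x^(1-s)/(1-s)) + B * ((2^r / (r-1)) * x ^ (1-r)) := by gcongr
    _ = (A * x^(1-s)) * (1/(1-s)) + (B * x^(1-r)) * (2^r/(r-1)) := by ring
    _ = _ := by rw [eA, eB]; ring

lemma ly_seq_le_pVar (f : ℝ → ℝ) (p a b : ℝ) (hp : 0 < p) (n : ℕ) (u : ℕ → ℝ)
    (hu : Monotone u) (hab : ∀ i, u i ∈ Set.Icc a b) :
    ∑ i ∈ Finset.range n, ENNReal.ofReal (|f (u (i+1)) - f (u i)| ^ p) ≤ pVar f p a b := by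
  have key : ∀ n : ℕ, ∃ (m : ℕ) (s : ℕ → ℝ), (∀ i < m, s i < s (i+1)) ∧
      (∀ i, s i ∈ Set.Icc a b) ∧ s m = u n ∧
      ∑ i ∈ Finset.range n, ENNReal.ofReal (|f (u (i+1)) - f (u i)| ^ p) =
      ∑ i ∈ Finset.range m, ENNReal.ofReal (|f (s (i+1)) - f (s i)| ^ p) := by
    intro n
    induction n with
    | zero => exact ⟨0, u, by simp, hab, rfl, by simp⟩
    | succ n ih =>
      obtain ⟨m, s, h1, h2, h3, h4⟩ := ih
      rcases (hu (Nat.le_succ n)).eq_or_lt with h | h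
      · refine ⟨m, s, h1, h2, h3.trans h, ?_⟩
        rw [Finset.sum_range_succ, h4]
        simp only [Nat.succ_eq_add_one] at h
        rw [h]
        simp [Real.zero_rpow hp.ne']
      · refine ⟨m+1, fun i => if i ≤ m then s i else u (n+1), ?_, ?_, ?_, ?_⟩
        · intro i hi
          rcases (Nat.lt_succ_iff.1 hi).eq_or_lt with rfl | hi'
          · simpa [h3] using h
          · simp only
            rw [if_pos (by omega), if_pos (by omega)]
            exact h1 i hi'
        · intro i
          simp only
          split_ifs
          · exact h2 i
          · exact hab _
        · simp
        · rw [Finset.sum_range_succ, h4, Finset.sum_range_succ]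
          congr 1
          · apply Finset.sum_congr rfl
            intro i hi
            have := Finset.mem_range.1 hi
            simp only
            rw [if_pos (by omega), if_pos (by omega)]
          · simp [h3]
  obtain ⟨m, s, h1, h2, -, h4⟩ := key n
  rw [h4]
  unfold pVar
  refine le_iSup_of_le m (le_iSup_of_le (fun i => s i) (le_iSup_of_le ?_ (le_iSup_of_le ?_ ?_)))
  · rw [Fin.strictMono_iff_lt_succ]
    intro i
    simpa using h1 i i.2
  · intro i; exact h2 _
  · rw [← Fin.sum_univ_eq_sum_range (fun i => ENNReal.ofReal (|f (s (i+1)) - f (s i)| ^ p))]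
    simp

lemma ly_pVar_le (f : ℝ → ℝ) (p a b : ℝ) (X : ENNReal)
    (H : ∀ (n : ℕ) (u : ℕ → ℝ), Monotone u → (∀ i, u i ∈ Set.Icc a b) →
      ∑ i ∈ Finset.range n, ENNReal.ofReal (|f (u (i+1)) - f (u i)| ^ p) ≤ X) :
    pVar f p a b ≤ X := by
  unfold pVar
  refine iSup_le fun n => iSup_le fun t => iSup_le fun ht => iSup_le fun hab => ?_
  have := H n (fun i => t ⟨min i n, by omega⟩) (by
    intro i j hij
    apply ht.monotone
    simp only [Fin.mk_le_mk]
    omega) (fun i => hab _)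
  refine le_trans (le_of_eq ?_) this
  rw [← Fin.sum_univ_eq_sum_range (fun i => ENNReal.ofReal
    (|f (t ⟨min (i+1) n, by omega⟩) - f (t ⟨min i n, by omega⟩)| ^ p))]
  apply Finset.sum_congr rfl
  intro i _
  have e1 : (⟨min (i.val+1) n, by omega⟩ : Fin (n+1)) = i.succ := by
    ext; simp
  have e2 : (⟨min (i.val) n, by omega⟩ : Fin (n+1)) = i.castSucc := by
    ext; simp
  rw [e1, e2]

lemma ly_pVar_super (f : ℝ → ℝ) (p a b c : ℝ) (hp : 0 < p) (hab : a ≤ b) (hbc : b ≤ c) :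
    pVar f p a b + pVar f p b c ≤ pVar f p a c := by
  by_cases hX : pVar f p a c = ⊤
  · rw [hX]; exact le_top
  have h2 : pVar f p b c ≤ pVar f p a c := by
    apply ly_pVar_le
    intro n u hu hi
    exact ly_seq_le_pVar f p a c hp n u hu (fun i => ⟨hab.trans (hi i).1, (hi i).2⟩)
  have h2' : pVar f p b c ≠ ⊤ := ne_top_of_le_ne_top hX h2
  suffices h : pVar f p a b ≤ pVar f p a c - pVar f p b c by
    calc _ ≤ pVar f p a c - pVar f p b c + pVar f p b c := by gcongr
      _ = _ := tsub_add_cancel_of_le h2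
  apply ly_pVar_le
  intro n u hu hui
  apply ENNReal.le_sub_of_add_le_right h2'
  have hs : ∑ i ∈ Finset.range n, ENNReal.ofReal (|f (u (i+1)) - f (u i)| ^ p) ≠ ⊤ :=
    ENNReal.sum_ne_top.2 (fun i _ => ENNReal.ofReal_ne_top)
  have hle : ∑ i ∈ Finset.range n, ENNReal.ofReal (|f (u (i+1)) - f (u i)| ^ p) ≤ pVar f p a c :=
    ly_seq_le_pVar f p a c hp n u hu (fun i => ⟨(hui i).1, (hui i).2.trans hbc⟩)
  suffices h : pVar f p b c ≤ pVar f p a c -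
      ∑ i ∈ Finset.range n, ENNReal.ofReal (|f (u (i+1)) - f (u i)| ^ p) by
    calc _ ≤ _ := add_le_add le_rfl h
      _ = _ := add_tsub_cancel_of_le hle
  apply ly_pVar_le
  intro m v hv hvi
  apply ENNReal.le_sub_of_add_le_right hs
  have := ly_seq_le_pVar f p a c hp (n+1+m) (fun i => if i ≤ n then u i else v (i-(n+1))) (by
    intro i j hij
    simp only
    split_ifs
    · exact hu hij
    · exact (hui _).2.trans (hvi _).1
    · omega
    · apply hv; omega) (by
    intro i
    split_ifs
    · exact ⟨(hui i).1, (hui i).2.trans hbc⟩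
    · exact ⟨hab.trans (hvi _).1, (hvi _).2⟩)
  refine le_trans ?_ this
  rw [Finset.sum_range_add, add_comm, Finset.sum_range_succ]
  refine add_le_add (le_add_of_le_of_nonneg (le_of_eq ?_) zero_le) (le_of_eq ?_)
  · apply Finset.sum_congr rfl
    intro i hi
    have := Finset.mem_range.1 hi
    rw [if_pos (by omega), if_pos (by omega)]
  · apply Finset.sum_congr rfl
    intro i hi
    rw [if_neg (by omega), if_neg (by omega)]
    have e1 : n + 1 + i + 1 - (n+1) = i + 1 := by omega
    have e2 : n + 1 + i - (n+1) = i := by omega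
    rw [e1, e2]

lemma ly_pVar_super_sum (f : ℝ → ℝ) (p : ℝ) (hp : 0 < p) (t : ℕ → ℝ) (ht : Monotone t) (n : ℕ) :
    ∑ i ∈ Finset.range n, pVar f p (t i) (t (i+1)) ≤ pVar f p (t 0) (t n) := by
  induction n with
  | zero => simp
  | succ n ih =>
    rw [Finset.sum_range_succ]
    exact (add_le_add ih le_rfl).trans
      (ly_pVar_super f p _ _ _ hp (ht (Nat.zero_le n)) (ht (Nat.le_succ n)))

lemma ly_pVar_mono (f : ℝ → ℝ) (p a b c d : ℝ) (hp : 0 < p) (hac : a ≤ c) (hdb : d ≤ b) :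
    pVar f p c d ≤ pVar f p a b := by
  apply ly_pVar_le
  intro n u hu hi
  exact ly_seq_le_pVar f p a b hp n u hu (fun i => ⟨hac.trans (hi i).1, (hi i).2.trans hdb⟩)

/-- real version -/
lemma ly_seq_le (f : ℝ → ℝ) (p a b : ℝ) (hp : 0 < p) (hf : pVar f p a b < ⊤) (n : ℕ) (u : ℕ → ℝ)
    (hu : Monotone u) (hab : ∀ i, u i ∈ Set.Icc a b) :
    ∑ i ∈ Finset.range n, |f (u (i+1)) - f (u i)| ^ p ≤ (pVar f p a b).toReal := by
  have := ly_seq_le_pVar f p a b hp n u hu hab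
  rw [← ENNReal.ofReal_sum_of_nonneg (fun i _ => by positivity)] at this
  exact (ENNReal.ofReal_le_iff_le_toReal hf.ne).1 this

lemma ly_two (f : ℝ → ℝ) (p a b : ℝ) (hp : 0 < p) (hf : pVar f p a b < ⊤) (s t : ℝ)
    (hs : s ∈ Set.Icc a b) (ht : t ∈ Set.Icc a b) :
    |f t - f s| ≤ pVarNorm f p a b := by
  wlog hst : s ≤ t generalizing s t
  · rw [abs_sub_comm]; exact this t s ht hs (by linarith)
  have := ly_seq_le f p a b hp hf 1 (fun i => if i = 0 then s else t) (by
    intro i j hij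
    simp only
    split_ifs
    · exact le_rfl
    · exact hst
    · omega
    · exact le_rfl) (by
    intro i
    split_ifs <;> assumption)
  simp at this
  unfold pVarNorm
  calc |f t - f s| = (|f t - f s| ^ p) ^ (1/p) := by
        rw [← Real.rpow_mul (abs_nonneg _), mul_one_div_cancel hp.ne', Real.rpow_one]
    _ ≤ _ := by gcongr

lemma ly_osc (f : ℝ → ℝ) (p a b : ℝ) (hp : 0 < p) (hf : pVar f p a b < ⊤) (s t : ℝ)
    (hs : s ∈ Set.Icc a b) (ht : t ∈ Set.Icc a b) :
    |f t - f s| ≤ oscNorm f a b := by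
  have hb : BddAbove {x | ∃ s ∈ Set.Icc a b, ∃ t ∈ Set.Icc a b, s < t ∧ x = |f t - f s|} := by
    refine ⟨pVarNorm f p a b, ?_⟩
    rintro x ⟨s, hs, t, ht, -, rfl⟩
    exact ly_two f p a b hp hf s t hs ht
  unfold oscNorm
  rcases lt_trichotomy s t with h | h | h
  · exact le_csSup hb ⟨s, hs, t, ht, h, rfl⟩
  · subst h
    simp only [sub_self, abs_zero]
    apply Real.sSup_nonneg
    rintro x ⟨s, hs, t, ht, -, rfl⟩
    positivity
  · exact le_csSup hb ⟨t, ht, s, hs, h, abs_sub_comm _ _⟩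

lemma ly_osc_nonneg (f : ℝ → ℝ) (a b : ℝ) : 0 ≤ oscNorm f a b := by
  apply Real.sSup_nonneg
  rintro x ⟨s, hs, t, ht, -, rfl⟩
  positivity

lemma ly_pick (p q : ℝ) (hp : 0 < p) (hq : 0 < q) (V W : ℝ) (hV : 0 ≤ V) (hW : 0 ≤ W)
    (u v : ℕ → ℝ) (hu : ∀ i, 0 ≤ u i) (hv : ∀ i, 0 ≤ v i) (n : ℕ)
    (h1 : ∑ i ∈ Finset.range (n+1), u i ^ p ≤ V) (h2 : ∑ i ∈ Finset.range (n+1), v i ^ q ≤ W) :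
    ∃ k ≤ n, u k ≤ (2*V) ^ (1/p) * ((n:ℝ)+1)^(-(1/p)) ∧
      v k ≤ (2*W) ^ (1/q) * ((n:ℝ)+1)^(-(1/q)) := by
  have hn : (0:ℝ) < (n:ℝ)+1 := by positivity
  have hs : ∑ i ∈ Finset.range (n+1), (u i ^ p / V + v i ^ q / W) ≤
      ∑ i ∈ Finset.range (n+1), (2 / ((n:ℝ)+1)) := by
    rw [Finset.sum_add_distrib, ← Finset.sum_div, ← Finset.sum_div]
    have := div_le_one_of_le₀ h1 hV
    have := div_le_one_of_le₀ h2 hW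
    simp
    field_simp
    linarith
  obtain ⟨k, hk, hle⟩ := Finset.exists_le_of_sum_le (by simp) hs
  have hk' := Finset.mem_range.1 hk
  have aux : ∀ (p V x : ℝ), 0 < p → 0 ≤ V → 0 ≤ x → x ^ p ≤ V → x^p / V ≤ 2/((n:ℝ)+1) →
      x ≤ (2*V) ^ (1/p) * ((n:ℝ)+1)^(-(1/p)) := by
    intro p V x hp hV hx hxV h
    have h3 : x^p ≤ 2*V * ((n:ℝ)+1)⁻¹ := by
      rcases hV.eq_or_lt with rfl | hV
      · simpa using hxV
      · rw [div_le_iff₀ hV] at h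
        refine h.trans (le_of_eq ?_)
        field_simp
    calc x = (x^p)^(1/p) := by
          rw [← Real.rpow_mul hx, mul_one_div_cancel hp.ne', Real.rpow_one]
      _ ≤ (2*V * ((n:ℝ)+1)⁻¹)^(1/p) := by gcongr
      _ = _ := by
          rw [Real.mul_rpow (by positivity) (by positivity), Real.rpow_neg hn.le,
            Real.inv_rpow hn.le]
  have n1 : 0 ≤ u k ^ p / V := div_nonneg (Real.rpow_nonneg (hu k) _) hV
  have n2 : 0 ≤ v k ^ q / W := div_nonneg (Real.rpow_nonneg (hv k) _) hW
  refine ⟨k, by omega, aux p V (u k) hp hV (hu k) ?_ (by linarith),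
    aux q W (v k) hq hW (hv k) ?_ (by linarith)⟩
  · exact (Finset.single_le_sum (f := fun i => u i ^ p)
      (fun i _ => Real.rpow_nonneg (hu i) _) hk).trans h1
  · exact (Finset.single_le_sum (f := fun i => v i ^ q)
      (fun i _ => Real.rpow_nonneg (hv i) _) hk).trans h2

/-- main bound on sums -/
lemma ly_main_bound (p q : ℝ) (hp : 1 < p) (hq : 1 < q) (hpq : 1 / p + 1 / q > 1) :
    ∃ C : ℝ, 0 < C ∧ ∀ (a b : ℝ) (f g : ℝ → ℝ), pVar f p a b < ⊤ → pVar g q a b < ⊤ →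
      ∀ n (ξ t : ℕ → ℝ), Monotone ξ → Monotone t → (∀ i, ξ i ∈ Set.Icc a b) →
      (∀ i, t i ∈ Set.Icc a b) →
      |∑ i ∈ Finset.range n, (f (ξ (i+1)) - f (ξ 0)) * (g (t (i+1)) - g (t i))| ≤
          C * pVarNorm f p a b * pVarNorm g q a b ^ (q - q / p) *
            oscNorm g a b ^ (1 + q / p - q) := by
  have hp0 : 0 < p := by linarith
  have hq0 : 0 < q := by linarith
  obtain ⟨C, hC, hsum⟩ := ly_sum (1/p) (1/p+1/q) (by positivity)
    (by rw [div_lt_one hp0]; exact hp) hpq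
  refine ⟨C * ((2:ℝ)^(1/p) * (2^(1/q)) ^ (q-q/p)), by positivity, ?_⟩
  intro a b f g hf hg n ξ t hξ ht hξc htc
  set V := (pVar f p a b).toReal with hV
  set W := (pVar g q a b).toReal with hW
  have hV0 : 0 ≤ V := ENNReal.toReal_nonneg
  have hW0 : 0 ≤ W := ENNReal.toReal_nonneg
  set O := oscNorm g a b with hO
  have hO0 : 0 ≤ O := ly_osc_nonneg g a b
  have R := ly_removal f g a b
    (fun m => min (((2*V)^(1/p) * O) * ((m:ℝ)+1)^(-(1/p)))
      (((2*V)^(1/p) * (2*W)^(1/q)) * ((m:ℝ)+1)^(-(1/p+1/q)))) (by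
      intro n ξ t hξ ht hξc htc
      obtain ⟨k, hk, h1, h2⟩ := ly_pick p q hp0 hq0 V W hV0 hW0
        (fun i => |f (ξ (i+1)) - f (ξ i)|) (fun i => |g (t (i+1)) - g (t i)|)
        (fun i => abs_nonneg _) (fun i => abs_nonneg _) n
        (ly_seq_le f p a b hp0 hf _ ξ hξ hξc) (ly_seq_le g q a b hq0 hg _ t ht htc)
      refine ⟨k, hk, le_min ?_ ?_⟩
      · rw [abs_mul]
        calc _ ≤ ((2*V)^(1/p) * ((n:ℝ)+1)^(-(1/p))) * O :=
              mul_le_mul h1 (ly_osc g q a b hq0 hg _ _ (htc _) (htc _)) (abs_nonneg _)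
                (by positivity)
          _ = _ := by ring
      · rw [abs_mul, neg_add, Real.rpow_add (x := (n:ℝ)+1) (by positivity)]
        calc _ ≤ ((2*V)^(1/p) * ((n:ℝ)+1)^(-(1/p))) * ((2*W)^(1/q) * ((n:ℝ)+1)^(-(1/q))) :=
              mul_le_mul h1 h2 (abs_nonneg _) (by positivity)
          _ = _ := by ring) n ξ t hξ ht hξc htc
  refine R.trans ((hsum _ _ (by positivity) (by positivity) n).trans (le_of_eq ?_))
  have ex1 : (1/p+1/q-1)/(1/p+1/q-1/p) = 1 + q/p - q := by
    rw [add_sub_cancel_left]; field_simp; ring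
  have ex2 : (1-1/p)/(1/p+1/q-1/p) = q - q/p := by
    rw [add_sub_cancel_left]; field_simp
  rw [ex1, ex2]
  unfold pVarNorm
  rw [← hV, ← hW]
  rw [Real.mul_rpow (x := (2*V)^(1/p)) (by positivity) hO0,
    Real.mul_rpow (x := (2*V)^(1/p)) (by positivity) (by positivity)]
  have e1 : ((2*V)^(1/p)) ^ (1+q/p-q) * ((2*V)^(1/p)) ^ (q-q/p) = 2^(1/p) * V^(1/p) := by
    rw [← Real.mul_rpow (by norm_num) hV0, ← Real.rpow_add' (by positivity) (by ring_nf; norm_num)]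
    ring_nf
    rw [Real.rpow_one]
  have e2 : ((2*W)^(1/q)) ^ (q-q/p) = (2^(1/q))^(q-q/p) * (W^(1/q))^(q-q/p) := by
    rw [← Real.mul_rpow (by positivity) (by positivity), ← Real.mul_rpow (by norm_num) hW0]
  rw [e2]
  calc _ = C * (((2*V)^(1/p)) ^ (1+q/p-q) * ((2*V)^(1/p)) ^ (q-q/p)) * O^(1+q/p-q) *
      ((2^(1/q))^(q-q/p) * (W^(1/q))^(q-q/p)) := by ring
    _ = _ := by rw [e1]; ring

/-- local bound -/
lemma ly_block (p q : ℝ) (hp : 1 < p) (hq : 1 < q) (hpq : 1 / p + 1 / q > 1) :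
    ∃ C : ℝ, 0 < C ∧ ∀ (a b η : ℝ) (f g : ℝ → ℝ), 0 ≤ η → pVar f p a b < ⊤ → pVar g q a b < ⊤ →
      (∀ s ∈ Set.Icc a b, ∀ t ∈ Set.Icc a b, ∀ u ∈ Set.Icc a b, ∀ v ∈ Set.Icc a b,
        |(f s - f t) * (g u - g v)| ≤ η) →
      ∀ n (ξ t : ℕ → ℝ), Monotone ξ → Monotone t → (∀ i, ξ i ∈ Set.Icc a b) →
      (∀ i, t i ∈ Set.Icc a b) →
      |∑ i ∈ Finset.range n, (f (ξ (i+1)) - f (ξ 0)) * (g (t (i+1)) - g (t i))| ≤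
          C * η ^ ((1/p+1/q-1)/(1/p+1/q)) * ((pVar f p a b).toReal + (pVar g q a b).toReal) := by
  have hp0 : 0 < p := by linarith
  have hq0 : 0 < q := by linarith
  obtain ⟨C, hC, hsum⟩ := ly_sum 0 (1/p+1/q) le_rfl one_pos hpq
  refine ⟨C * 2, by positivity, ?_⟩
  intro a b η f g hη hf hg hosc n ξ t hξ ht hξc htc
  set V := (pVar f p a b).toReal with hV
  set W := (pVar g q a b).toReal with hW
  have hV0 : 0 ≤ V := ENNReal.toReal_nonneg
  have hW0 : 0 ≤ W := ENNReal.toReal_nonneg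
  have hθ : 0 < 1/p+1/q := by positivity
  have R := ly_removal f g a b
    (fun m => min (η * ((m:ℝ)+1)^(-(0:ℝ)))
      (((2*(V+W))^(1/p+1/q)) * ((m:ℝ)+1)^(-(1/p+1/q)))) (by
      intro n ξ t hξ ht hξc htc
      obtain ⟨k, hk, h1, h2⟩ := ly_pick p q hp0 hq0 V W hV0 hW0
        (fun i => |f (ξ (i+1)) - f (ξ i)|) (fun i => |g (t (i+1)) - g (t i)|)
        (fun i => abs_nonneg _) (fun i => abs_nonneg _) n
        (ly_seq_le f p a b hp0 hf _ ξ hξ hξc) (ly_seq_le g q a b hq0 hg _ t ht htc)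
      refine ⟨k, hk, le_min ?_ ?_⟩
      · simpa using hosc _ (hξc _) _ (hξc _) _ (htc _) _ (htc _)
      · rw [abs_mul, neg_add, Real.rpow_add (x := (n:ℝ)+1) (by positivity)]
        calc _ ≤ ((2*V)^(1/p) * ((n:ℝ)+1)^(-(1/p))) * ((2*W)^(1/q) * ((n:ℝ)+1)^(-(1/q))) :=
              mul_le_mul h1 h2 (abs_nonneg _) (by positivity)
          _ ≤ ((2*(V+W))^(1/p) * ((n:ℝ)+1)^(-(1/p))) * ((2*(V+W))^(1/q) * ((n:ℝ)+1)^(-(1/q))) := by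
              gcongr <;> linarith
          _ = _ := by
              rw [Real.rpow_add' (x := 2*(V+W)) (by positivity) hθ.ne']; ring) n ξ t hξ ht hξc htc
  refine R.trans ((hsum _ _ hη (by positivity) n).trans (le_of_eq ?_))
  rw [← Real.rpow_mul (by positivity)]
  simp only [sub_zero]
  rw [mul_one_div_cancel hθ.ne', Real.rpow_one]
  ring

lemma ly_unif (f g : ℝ → ℝ) (a b Mf Mg : ℝ) (hMf : 0 ≤ Mf) (hMg : 0 ≤ Mg)
    (h : NoCommonDiscont f g a b)
    (hf : ∀ s ∈ Set.Icc a b, ∀ t ∈ Set.Icc a b, |f s - f t| ≤ Mf)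
    (hg : ∀ s ∈ Set.Icc a b, ∀ t ∈ Set.Icc a b, |g s - g t| ≤ Mg) (η : ℝ) (hη : 0 < η) :
    ∃ δ > 0, ∀ c d : ℝ, a ≤ c → d ≤ b → d - c < δ →
      (∀ s ∈ Set.Icc c d, ∀ t ∈ Set.Icc c d, ∀ u ∈ Set.Icc c d, ∀ v ∈ Set.Icc c d,
        |(f s - f t) * (g u - g v)| ≤ η) := by
  have aux : ∀ (F : ℝ → ℝ) (x : ℝ), ContinuousWithinAt F (Set.Icc a b) x → ∀ e > 0,
      ∃ r > 0, ∀ s ∈ Set.Icc a b ∩ Metric.ball x r, ∀ t ∈ Set.Icc a b ∩ Metric.ball x r,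
        |F s - F t| ≤ e := by
    intro F x hF e he
    rw [Metric.continuousWithinAt_iff] at hF
    obtain ⟨r, hr, H⟩ := hF (e/2) (by positivity)
    refine ⟨r, hr, fun s hs t ht => ?_⟩
    have h1 := H hs.1 hs.2
    have h2 := H ht.1 ht.2
    rw [← Real.dist_eq]
    have := dist_triangle_right (F s) (F t) (F x)
    linarith
  have loc : ∀ x : Set.Icc a b, ∃ r > 0, ∀ s ∈ Set.Icc a b ∩ Metric.ball x.1 r,
      ∀ t ∈ Set.Icc a b ∩ Metric.ball x.1 r, ∀ u ∈ Set.Icc a b ∩ Metric.ball x.1 r,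
      ∀ v ∈ Set.Icc a b ∩ Metric.ball x.1 r, |(f s - f t) * (g u - g v)| ≤ η := by
    rintro ⟨x, hx⟩
    rcases h x hx with hc | hc
    · obtain ⟨r, hr, H⟩ := aux f x hc (η/(Mg+1)) (by positivity)
      refine ⟨r, hr, fun s hs t ht u hu v hv => ?_⟩
      rw [abs_mul]
      calc _ ≤ (η/(Mg+1)) * Mg := mul_le_mul (H s hs t ht) (hg u hu.1 v hv.1) (abs_nonneg _)
            (by positivity)
        _ ≤ η := by rw [div_mul_eq_mul_div, div_le_iff₀ (by positivity)]; nlinarith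
    · obtain ⟨r, hr, H⟩ := aux g x hc (η/(Mf+1)) (by positivity)
      refine ⟨r, hr, fun s hs t ht u hu v hv => ?_⟩
      rw [abs_mul]
      calc _ ≤ Mf * (η/(Mf+1)) := mul_le_mul (hf s hs.1 t ht.1) (H u hu v hv) (abs_nonneg _) hMf
        _ ≤ η := by rw [mul_div_assoc', div_le_iff₀ (by positivity)]; nlinarith
  choose r hr H using loc
  obtain ⟨δ, hδ, L⟩ := lebesgue_number_lemma_of_metric (s := Set.Icc a b) (ι := Set.Icc a b)
    (c := fun x => Metric.ball x.1 (r x)) isCompact_Icc (fun _ => Metric.isOpen_ball) (by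
      intro x hx
      exact Set.mem_iUnion.2 ⟨⟨x, hx⟩, Metric.mem_ball_self (hr _)⟩)
  refine ⟨δ, hδ, ?_⟩
  intro c d hac hdb hcd s hs t ht u hu v hv
  obtain ⟨i, hi⟩ := L c ⟨hac, hs.1.trans (hs.2.trans hdb)⟩
  have mem : ∀ y ∈ Set.Icc c d, y ∈ Set.Icc a b ∩ Metric.ball i.1 (r i) := by
    intro y hy
    refine ⟨⟨hac.trans hy.1, hy.2.trans hdb⟩, hi ?_⟩
    rw [Metric.mem_ball, Real.dist_eq, abs_of_nonneg (by linarith [hy.1])]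
    linarith [hy.2]
  exact H i s (mem s hs) t (mem t ht) u (mem u hu) v (mem v hv)

lemma ly_refine (R : Finset ℝ) (a b : ℝ) (ha : a ∈ R) (hb : b ∈ R)
    (hR : ∀ x ∈ R, x ∈ Set.Icc a b) :
    ∃ (N : ℕ) (r : ℕ → ℝ), Monotone r ∧ (∀ i, r i ∈ Set.Icc a b) ∧
      ∀ (n : ℕ) (t : ℕ → ℝ), Monotone t → (∀ i, t i ∈ R) → t 0 = a → t n = b →
        ∃ κ : ℕ → ℕ, Monotone κ ∧ κ 0 = 0 ∧ κ n = N ∧ ∀ i, r (κ i) = t i := by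
  have hc : 0 < R.card := Finset.card_pos.2 ⟨a, ha⟩
  obtain ⟨N, hN⟩ : ∃ N, R.card = N + 1 := ⟨R.card - 1, by omega⟩
  let e := R.orderIsoOfFin hN
  refine ⟨N, fun i => (e ⟨min i N, by omega⟩ : ℝ), ?_, ?_, ?_⟩
  · intro i j hij
    have : e ⟨min i N, by omega⟩ ≤ e ⟨min j N, by omega⟩ := by
      rw [e.le_iff_le, Fin.mk_le_mk]; omega
    exact this
  · intro i
    exact hR _ (e _).2
  · intro n t ht htR h0 hn
    refine ⟨fun i => (e.symm ⟨t i, htR i⟩).val, ?_, ?_, ?_, ?_⟩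
    · intro i j hij
      have : e.symm ⟨t i, htR i⟩ ≤ e.symm ⟨t j, htR j⟩ := by
        rw [e.symm.le_iff_le]; exact ht hij
      exact this
    · have : e.symm ⟨t 0, htR 0⟩ ≤ 0 := by
        rw [e.symm_apply_le]
        show t 0 ≤ (e 0 : ℝ)
        rw [h0]; exact (hR _ (e 0).2).1
      have h2 : (e.symm ⟨t 0, htR 0⟩).val ≤ 0 := this
      simpa using h2
    · have : Fin.last N ≤ e.symm ⟨t n, htR n⟩ := by
        rw [e.le_symm_apply]
        show (e (Fin.last N) : ℝ) ≤ t n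
        rw [hn]; exact (hR _ (e _).2).2
      have h2 : N ≤ (e.symm ⟨t n, htR n⟩).val := this
      have h3 := (e.symm ⟨t n, htR n⟩).2
      simp only
      omega
    · intro i
      have h3 := (e.symm ⟨t i, htR i⟩).2
      have : (⟨min (e.symm ⟨t i, htR i⟩).val N, by omega⟩ : Fin (N+1)) = e.symm ⟨t i, htR i⟩ := by
        ext; simp only; omega
      simp only
      rw [this, e.apply_symm_apply]

lemma ly_blocks_sum (F : ℕ → ℝ) (κ : ℕ → ℕ) (hκ : Monotone κ) (h0 : κ 0 = 0) (n : ℕ) :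
    ∑ j ∈ Finset.range (κ n), F j =
      ∑ i ∈ Finset.range n, ∑ j ∈ Finset.range (κ (i+1) - κ i), F (κ i + j) := by
  induction n with
  | zero => simp [h0]
  | succ n ih =>
    rw [Finset.sum_range_succ, ← ih, ← Finset.sum_range_add]
    congr 2
    have := hκ (Nat.le_succ n)
    simp only [Nat.succ_eq_add_one] at this
    omega

lemma ly_compare (f g : ℝ → ℝ) (p q K a b : ℝ) (hp : 0 < p) (hq : 0 < q) (hK : 0 ≤ K)
    (hf : pVar f p a b < ⊤) (hg : pVar g q a b < ⊤)
    (n N : ℕ) (t ξ r : ℕ → ℝ) (κ : ℕ → ℕ)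
    (ht : Monotone t) (h0 : t 0 = a) (hn : t n = b)
    (hξ : ∀ i < n, t i ≤ ξ i ∧ ξ i ≤ t (i+1)) (hr : Monotone r)
    (hκ : Monotone κ) (hκ0 : κ 0 = 0) (hκn : κ n = N) (hrκ : ∀ i, r (κ i) = t i)
    (H : ∀ i < n, ∀ m (x y : ℕ → ℝ), Monotone x → Monotone y →
      (∀ j, x j ∈ Set.Icc (t i) (t (i+1))) → (∀ j, y j ∈ Set.Icc (t i) (t (i+1))) →
      |∑ j ∈ Finset.range m, (f (x (j+1)) - f (x 0)) * (g (y (j+1)) - g (y j))| ≤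
        K * ((pVar f p (t i) (t (i+1))).toReal + (pVar g q (t i) (t (i+1))).toReal)) :
    |∑ i ∈ Finset.range n, f (ξ i) * (g (t (i+1)) - g (t i)) -
      ∑ j ∈ Finset.range N, f (r j) * (g (r (j+1)) - g (r j))| ≤
      2 * K * ((pVar f p a b).toReal + (pVar g q a b).toReal) := by
  have hsup : ∀ (F : ℝ → ℝ) (s : ℝ), 0 < s → pVar F s a b < ⊤ →
      ∑ i ∈ Finset.range n, (pVar F s (t i) (t (i+1))).toReal ≤ (pVar F s a b).toReal := by
    intro F s hs hF
    have h1 := ly_pVar_super_sum F s hs t ht n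
    rw [h0, hn] at h1
    rw [← ENNReal.toReal_sum]
    · exact ENNReal.toReal_mono hF.ne h1
    · intro i hi
      exact ne_top_of_le_ne_top hF.ne ((Finset.single_le_sum
        (f := fun i => pVar F s (t i) (t (i+1))) (fun _ _ => zero_le) hi).trans h1)
  rw [← hκn, ly_blocks_sum _ κ hκ hκ0 n, ← Finset.sum_sub_distrib]
  refine (Finset.abs_sum_le_sum_abs _ _).trans ?_
  calc _ ≤ ∑ i ∈ Finset.range n, 2 * K * ((pVar f p (t i) (t (i+1))).toReal +
        (pVar g q (t i) (t (i+1))).toReal) := by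
        apply Finset.sum_le_sum
        intro i hi
        have hi := Finset.mem_range.1 hi
        have hki : κ i ≤ κ (i+1) := hκ (Nat.le_succ i)
        set m := κ (i+1) - κ i with hm
        have hti : t i ≤ t (i+1) := ht (Nat.le_succ i)
        -- tag estimate
        have A := H i hi 1 (fun j => if j = 0 then t i else ξ i)
          (fun j => if j = 0 then t i else t (i+1)) (by
            intro j k hjk
            simp only
            split_ifs
            · exact le_rfl
            · exact (hξ i hi).1
            · omega
            · exact le_rfl) (by
            intro j k hjk
            simp only
            split_ifs
            · exact le_rfl
            · exact hti
            · omega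
            · exact le_rfl) (by
            intro j; split_ifs
            · exact ⟨le_rfl, hti⟩
            · exact ⟨(hξ i hi).1, (hξ i hi).2⟩) (by
            intro j; split_ifs
            · exact ⟨le_rfl, hti⟩
            · exact ⟨hti, le_rfl⟩)
        have mem : ∀ j ≤ m, r (κ i + j) ∈ Set.Icc (t i) (t (i+1)) := by
          intro j hj
          rw [← hrκ i, ← hrκ (i+1)]
          exact ⟨hr (by omega), hr (by omega)⟩
        have B := H i hi m (fun j => r (κ i + min (j - 1) m)) (fun j => r (κ i + min j m)) (by
            intro j k hjk
            apply hr; omega) (by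
            intro j k hjk
            apply hr; omega) (fun j => mem _ (by omega)) (fun j => mem _ (by omega))
        have e1 : ∑ j ∈ Finset.range m, (f (r (κ i + min (j+1-1) m)) - f (r (κ i + min (0-1) m))) *
            (g (r (κ i + min (j+1) m)) - g (r (κ i + min j m))) =
            ∑ j ∈ Finset.range m, f (r (κ i + j)) * (g (r (κ i + j + 1)) - g (r (κ i + j)))
            - f (t i) * (g (t (i+1)) - g (t i)) := by
          have tel : g (t (i+1)) - g (t i) =
              ∑ j ∈ Finset.range m, (g (r (κ i + j + 1)) - g (r (κ i + j))) := by
            have := Finset.sum_range_sub (fun j => g (r (κ i + j))) m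
            simp only [← add_assoc] at this
            rw [this, ← hrκ i, ← hrκ (i+1), add_zero]
            congr 4
            omega
          rw [tel, Finset.mul_sum, ← Finset.sum_sub_distrib]
          apply Finset.sum_congr rfl
          intro j hj
          have hj := Finset.mem_range.1 hj
          have a1 : min (j+1-1) m = j := by omega
          have a2 : min (0-1) m = 0 := by omega
          have a3 : min (j+1) m = j+1 := by omega
          have a4 : min j m = j := by omega
          rw [a1, a2, a3, a4, add_zero, hrκ, ← add_assoc]
          ring
        rw [e1] at B
        simp only [Finset.range_one, Finset.sum_singleton, zero_add, one_ne_zero, if_true,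
          if_false] at A
        have e2 : f (ξ i) * (g (t (i+1)) - g (t i)) -
            ∑ j ∈ Finset.range m, f (r (κ i + j)) * (g (r (κ i + j + 1)) - g (r (κ i + j))) =
            (f (ξ i) - f (t i)) * (g (t (i+1)) - g (t i)) -
            (∑ j ∈ Finset.range m, f (r (κ i + j)) * (g (r (κ i + j + 1)) - g (r (κ i + j)))
            - f (t i) * (g (t (i+1)) - g (t i))) := by ring
        rw [e2]
        refine (abs_sub _ _).trans ?_
        linarith
    _ = 2 * K * (∑ i ∈ Finset.range n, (pVar f p (t i) (t (i+1))).toReal +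
        ∑ i ∈ Finset.range n, (pVar g q (t i) (t (i+1))).toReal) := by
        rw [← Finset.mul_sum, Finset.sum_add_distrib]
    _ ≤ _ := by
        have := hsup f p hp hf
        have := hsup g q hq hg
        gcongr

/-- nat-indexed tagged partitions -/
def LyTP (a b : ℝ) (n : ℕ) (t ξ : ℕ → ℝ) (δ : ℝ) : Prop :=
  Monotone t ∧ t 0 = a ∧ (∀ i, n ≤ i → t i = b) ∧ (∀ i < n, t i ≤ ξ i ∧ ξ i ≤ t (i+1)) ∧
    ∀ i < n, t (i+1) - t i < δ

lemma ly_cauchy (p q : ℝ) (hp : 1 < p) (hq : 1 < q) (hpq : 1 / p + 1 / q > 1)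
    (a b : ℝ) (f g : ℝ → ℝ) (h : NoCommonDiscont f g a b)
    (hf : pVar f p a b < ⊤) (hg : pVar g q a b < ⊤) (ε : ℝ) (hε : 0 < ε) :
    ∃ δ > 0, ∀ n t ξ n' t' ξ', LyTP a b n t ξ δ → LyTP a b n' t' ξ' δ →
      |∑ i ∈ Finset.range n, f (ξ i) * (g (t (i+1)) - g (t i)) -
        ∑ i ∈ Finset.range n', f (ξ' i) * (g (t' (i+1)) - g (t' i))| ≤ ε := by
  have hp0 : 0 < p := by linarith
  have hq0 : 0 < q := by linarith
  obtain ⟨C, hC, hblock⟩ := ly_block p q hp hq hpq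
  set Ω := (pVar f p a b).toReal + (pVar g q a b).toReal with hΩ
  have hΩ0 : 0 ≤ Ω := add_nonneg ENNReal.toReal_nonneg ENNReal.toReal_nonneg
  set e := (1/p+1/q-1)/(1/p+1/q) with he
  have he0 : 0 < e := div_pos (by linarith) (by positivity)
  set y := ε / (4 * C * (Ω+1)) with hy
  have hy0 : 0 < y := by positivity
  set η := y ^ (1/e) with hη
  have hη0 : 0 < η := by positivity
  have hηe : η ^ e = y := by
    rw [hη, ← Real.rpow_mul hy0.le, one_div_mul_cancel he0.ne', Real.rpow_one]
  obtain ⟨δ, hδ, hu⟩ := ly_unif f g a b (pVarNorm f p a b) (pVarNorm g q a b)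
    (Real.rpow_nonneg ENNReal.toReal_nonneg _) (Real.rpow_nonneg ENNReal.toReal_nonneg _) h
    (fun s hs t ht => ly_two f p a b hp0 hf t s ht hs)
    (fun s hs t ht => ly_two g q a b hq0 hg t s ht hs) η hη0
  refine ⟨δ, hδ, ?_⟩
  intro n t ξ n' t' ξ' hT hT'
  have hmem : ∀ n t ξ, LyTP a b n t ξ δ → ∀ i, t i ∈ Set.Icc a b := by
    intro n t ξ hT i
    obtain ⟨h1, h2, h3, -, -⟩ := hT
    refine ⟨h2 ▸ h1 (Nat.zero_le i), ?_⟩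
    rw [← h3 (max i n) (le_max_right _ _)]
    exact h1 (le_max_left _ _)
  have himg : ∀ n t ξ, LyTP a b n t ξ δ → ∀ i, t i ∈ Finset.image t (Finset.range (n+1)) := by
    intro n t ξ hT i
    rw [Finset.mem_image]
    refine ⟨min i n, by simp, ?_⟩
    rcases le_total i n with hin | hin
    · rw [min_eq_left hin]
    · rw [min_eq_right hin, hT.2.2.1 i hin, hT.2.2.1 n le_rfl]
  obtain ⟨N, r, hr, -, href⟩ := ly_refine
    (Finset.image t (Finset.range (n+1)) ∪ Finset.image t' (Finset.range (n'+1))) a b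
    (by rw [← hT.2.1]; exact Finset.mem_union_left _ (himg n t ξ hT 0))
    (by rw [← hT.2.2.1 n le_rfl]; exact Finset.mem_union_left _ (himg n t ξ hT n))
    (by
      intro x hx
      rcases Finset.mem_union.1 hx with hx | hx
      · obtain ⟨i, -, rfl⟩ := Finset.mem_image.1 hx
        exact hmem n t ξ hT i
      · obtain ⟨i, -, rfl⟩ := Finset.mem_image.1 hx
        exact hmem n' t' ξ' hT' i)
  have cmp : ∀ n t ξ, LyTP a b n t ξ δ →
      (∃ κ : ℕ → ℕ, Monotone κ ∧ κ 0 = 0 ∧ κ n = N ∧ ∀ i, r (κ i) = t i) →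
      |∑ i ∈ Finset.range n, f (ξ i) * (g (t (i+1)) - g (t i)) -
      ∑ j ∈ Finset.range N, f (r j) * (g (r (j+1)) - g (r j))| ≤ ε/2 := by
    rintro n t ξ hT ⟨κ, k1, k2, k3, k4⟩
    have hm := hmem n t ξ hT
    obtain ⟨h1, h2, h3, h4, h5⟩ := hT
    have := ly_compare f g p q (C * η^e) a b hp0 hq0 (by positivity) hf hg n N t ξ r κ h1 h2
      (h3 n le_rfl) h4 hr k1 k2 k3 k4 (by
        intro i hi m x y hx hy hxm hym
        exact hblock (t i) (t (i+1)) η f g hη0.le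
          ((ly_pVar_mono f p a b _ _ hp0 (hm i).1 (hm (i+1)).2).trans_lt hf)
          ((ly_pVar_mono g q a b _ _ hq0 (hm i).1 (hm (i+1)).2).trans_lt hg)
          (hu (t i) (t (i+1)) (hm i).1 (hm (i+1)).2 (h5 i hi)) m x y hx hy hxm hym)
    refine this.trans ?_
    rw [hηe, ← hΩ, hy]
    calc 2 * (C * (ε / (4 * C * (Ω+1)))) * Ω = (ε/2) * (Ω/(Ω+1)) := by field_simp; norm_num
      _ ≤ (ε/2) * 1 := by
        gcongr
        rw [div_le_one (by positivity)]; linarith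
      _ = _ := mul_one _
  have c1 := cmp n t ξ hT (href n t hT.1
    (fun i => Finset.mem_union_left _ (himg n t ξ hT i)) hT.2.1 (hT.2.2.1 n le_rfl))
  have c2 := cmp n' t' ξ' hT' (href n' t' hT'.1
    (fun i => Finset.mem_union_right _ (himg n' t' ξ' hT' i)) hT'.2.1 (hT'.2.2.1 n' le_rfl))
  rw [abs_le] at *
  constructor <;> linarith [c1.1, c1.2, c2.1, c2.2]

lemma ly_unif_part (a b : ℝ) (hab : a < b) (N : ℕ) (δ : ℝ) (hδ : (b-a)/((N:ℝ)+1) < δ) :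
    LyTP a b (N+1) (fun i => a + (b-a) * ((min i (N+1) : ℕ):ℝ) / ((N:ℝ)+1))
      (fun i => a + (b-a) * ((min i (N+1) : ℕ):ℝ) / ((N:ℝ)+1)) δ := by
  have hN : (0:ℝ) < (N:ℝ)+1 := by positivity
  have hba : 0 < b - a := by linarith
  have hmono : Monotone (fun i : ℕ => a + (b-a) * ((min i (N+1) : ℕ):ℝ) / ((N:ℝ)+1)) := by
    intro i j hij
    have : ((min i (N+1) : ℕ):ℝ) ≤ ((min j (N+1) : ℕ):ℝ) := by
      exact_mod_cast (by omega : min i (N+1) ≤ min j (N+1))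
    simp only
    gcongr
  refine ⟨hmono, by simp, ?_, ?_, ?_⟩
  · intro i hi
    simp only
    rw [min_eq_right hi]
    push_cast
    field_simp
    ring
  · intro i hi
    exact ⟨le_rfl, hmono (Nat.le_succ i)⟩
  · intro i hi
    simp only
    rw [min_eq_left (by omega), min_eq_left (by omega)]
    push_cast
    refine lt_of_eq_of_lt ?_ hδ
    field_simp
    ring

/-- Remark 4: symmetric version of the improved Loéve–Young inequality. -/
theorem improved_loeve_young'
    (p q : ℝ) (hp : 1 < p) (hq : 1 < q) (hpq : 1 / p + 1 / q > 1) :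
    ∃ C : ℝ, 0 < C ∧ ∀ (a b : ℝ), a < b → ∀ f g : ℝ → ℝ,
      NoCommonDiscont f g a b → pVar f p a b < ⊤ → pVar g q a b < ⊤ →
      ∃ I : ℝ, RSIntegral f g a b I ∧
        |I - f a * (g b - g a)| ≤
          C * pVarNorm f p a b * pVarNorm g q a b ^ (q - q / p) *
            oscNorm g a b ^ (1 + q / p - q) := by
  obtain ⟨C, hC, hmain⟩ := ly_main_bound p q hp hq hpq
  refine ⟨C, hC, ?_⟩
  intro a b hab f g h hf hg
  set K := C * pVarNorm f p a b * pVarNorm g q a b ^ (q - q / p) *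
            oscNorm g a b ^ (1 + q / p - q) with hK
  let T : ℕ → ℕ → ℝ := fun N i => a + (b-a) * ((min i (N+1) : ℕ):ℝ) / ((N:ℝ)+1)
  let S : ℕ → ℝ := fun N => ∑ i ∈ Finset.range (N+1), f (T N i) * (g (T N (i+1)) - g (T N i))
  have hT : ∀ δ > 0, ∃ N0 : ℕ, ∀ N ≥ N0, LyTP a b (N+1) (T N) (T N) δ := by
    intro δ hδ
    obtain ⟨N0, hN0⟩ := exists_nat_gt ((b-a)/δ)
    refine ⟨N0, fun N hN => ly_unif_part a b hab N δ ?_⟩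
    rw [div_lt_iff₀ hδ] at hN0
    rw [div_lt_iff₀ (by positivity)]
    have : (N0:ℝ) ≤ N := by exact_mod_cast hN
    nlinarith
  have hS : CauchySeq S := by
    rw [Metric.cauchySeq_iff']
    intro ε hε
    obtain ⟨δ, hδ, H⟩ := ly_cauchy p q hp hq hpq a b f g h hf hg (ε/2) (by positivity)
    obtain ⟨N0, hN0⟩ := hT δ hδ
    refine ⟨N0, fun N hN => ?_⟩
    rw [Real.dist_eq]
    have := H _ _ _ _ _ _ (hN0 N hN) (hN0 N0 le_rfl)
    exact this.trans_lt (by linarith)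
  obtain ⟨I, hI⟩ := cauchySeq_tendsto_of_complete hS
  refine ⟨I, ?_, ?_⟩
  · intro ε hε
    obtain ⟨δ, hδ, H⟩ := ly_cauchy p q hp hq hpq a b f g h hf hg (ε/2) (by positivity)
    obtain ⟨N0, hN0⟩ := hT δ hδ
    refine ⟨δ, hδ, ?_⟩
    intro n t ξ ht h0 hn hξ hmesh
    have hTP : LyTP a b n (fun i => t ⟨min i n, by omega⟩)
        (fun i => if hi : i < n then ξ ⟨i, hi⟩ else b) δ := by
      have e1 : ∀ i (hi : i < n), (⟨min (i+1) n, by omega⟩ : Fin (n+1)) = Fin.succ ⟨i, hi⟩ := by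
        intro i hi; ext; simp; omega
      have e2 : ∀ i (hi : i < n), (⟨min i n, by omega⟩ : Fin (n+1)) = Fin.castSucc ⟨i, hi⟩ := by
        intro i hi; ext; simp; omega
      refine ⟨?_, ?_, ?_, ?_, ?_⟩
      · intro i j hij
        apply ht.monotone
        rw [Fin.mk_le_mk]; omega
      · rw [← h0]; congr 1
      · intro i hi
        have e3 : (⟨min i n, by omega⟩ : Fin (n+1)) = Fin.last n := by
          apply Fin.ext; simp; omega
        simp only
        rw [← hn, e3]
      · intro i hi
        simp only [dif_pos hi]
        rw [e1 i hi, e2 i hi]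
        exact hξ ⟨i, hi⟩
      · intro i hi
        simp only
        rw [e1 i hi, e2 i hi]
        exact hmesh ⟨i, hi⟩
    have hsum : ∑ i : Fin n, f (ξ i) * (g (t i.succ) - g (t i.castSucc)) =
        ∑ i ∈ Finset.range n, f (if hi : i < n then ξ ⟨i, hi⟩ else b) *
          (g (t ⟨min (i+1) n, by omega⟩) - g (t ⟨min i n, by omega⟩)) := by
      rw [← Fin.sum_univ_eq_sum_range (fun i => f (if hi : i < n then ξ ⟨i, hi⟩ else b) *
          (g (t ⟨min (i+1) n, by omega⟩) - g (t ⟨min i n, by omega⟩)))]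
      apply Finset.sum_congr rfl
      intro i _
      have e1 : (⟨min (i.val+1) n, by omega⟩ : Fin (n+1)) = i.succ := by
        ext; simp
      have e2 : (⟨min (i.val) n, by omega⟩ : Fin (n+1)) = i.castSucc := by
        ext; simp
      rw [e1, e2, dif_pos i.2]
    rw [hsum]
    have lim := (hI.const_sub (∑ i ∈ Finset.range n, f (if hi : i < n then ξ ⟨i, hi⟩ else b) *
          (g (t ⟨min (i+1) n, by omega⟩) - g (t ⟨min i n, by omega⟩)))).abs
    have := le_of_tendsto lim (Filter.eventually_atTop.2 ⟨N0, fun N hN =>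
      H _ _ _ _ _ _ hTP (hN0 N hN)⟩)
    linarith
  · have lim := (hI.sub_const (f a * (g b - g a))).abs
    refine le_of_tendsto lim (Filter.Eventually.of_forall fun N => ?_)
    obtain ⟨h1, h2, h3, -, -⟩ := ly_unif_part a b hab N ((b-a)/((N:ℝ)+1) + 1) (by linarith)
    have hm : ∀ i, T N i ∈ Set.Icc a b := by
      intro i
      refine ⟨?_, ?_⟩
      · have := h1 (Nat.zero_le i)
        rw [h2] at this
        exact this
      · have := h1 (le_max_left i (N+1))
        rw [h3 _ (le_max_right _ _)] at this
        exact this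
    have := hmain a b f g hf hg (N+1) (fun i => T N (i-1)) (T N) (by
      intro i j hij
      apply h1; omega) h1 (fun i => hm _) hm
    refine le_of_eq_of_le ?_ this
    congr 1
    have e0 : T N 0 = a := h2
    have e1 : T N (N+1) = b := h3 _ le_rfl
    simp only [Nat.add_sub_cancel, Nat.zero_sub, e0, sub_mul]
    rw [Finset.sum_sub_distrib, ← Finset.mul_sum, Finset.sum_range_sub (fun i => g (T N i)), e0, e1]
end

section
/- For all p > 1 and q > 1 with 1/p + 1/q > 1, there exists a constant C_{p,q} > 0, depending only on p and q, such that: for every a < b, all functions f, g : [a;b] → ℝ with no common points of discontinuity, with f of finite p-variation and g of finite q-variation on [a;b], and every ξ ∈ [a;b], one has |∫_a^b f dg − f(ξ)·(g(b) − g(a))| ≤ 2·C_{p,q} · ‖f‖_{p-var,[a;b]} · ‖g‖_{q-var,[a;b]} · min{ ‖f‖_{osc,[a;b]}^{1 + p/q − p} / ‖f‖_{p-var,[a;b]}^{1 + p/q − p} , ‖g‖_{osc,[a;b]}^{1 + q/p − q} / ‖g‖_{q-var,[a;b]}^{1 + q/p − q} }, where ∫_a^b f dg denotes the Riemann–Stieltjes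 integral (which exists under these hypotheses). -/
open Filter Set

lemma yl_fact1 (α : ℝ) (h0 : 0 < α) (h1 : α < 1) (N : ℕ) :
    ((N:ℝ)+1) ^ (-α) ≤ (((N:ℝ)+1) ^ (1-α) - (N:ℝ) ^ (1-α)) / (1-α) := by
  have hk : (0:ℝ) < (N:ℝ)+1 := by positivity
  rw [le_div_iff₀ (by linarith)]
  have e1 : ((N:ℝ)+1) ^ (1-α) = ((N:ℝ)+1) ^ (-α) * ((N:ℝ)+1) := by
    rw [show 1-α = -α + 1 by ring, Real.rpow_add hk, Real.rpow_one]
  have e2 : (N:ℝ) = ((N:ℝ)+1) * (1 + -(1/((N:ℝ)+1))) := by field_simp; ring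
  have hb : -1 ≤ -(1/((N:ℝ)+1)) := by
    rw [neg_le_neg_iff, div_le_one hk]; linarith [(Nat.cast_nonneg N : (0:ℝ) ≤ N)]
  have e3 : (N:ℝ) ^ (1-α) ≤ ((N:ℝ)+1) ^ (1-α) * (1 + (1-α) * (-(1/((N:ℝ)+1)))) := by
    conv_lhs => rw [e2]
    rw [Real.mul_rpow hk.le (by linarith)]
    gcongr
    exact rpow_one_add_le_one_add_mul_self hb (by linarith) (by linarith)
  have e4 : ((N:ℝ)+1) ^ (1-α) * (1 + (1-α) * (-(1/((N:ℝ)+1)))) = ((N:ℝ)+1) ^ (1-α) - (1-α) * ((N:ℝ)+1) ^ (-α) := by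
    rw [e1]; field_simp; ring
  rw [e4] at e3
  linarith

lemma yl_fact2 (γ : ℝ) (h0 : 0 < γ) (N : ℕ) (hN : 1 ≤ N) :
    ((N:ℝ)+1) ^ (-γ-1) ≤ ((N:ℝ) ^ (-γ) - ((N:ℝ)+1) ^ (-γ)) / γ := by
  have hk : (0:ℝ) < (N:ℝ)+1 := by positivity
  have hN' : (0:ℝ) < N := by exact_mod_cast hN
  rw [le_div_iff₀ h0]
  have e1 : ((N:ℝ)+1) ^ (-γ-1) = ((N:ℝ)+1) ^ (-γ) / ((N:ℝ)+1) := by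
    rw [Real.rpow_sub hk, Real.rpow_one]
  have hy : (N:ℝ) / (N+1) ≤ Real.exp (-(1/((N:ℝ)+1))) := by
    have := Real.add_one_le_exp (-(1/((N:ℝ)+1)))
    calc (N:ℝ) / (N+1) = -(1/((N:ℝ)+1)) + 1 := by field_simp; ring
      _ ≤ _ := this
  have e3 : 1 + γ / ((N:ℝ)+1) ≤ ((N:ℝ) / (N+1)) ^ (-γ) := by
    calc 1 + γ / ((N:ℝ)+1) ≤ Real.exp (γ / ((N:ℝ)+1)) := by
          linarith [Real.add_one_le_exp (γ / ((N:ℝ)+1))]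
      _ = (Real.exp (-(1/((N:ℝ)+1)))) ^ (-γ) := by
          rw [← Real.exp_mul]; congr 1; field_simp
      _ ≤ _ := Real.rpow_le_rpow_of_nonpos (by positivity) hy (by linarith)
  rw [Real.div_rpow hN'.le hk.le, le_div_iff₀ (by positivity)] at e3
  rw [e1]
  have : (1 + γ / ((N:ℝ)+1)) * ((N:ℝ)+1) ^ (-γ) = ((N:ℝ)+1) ^ (-γ) + ((N:ℝ)+1) ^ (-γ) / ((N:ℝ)+1) * γ := by
    field_simp
  linarith

lemma yl_sum (α ρ : ℝ) (h0 : 0 < α) (h1 : α < 1) (hρ : 1 < α + ρ) (T : ℝ) (hT : 1 ≤ T) (n : ℕ) :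
    ∑ k ∈ Finset.range n, min (((k:ℝ)+1) ^ (-α)) (T ^ ρ * ((k:ℝ)+1) ^ (-(α+ρ))) ≤
      (1/(1-α) + 1 + 1/(α+ρ-1)) * T ^ (1-α) := by
  have hTp : 0 < T := by linarith
  have A : ∀ N : ℕ, ∑ k ∈ Finset.range N, min (((k:ℝ)+1) ^ (-α)) (T ^ ρ * ((k:ℝ)+1) ^ (-(α+ρ))) ≤
      (N:ℝ) ^ (1-α) / (1-α) := by
    intro N
    induction N with
    | zero => simp; rw [Real.zero_rpow (by linarith)]; simp
    | succ N ih =>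
      rw [Finset.sum_range_succ]
      have := yl_fact1 α h0 h1 N
      rw [sub_div] at this
      push_cast
      linarith [min_le_left (((N:ℝ)+1) ^ (-α)) (T ^ ρ * ((N:ℝ)+1) ^ (-(α+ρ)))]
  set γ := α + ρ - 1 with hγ
  have hγ0 : 0 < γ := by linarith
  have B : ∀ N : ℕ, T ≤ N → ∑ k ∈ Finset.range N, min (((k:ℝ)+1) ^ (-α)) (T ^ ρ * ((k:ℝ)+1) ^ (-(α+ρ))) ≤
      (1/(1-α) + 1 + 1/γ) * T ^ (1-α) - T ^ ρ * (N:ℝ) ^ (-γ) / γ := by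
    intro N
    induction N with
    | zero => intro h; simp at h; linarith
    | succ N ih =>
      intro h
      rw [Finset.sum_range_succ]
      have hm := min_le_right (((N:ℝ)+1) ^ (-α)) (T ^ ρ * ((N:ℝ)+1) ^ (-(α+ρ)))
      push_cast at h ⊢
      by_cases hN : T ≤ N
      · have h1N : 1 ≤ N := by
          have : (1:ℝ) ≤ N := by linarith
          exact_mod_cast this
        have := yl_fact2 γ hγ0 N h1N
        have ih := ih hN
        have h2 : T ^ ρ * ((N:ℝ)+1) ^ (-(α+ρ)) ≤ T ^ ρ * (((N:ℝ) ^ (-γ) - ((N:ℝ)+1) ^ (-γ)) / γ) := by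
          rw [show -(α+ρ) = -γ-1 by rw [hγ]; ring]
          gcongr
        have h3 : T ^ ρ * (((N:ℝ) ^ (-γ) - ((N:ℝ)+1) ^ (-γ)) / γ) = T ^ ρ * (N:ℝ) ^ (-γ) / γ - T ^ ρ * ((N:ℝ)+1) ^ (-γ) / γ := by ring
        linarith
      · push Not at hN
        have hA := A N
        have h4 : (N:ℝ) ^ (1-α) / (1-α) ≤ 1/(1-α) * T ^ (1-α) := by
          rw [one_div, inv_mul_eq_div]
          have : 0 < 1 - α := by linarith
          gcongr
        have h5 : T ^ ρ * ((N:ℝ)+1) ^ (-(α+ρ)) ≤ T ^ (1-α) := by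
          calc T ^ ρ * ((N:ℝ)+1) ^ (-(α+ρ)) ≤ T ^ ρ * T ^ (-(α+ρ)) := by
                gcongr T ^ ρ * ?_
                exact Real.rpow_le_rpow_of_nonpos hTp h (by linarith)
            _ = T ^ (-α) := by rw [← Real.rpow_add hTp]; congr 1; ring
            _ ≤ _ := Real.rpow_le_rpow_of_exponent_le hT (by linarith)
        have h6 : T ^ ρ * ((N:ℝ)+1) ^ (-γ) / γ ≤ 1/γ * T ^ (1-α) := by
          rw [one_div, inv_mul_eq_div]
          gcongr
          calc T ^ ρ * ((N:ℝ)+1) ^ (-γ) ≤ T ^ ρ * T ^ (-γ) := by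
                gcongr T ^ ρ * ?_
                exact Real.rpow_le_rpow_of_nonpos hTp h (by linarith)
            _ = T ^ (1-α) := by rw [← Real.rpow_add hTp]; congr 1; rw [hγ]; ring
        linarith
  have hT0 : 0 ≤ T ^ (1-α) := by positivity
  by_cases hN : T ≤ n
  · have : 0 ≤ T ^ ρ * (n:ℝ) ^ (-γ) / γ := by positivity
    linarith [B n hN]
  · push Not at hN
    have h1a : 0 < 1 - α := by linarith
    calc _ ≤ (n:ℝ) ^ (1-α) / (1-α) := A n
      _ ≤ 1/(1-α) * T ^ (1-α) := by
          rw [one_div, inv_mul_eq_div]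
          gcongr
      _ ≤ _ := by
          gcongr
          have : 0 < 1/γ := by positivity
          linarith

/-- picking an index with small weighted sum -/
lemma yl_pick0 (Z : ℕ → ℝ) (k : ℕ) (hk : 1 ≤ k) (M : ℝ) (h : ∑ i ∈ Finset.range k, Z i ≤ M) :
    ∃ i < k, Z i ≤ M / k := by
  by_contra hc
  push Not at hc
  have hk' : (0:ℝ) < k := by exact_mod_cast hk
  have : ∑ i ∈ Finset.range k, M / k < ∑ i ∈ Finset.range k, Z i :=
    Finset.sum_lt_sum_of_nonempty (by simp; omega) (fun i hi => hc i (Finset.mem_range.1 hi))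
  rw [Finset.sum_const, Finset.card_range, nsmul_eq_mul, mul_div_cancel₀ _ hk'.ne'] at this
  linarith

lemma yl_pick_b (q : ℝ) (hq : 0 < q) (X Y : ℕ → ℝ) (hX : ∀ i, 0 ≤ X i) (hY : ∀ i, 0 ≤ Y i)
    (O W : ℝ) (hXO : ∀ i, X i ≤ O) (hW : 0 ≤ W)
    (k : ℕ) (hk : 1 ≤ k) (h : ∑ i ∈ Finset.range k, Y i ^ q ≤ W) :
    ∃ i < k, X i * Y i ≤ O * W ^ (1/q) * (k:ℝ) ^ (-(1/q)) := by
  obtain ⟨i, hi, h1⟩ := yl_pick0 _ k hk W h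
  refine ⟨i, hi, ?_⟩
  have hk' : (0:ℝ) < k := by exact_mod_cast hk
  have h2 : Y i ≤ (W / k) ^ (1/q) := by
    rw [one_div, Real.le_rpow_inv_iff_of_pos (hY i) (by positivity) hq]; exact h1
  rw [Real.div_rpow hW hk'.le] at h2
  rw [mul_assoc, Real.rpow_neg hk'.le, ← div_eq_mul_inv]
  exact mul_le_mul (hXO i) h2 (hY i) ((hX i).trans (hXO i))

lemma yl_pick_a (p q : ℝ) (hp : 0 < p) (hq : 0 < q) (X Y : ℕ → ℝ) (hX : ∀ i, 0 ≤ X i) (hY : ∀ i, 0 ≤ Y i)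
    (V W : ℝ) (hV : 0 < V) (hW : 0 < W)
    (k : ℕ) (hk : 1 ≤ k) (h' : ∑ i ∈ Finset.range k, X i ^ p ≤ V) (h : ∑ i ∈ Finset.range k, Y i ^ q ≤ W) :
    ∃ i < k, X i * Y i ≤ V ^ (1/p) * W ^ (1/q) * (k:ℝ) ^ (-(1/q+1/p)) := by
  have hk' : (0:ℝ) < k := by exact_mod_cast hk
  set r := 1/q + 1/p with hr
  have hr0 : 0 < r := by positivity
  have hw : 1/(p*r) + 1/(q*r) = 1 := by
    rw [hr]; field_simp; ring
  obtain ⟨i, hi, h1⟩ := yl_pick0 (fun i => 1/(p*r) * (X i ^ p / V) + 1/(q*r) * (Y i ^ q / W)) k hk 1 (by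
    rw [Finset.sum_add_distrib, ← Finset.mul_sum, ← Finset.mul_sum, ← Finset.sum_div, ← Finset.sum_div]
    have a1 := (div_le_one hV).2 h'
    have a2 := (div_le_one hW).2 h
    calc _ ≤ 1/(p*r) * 1 + 1/(q*r) * 1 := by gcongr
      _ = 1 := by linarith)
  refine ⟨i, hi, ?_⟩
  have hXi := hX i
  have hYi := hY i
  have h2 := Real.geom_mean_le_arith_mean2_weighted (w₁ := 1/(p*r)) (w₂ := 1/(q*r)) (p₁ := X i ^ p / V) (p₂ := Y i ^ q / W)
    (by positivity) (by positivity) (by positivity) (by positivity) hw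
  have h3 := Real.rpow_le_rpow (by positivity) (h2.trans h1) hr0.le
  rw [Real.mul_rpow (by positivity) (by positivity), ← Real.rpow_mul (by positivity), ← Real.rpow_mul (by positivity),
    show 1/(p*r)*r = 1/p by field_simp, show 1/(q*r)*r = 1/q by field_simp,
    Real.div_rpow (by positivity) hV.le, Real.div_rpow (by positivity) hW.le, ← Real.rpow_mul hXi, ← Real.rpow_mul hYi,
    mul_one_div_cancel hp.ne', mul_one_div_cancel hq.ne', Real.rpow_one, Real.rpow_one, one_div (k:ℝ), Real.inv_rpow hk'.le,
    ← Real.rpow_neg hk'.le, div_mul_div_comm, div_le_iff₀ (by positivity)] at h3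
  linarith

lemma yl_pick (p q : ℝ) (hp : 0 < p) (hq : 0 < q) (X Y : ℕ → ℝ) (hX : ∀ i, 0 ≤ X i) (hY : ∀ i, 0 ≤ Y i)
    (V W O : ℝ) (hO : 0 < O) (hOV : O ^ p ≤ V) (hW : 0 ≤ W) (hXO : ∀ i, X i ≤ O)
    (k : ℕ) (hk : 1 ≤ k) (h' : ∑ i ∈ Finset.range k, X i ^ p ≤ V) (h : ∑ i ∈ Finset.range k, Y i ^ q ≤ W) :
    ∃ i < k, X i * Y i ≤ O * W ^ (1/q) * min ((k:ℝ) ^ (-(1/q))) ((V / O^p) ^ (1/p) * (k:ℝ) ^ (-(1/q+1/p))) := by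
  have hV : 0 < V := lt_of_lt_of_le (by positivity) hOV
  rcases hW.eq_or_lt with hW0 | hW0
  · obtain ⟨i, hi, h1⟩ := yl_pick_b q hq X Y hX hY O W hXO hW k hk h
    refine ⟨i, hi, ?_⟩
    rw [← hW0, Real.zero_rpow (by positivity)] at h1 ⊢
    simpa using h1
  rcases le_total ((k:ℝ) ^ (-(1/q))) ((V / O^p) ^ (1/p) * (k:ℝ) ^ (-(1/q+1/p))) with hc | hc
  · rw [min_eq_left hc]
    exact yl_pick_b q hq X Y hX hY O W hXO hW k hk h
  · rw [min_eq_right hc]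
    obtain ⟨i, hi, h1⟩ := yl_pick_a p q hp hq X Y hX hY V W hV hW0 k hk h' h
    refine ⟨i, hi, h1.trans (le_of_eq ?_)⟩
    rw [Real.div_rpow hV.le (by positivity), ← Real.rpow_mul hO.le, mul_one_div_cancel hp.ne', Real.rpow_one]
    field_simp

/-- discrete Young -/
lemma yl_disc (f g : ℝ → ℝ) (u v : ℝ) (c : ℕ → ℝ)
    (H : ∀ k : ℕ, 1 ≤ k → ∀ x : ℕ → ℝ, Monotone x → (∀ i, x i ∈ Icc u v) →
      ∃ i < k, |f (x (i+1)) - f (x i)| * |g (x (i+2)) - g (x (i+1))| ≤ c k) (n : ℕ) :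
    ∀ x : ℕ → ℝ, Monotone x → (∀ i, x i ∈ Icc u v) →
      |∑ i ∈ Finset.range (n+1), f (x i) * (g (x (i+1)) - g (x i)) - f (x 0) * (g (x (n+1)) - g (x 0))|
        ≤ ∑ k ∈ Finset.range n, c (k+1) := by
  induction n with
  | zero => intro x _ _; simp
  | succ n ih =>
    intro x hx hxI
    obtain ⟨j, hj, hc⟩ := H (n+1) (by omega) x hx hxI
    set φ : ℕ → ℕ := fun k => if k ≤ j then k else k+1 with hφ
    have hφm : Monotone φ := by
      intro a b hab
      simp only [hφ]
      split_ifs <;> omega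
    have h1 := ih (x ∘ φ) (hx.comp hφm) (fun i => hxI _)
    obtain ⟨r, rfl⟩ : ∃ r, n = j + r := ⟨n - j, by omega⟩
    have e0 : φ 0 = 0 := by simp [hφ]
    have en : φ (j+r+1) = j+r+2 := by simp only [hφ]; split_ifs <;> omega
    have ej : φ j = j := by simp [hφ]
    have ej1 : φ (j+1) = j+2 := by simp [hφ]
    have key : ∑ i ∈ Finset.range (j+r+1+1), f (x i) * (g (x (i+1)) - g (x i)) =
        ∑ i ∈ Finset.range (j+r+1), f ((x ∘ φ) i) * (g ((x ∘ φ) (i+1)) - g ((x ∘ φ) i)) +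
          (f (x (j+1)) - f (x j)) * (g (x (j+2)) - g (x (j+1))) := by
      rw [show j+r+1+1 = j + (2+r) by ring, show j+r+1 = j+(1+r) by ring, Finset.sum_range_add, Finset.sum_range_add,
        Finset.sum_range_add, Finset.sum_range_add]
      have s1 : ∑ i ∈ Finset.range j, f ((x ∘ φ) i) * (g ((x ∘ φ) (i+1)) - g ((x ∘ φ) i)) =
          ∑ i ∈ Finset.range j, f (x i) * (g (x (i+1)) - g (x i)) := by
        apply Finset.sum_congr rfl
        intro i hi
        have hi := Finset.mem_range.1 hi
        have a1 : φ i = i := by simp [hφ]; omega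
        have a2 : φ (i+1) = i+1 := by simp [hφ]; omega
        simp [a1, a2]
      have s2 : ∑ i ∈ Finset.range r, f ((x ∘ φ) (j+(1+i))) * (g ((x ∘ φ) (j+(1+i)+1)) - g ((x ∘ φ) (j+(1+i)))) =
          ∑ i ∈ Finset.range r, f (x (j+(2+i))) * (g (x (j+(2+i)+1)) - g (x (j+(2+i)))) := by
        apply Finset.sum_congr rfl
        intro i hi
        have a1 : φ (j+(1+i)) = j+(2+i) := by simp [hφ]; omega
        have a2 : φ (j+(1+i)+1) = j+(2+i)+1 := by simp [hφ]; omega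
        simp only [Function.comp, a1, a2]
      rw [s1, s2]
      simp [Finset.sum_range_succ, ej, ej1]
      ring
    rw [key, Finset.sum_range_succ (fun k => c (k+1))]
    simp only [Function.comp, e0, en] at h1 ⊢
    rw [← abs_mul] at hc
    have := abs_add_le (∑ i ∈ Finset.range (j+r+1), f ((x (φ i))) * (g ((x (φ (i+1)))) - g ((x (φ i)))) - f (x 0) * (g (x (j+r+2)) - g (x 0))) ((f (x (j+1)) - f (x j)) * (g (x (j+2)) - g (x (j+1))))
    rw [show j+r+1+1 = j+r+2 by ring]
    rw [add_sub_right_comm]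
    linarith

def ylS (f : ℝ → ℝ) (p u v : ℝ) : Set ℝ :=
  {r | ∃ (x : ℕ → ℝ) (m : ℕ), Monotone x ∧ (∀ i, x i ∈ Icc u v) ∧
    r = ∑ i ∈ Finset.range m, |f (x (i+1)) - f (x i)| ^ p}

lemma ylS_two (f : ℝ → ℝ) (p u v : ℝ) (V : ℝ) (hV : ∀ r ∈ ylS f p u v, r ≤ V)
    (y z : ℝ) (hy : y ∈ Icc u v) (hz : z ∈ Icc u v) : |f y - f z| ^ p ≤ V := by
  wlog hyz : y ≤ z generalizing y z
  · rw [abs_sub_comm]; exact this z y hz hy (le_of_not_ge hyz)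
  apply hV
  refine ⟨fun i => if i = 0 then y else z, 1, ?_, ?_, ?_⟩
  · intro a b hab
    dsimp only
    split_ifs
    · exact le_rfl
    · exact hyz
    · omega
    · exact le_rfl
  · intro i; dsimp only; split_ifs <;> assumption
  · simp [abs_sub_comm]

lemma yl_alg (p q O V W : ℝ) (hO : 0 < O) (hV : 0 ≤ V) :
    O * W ^ (1/q) * (V / O^p) ^ (1-1/q) = O ^ (1 + p/q - p) * V ^ (1-1/q) * W ^ (1/q) := by
  rw [Real.div_rpow hV (by positivity), ← Real.rpow_mul hO.le,
    show 1 + p/q - p = 1 - p * (1-1/q) by ring, Real.rpow_sub hO, Real.rpow_one]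
  ring

noncomputable def ylC (p q : ℝ) : ℝ := 1/(1-1/q) + 1 + 1/(1/q+1/p-1)

lemma ylC_pos (p q : ℝ) (hq : 1 < q) (hpq : 1 < 1/q + 1/p) : 0 < ylC p q := by
  have : 1/q < 1 := by rw [div_lt_one (by linarith)]; exact hq
  have h1 : 0 < 1 - 1/q := by linarith
  have h2 : 0 < 1/q+1/p-1 := by linarith
  unfold ylC; positivity

lemma yl_const (f g : ℝ → ℝ) (ξ : ℝ) (x : ℕ → ℝ) (n : ℕ) (h : ∀ i, f (x i) = f ξ) :
    ∑ i ∈ Finset.range (n+1), f (x i) * (g (x (i+1)) - g (x i)) - f ξ * (g (x (n+1)) - g (x 0)) = 0 := by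
  simp only [h]
  rw [← Finset.mul_sum, Finset.sum_range_sub (fun i => g (x i))]; ring

lemma yl_const' (f g : ℝ → ℝ) (ξ : ℝ) (x : ℕ → ℝ) (n : ℕ) (h : ∀ i, g (x i) = g (x 0)) :
    ∑ i ∈ Finset.range (n+1), f (x i) * (g (x (i+1)) - g (x i)) - f ξ * (g (x (n+1)) - g (x 0)) = 0 := by
  rw [h (n+1)]
  simp [h]

lemma yl_mono_pow (p q O V : ℝ) (hq : 1 < q) (hO : 0 < O) (hOV : O ^ p ≤ V) : 1 ≤ (V / O^p) ^ (1-1/q) := by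
  have : 1/q < 1 := by rw [div_lt_one (by linarith)]; exact hq
  apply Real.one_le_rpow _ (by linarith)
  rw [le_div_iff₀ (by positivity)]; linarith

lemma yl_triangle (f g : ℝ → ℝ) (S ξ y z w B B' : ℝ) (h1 : |S - f y * (g z - g w)| ≤ B)
    (h2 : |f y - f ξ| * |g z - g w| ≤ B') : |S - f ξ * (g z - g w)| ≤ B + B' := by
  rw [← abs_mul] at h2
  have := abs_add_le (S - f y * (g z - g w)) ((f y - f ξ) * (g z - g w))
  rw [show S - f y * (g z - g w) + (f y - f ξ) * (g z - g w) = S - f ξ * (g z - g w) by ring] at this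
  linarith

lemma yl_root (q Y W : ℝ) (hq : 0 < q) (hY : 0 ≤ Y) (h : Y ^ q ≤ W) : Y ≤ W ^ (1/q) := by
  rw [one_div, Real.le_rpow_inv_iff_of_pos hY ((by positivity : 0 ≤ Y ^ q).trans h) hq]; exact h

lemma yl_coreA (p q : ℝ) (hp : 1 < p) (hq : 1 < q) (hpq : 1 < 1/q + 1/p) (f g : ℝ → ℝ) (u v V W O : ℝ)
    (hO : 0 ≤ O) (hOV : O ^ p ≤ V) (hosc : ∀ y ∈ Icc u v, ∀ z ∈ Icc u v, |f y - f z| ≤ O)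
    (hV : ∀ r ∈ ylS f p u v, r ≤ V) (hW : ∀ r ∈ ylS g q u v, r ≤ W) (x : ℕ → ℝ) (hx : Monotone x)
    (hxI : ∀ i, x i ∈ Icc u v) (ξ : ℝ) (hξ : ξ ∈ Icc u v) (n : ℕ) :
    |∑ i ∈ Finset.range (n+1), f (x i) * (g (x (i+1)) - g (x i)) - f ξ * (g (x (n+1)) - g (x 0))|
      ≤ (ylC p q + 1) * (O ^ (1 + p/q - p) * V ^ (1-1/q) * W ^ (1/q)) := by
  have hp0 : 0 < p := by linarith
  have hq0 : 0 < q := by linarith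
  have hV0 : 0 ≤ V := (by positivity : 0 ≤ O ^ p).trans hOV
  have hW0 : 0 ≤ W := (by positivity : 0 ≤ |g ξ - g ξ| ^ q).trans (ylS_two g q u v W hW ξ ξ hξ hξ)
  have hCp := ylC_pos p q hq hpq
  rcases hO.eq_or_lt with h0 | h0
  · have : ∀ i, f (x i) = f ξ := by
      intro i
      have := hosc _ (hxI i) _ hξ
      rw [← h0] at this
      have := abs_nonpos_iff.1 this
      linarith
    rw [yl_const f g ξ x n this]
    rw [abs_zero]; positivity
  have hq1 : 1/q < 1 := by rw [div_lt_one (by linarith)]; exact hq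
  rw [← yl_alg p q O V W h0 hV0, add_mul]
  apply yl_triangle f g _ ξ (x 0)
  · refine (yl_disc f g u v (fun k => O * W ^ (1/q) * min ((k:ℝ) ^ (-(1/q))) ((V / O^p) ^ (1/p) * (k:ℝ) ^ (-(1/q+1/p)))) ?_ n x hx hxI).trans ?_
    · intro k hk x hx hxI
      refine yl_pick p q hp0 hq0 (fun i => |f (x (i+1)) - f (x i)|) (fun i => |g (x (i+2)) - g (x (i+1))|)
        (fun i => abs_nonneg _) (fun i => abs_nonneg _) V W O h0 hOV hW0 (fun i => hosc _ (hxI _) _ (hxI _)) k hk ?_ ?_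
      · exact hV _ ⟨x, k, hx, hxI, rfl⟩
      · exact hW _ ⟨fun i => x (i+1), k, fun a b hab => hx (by omega), fun i => hxI _, rfl⟩
    · rw [← Finset.mul_sum]
      have := yl_sum (1/q) (1/p) (by positivity) hq1 hpq (V/O^p) (by rw [le_div_iff₀ (by positivity)]; linarith) n
      push_cast
      calc _ ≤ O * W ^ (1/q) * ((1/(1-1/q) + 1 + 1/(1/q+1/p-1)) * (V / O^p) ^ (1-1/q)) := by gcongr
        _ = _ := by unfold ylC; ring
  · have h1 := hosc _ (hxI 0) _ hξ
    have h2 := yl_root q _ W hq0 (abs_nonneg _) (ylS_two g q u v W hW _ _ (hxI (n+1)) (hxI 0))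
    have h3 := yl_mono_pow p q O V hq h0 hOV
    calc _ ≤ O * W ^ (1/q) := by gcongr
      _ ≤ O * W ^ (1/q) * (V / O^p) ^ (1-1/q) := le_mul_of_one_le_right (by positivity) h3
      _ = _ := by ring

lemma yl_coreB (p q : ℝ) (hp : 1 < p) (hq : 1 < q) (hpq : 1 < 1/q + 1/p) (f g : ℝ → ℝ) (u v V W O : ℝ)
    (hO : 0 ≤ O) (hOV : O ^ q ≤ W) (hosc : ∀ y ∈ Icc u v, ∀ z ∈ Icc u v, |g y - g z| ≤ O)
    (hV : ∀ r ∈ ylS f p u v, r ≤ V) (hW : ∀ r ∈ ylS g q u v, r ≤ W) (x : ℕ → ℝ) (hx : Monotone x)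
    (hxI : ∀ i, x i ∈ Icc u v) (ξ : ℝ) (hξ : ξ ∈ Icc u v) (n : ℕ) :
    |∑ i ∈ Finset.range (n+1), f (x i) * (g (x (i+1)) - g (x i)) - f ξ * (g (x (n+1)) - g (x 0))|
      ≤ (ylC q p + 1) * (O ^ (1 + q/p - q) * W ^ (1-1/p) * V ^ (1/p)) := by
  have hp0 : 0 < p := by linarith
  have hq0 : 0 < q := by linarith
  have hW0 : 0 ≤ W := (by positivity : 0 ≤ O ^ q).trans hOV
  have hV0 : 0 ≤ V := (by positivity : 0 ≤ |f ξ - f ξ| ^ p).trans (ylS_two f p u v V hV ξ ξ hξ hξ)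
  have hCp := ylC_pos q p hp (by linarith)
  rcases hO.eq_or_lt with h0 | h0
  · have : ∀ i, g (x i) = g (x 0) := by
      intro i
      have := hosc _ (hxI i) _ (hxI 0)
      rw [← h0] at this
      have := abs_nonpos_iff.1 this
      linarith
    rw [yl_const' f g ξ x n this]
    rw [abs_zero]; positivity
  have hq1 : 1/p < 1 := by rw [div_lt_one (by linarith)]; exact hp
  rw [← yl_alg q p O W V h0 hW0, add_mul]
  apply yl_triangle f g _ ξ (x 0)
  · refine (yl_disc f g u v (fun k => O * V ^ (1/p) * min ((k:ℝ) ^ (-(1/p))) ((W / O^q) ^ (1/q) * (k:ℝ) ^ (-(1/p+1/q)))) ?_ n x hx hxI).trans ?_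
    · intro k hk x hx hxI
      obtain ⟨i, hi, h⟩ := yl_pick q p hq0 hp0 (fun i => |g (x (i+2)) - g (x (i+1))|) (fun i => |f (x (i+1)) - f (x i)|)
        (fun i => abs_nonneg _) (fun i => abs_nonneg _) W V O h0 hOV hV0 (fun i => hosc _ (hxI _) _ (hxI _)) k hk 
        (hW _ ⟨fun i => x (i+1), k, fun a b hab => hx (by omega), fun i => hxI _, rfl⟩)
        (hV _ ⟨x, k, hx, hxI, rfl⟩)
      exact ⟨i, hi, by rw [mul_comm]; exact h⟩
    · rw [← Finset.mul_sum]
      have := yl_sum (1/p) (1/q) (by positivity) hq1 (by linarith) (W/O^q) (by rw [le_div_iff₀ (by positivity)]; linarith) n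
      push_cast
      calc _ ≤ O * V ^ (1/p) * ((1/(1-1/p) + 1 + 1/(1/p+1/q-1)) * (W / O^q) ^ (1-1/p)) := by gcongr
        _ = _ := by unfold ylC; ring
  · have h1 := hosc _ (hxI (n+1)) _ (hxI 0)
    have h2 := yl_root p _ V hp0 (abs_nonneg _) (ylS_two f p u v V hV _ _ (hxI 0) hξ)
    have h3 := yl_mono_pow q p O W hp h0 hOV
    calc _ ≤ V ^ (1/p) * O := by gcongr
      _ = O * V ^ (1/p) := by ring
      _ ≤ O * V ^ (1/p) * (W / O^q) ^ (1-1/p) := le_mul_of_one_le_right (by positivity) h3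
      _ = _ := by ring

noncomputable def ylω (f : ℝ → ℝ) (p u v : ℝ) : ℝ := sSup (ylS f p u v)

lemma ylS_nonneg (f : ℝ → ℝ) (p u v : ℝ) : ∀ r ∈ ylS f p u v, 0 ≤ r := by
  rintro r ⟨x, m, _, _, rfl⟩
  positivity

lemma ylS_nonempty (f : ℝ → ℝ) (p u v : ℝ) (h : u ≤ v) : (ylS f p u v).Nonempty :=
  ⟨_, fun _ => u, 0, monotone_const, fun _ => ⟨le_rfl, h⟩, rfl⟩

lemma ylS_mono (f : ℝ → ℝ) (p u v a b : ℝ) (h1 : a ≤ u) (h2 : v ≤ b) : ylS f p u v ⊆ ylS f p a b := by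
  rintro r ⟨x, m, hx, hI, rfl⟩
  exact ⟨x, m, hx, fun i => ⟨h1.trans (hI i).1, (hI i).2.trans h2⟩, rfl⟩

lemma ylω_nonneg (f : ℝ → ℝ) (p u v : ℝ) : 0 ≤ ylω f p u v := Real.sSup_nonneg (ylS_nonneg f p u v)

lemma ylS_add (f : ℝ → ℝ) (p u w v : ℝ) (huw : u ≤ w) (hwv : w ≤ v) (r s : ℝ) (hr : r ∈ ylS f p u w)
    (hs : s ∈ ylS f p w v) : ∃ z ∈ ylS f p u v, r + s ≤ z := by
  obtain ⟨x, m, hx, hxI, rfl⟩ := hr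
  obtain ⟨y, k, hy, hyI, rfl⟩ := hs
  let z : ℕ → ℝ := fun i => if i ≤ m then x i else y (i - (m+1))
  refine ⟨_, ⟨z, m + (1 + k), ?_, ?_, rfl⟩, ?_⟩
  · intro i j hij
    dsimp only [z]
    split_ifs
    · exact hx hij
    · exact (hxI _).2.trans (hyI _).1
    · omega
    · exact hy (by omega)
  · intro i
    dsimp only [z]
    split_ifs
    · exact ⟨(hxI i).1, (hxI i).2.trans hwv⟩
    · exact ⟨huw.trans (hyI _).1, (hyI _).2⟩
  · rw [Finset.sum_range_add, Finset.sum_range_add]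
    have s1 : ∑ i ∈ Finset.range m, |f (z (i+1)) - f (z i)| ^ p = ∑ i ∈ Finset.range m, |f (x (i+1)) - f (x i)| ^ p := by
      apply Finset.sum_congr rfl
      intro i hi
      have hi := Finset.mem_range.1 hi
      have a1 : z i = x i := by dsimp only [z]; rw [if_pos (by omega)]
      have a2 : z (i+1) = x (i+1) := by dsimp only [z]; rw [if_pos (by omega)]
      rw [a1, a2]
    have s2 : ∑ i ∈ Finset.range k, |f (z (m + (1+i)+1)) - f (z (m + (1+i)))| ^ p = ∑ i ∈ Finset.range k, |f (y (i+1)) - f (y i)| ^ p := by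
      apply Finset.sum_congr rfl
      intro i hi
      have a1 : z (m+(1+i)) = y i := by dsimp only [z]; rw [if_neg (by omega)]; congr 1; omega
      have a2 : z (m+(1+i)+1) = y (i+1) := by dsimp only [z]; rw [if_neg (by omega)]; congr 1; omega
      rw [a1, a2]
    rw [s1, s2]
    have : 0 ≤ ∑ i ∈ Finset.range 1, |f (z (m + i + 1)) - f (z (m + i))| ^ p := by positivity
    linarith

lemma ylω_add (f : ℝ → ℝ) (p u w v : ℝ) (huw : u ≤ w) (hwv : w ≤ v) (hb : BddAbove (ylS f p u v)) :
    ylω f p u w + ylω f p w v ≤ ylω f p u v := by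
  have h : ∀ r ∈ ylS f p u w, ∀ s ∈ ylS f p w v, r + s ≤ ylω f p u v := by
    intro r hr s hs
    obtain ⟨z, hz, h⟩ := ylS_add f p u w v huw hwv r s hr hs
    exact h.trans (le_csSup hb hz)
  have h2 : ∀ s ∈ ylS f p w v, ylω f p u w ≤ ylω f p u v - s := by
    intro s hs
    exact csSup_le (ylS_nonempty f p u w huw) (fun r hr => by linarith [h r hr s hs])
  have h3 : ylω f p w v ≤ ylω f p u v - ylω f p u w :=
    csSup_le (ylS_nonempty f p w v hwv) (fun s hs => by linarith [h2 s hs])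
  linarith

lemma ylω_sum (f : ℝ → ℝ) (p : ℝ) (n : ℕ) : ∀ (t : Fin (n+1) → ℝ), Monotone t →
    BddAbove (ylS f p (t 0) (t (Fin.last n))) →
    ∑ i : Fin n, ylω f p (t i.castSucc) (t i.succ) ≤ ylω f p (t 0) (t (Fin.last n)) := by
  induction n with
  | zero => intro t _ _; simpa using ylω_nonneg _ _ _ _
  | succ n ih =>
    intro t ht hb
    rw [Fin.sum_univ_castSucc]
    have h1 : t (Fin.last n).castSucc ≤ t (Fin.last n).succ := ht (Fin.castSucc_le_succ _)
    have h2 := ih (fun i => t i.castSucc) (fun a b hab => ht (Fin.castSucc_le_castSucc_iff.2 hab))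
      (hb.mono (ylS_mono f p _ _ _ _ le_rfl h1))
    have h3 := ylω_add f p (t 0) (t (Fin.last n).castSucc) (t (Fin.last n).succ) (ht (Fin.zero_le _)) h1 hb
    simp only [Fin.castSucc_zero, Fin.succ_last, Fin.succ_castSucc] at h2 h3 ⊢
    linarith

lemma yl_pVar (f : ℝ → ℝ) (p a b : ℝ) (hp : 0 < p) (hfin : pVar f p a b < ⊤) :
    ∀ r ∈ ylS f p a b, r ≤ (pVar f p a b).toReal := by
  rintro r ⟨x, m, hx, hI, rfl⟩
  have key : ∀ m : ℕ, ∃ (n : ℕ) (t : Fin (n+1) → ℝ), StrictMono t ∧ (∀ i, t i ∈ Icc a b) ∧ t (Fin.last n) = x m ∧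
      ∑ i : Fin n, ENNReal.ofReal (|f (t i.succ) - f (t i.castSucc)| ^ p) =
        ENNReal.ofReal (∑ i ∈ Finset.range m, |f (x (i+1)) - f (x i)| ^ p) := by
    intro m
    induction m with
    | zero => exact ⟨0, fun _ => x 0, fun i j hij => absurd hij (by omega), fun _ => hI 0, rfl, by simp⟩
    | succ m ih =>
      obtain ⟨n, t, ht, htI, hl, hs⟩ := ih
      rcases (hx (Nat.le_succ m)).eq_or_lt with h | h
      · refine ⟨n, t, ht, htI, hl.trans h, ?_⟩
        rw [hs, Finset.sum_range_succ]
        have : x (m+1) = x m := h.symm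
        simp [this, Real.zero_rpow hp.ne']
      · refine ⟨n+1, Fin.snoc t (x (m+1)), ?_, ?_, ?_, ?_⟩
        · rw [Fin.strictMono_iff_lt_succ]
          intro i
          refine Fin.lastCases ?_ (fun j => ?_) i
          · rw [Fin.succ_last, Fin.snoc_last, Fin.snoc_castSucc, hl]; exact h
          · rw [Fin.succ_castSucc, Fin.snoc_castSucc, Fin.snoc_castSucc]; exact ht (Fin.castSucc_lt_succ)
        · intro i
          refine Fin.lastCases ?_ (fun j => ?_) i
          · rw [Fin.snoc_last]; exact hI _
          · rw [Fin.snoc_castSucc]; exact htI _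
        · rw [Fin.snoc_last]
        · rw [Fin.sum_univ_castSucc, Finset.sum_range_succ, ENNReal.ofReal_add (by positivity) (by positivity), ← hs]
          congr 1
          · apply Finset.sum_congr rfl
            intro i _
            rw [Fin.succ_castSucc, Fin.snoc_castSucc, Fin.snoc_castSucc]
          · rw [Fin.succ_last, Fin.snoc_last, Fin.snoc_castSucc, hl]
  obtain ⟨n, t, ht, htI, -, hs⟩ := key m
  rw [← ENNReal.ofReal_le_iff_le_toReal hfin.ne, ← hs]
  unfold pVar
  exact le_iSup_of_le n (le_iSup_of_le t (le_iSup_of_le ht (le_iSup_of_le htI le_rfl)))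

lemma yl_osc (f : ℝ → ℝ) (p u v V : ℝ) (hp : 0 < p) (huv : u < v) (hV : ∀ r ∈ ylS f p u v, r ≤ V) :
    0 ≤ oscNorm f u v ∧ oscNorm f u v ^ p ≤ V ∧ ∀ y ∈ Icc u v, ∀ z ∈ Icc u v, |f y - f z| ≤ oscNorm f u v := by
  have hVr : ∀ y ∈ Icc u v, ∀ z ∈ Icc u v, |f y - f z| ≤ V ^ (1/p) := fun y hy z hz =>
    yl_root p _ V hp (abs_nonneg _) (ylS_two f p u v V hV y z hy hz)
  have hV0 : 0 ≤ V := (by positivity : 0 ≤ |f u - f u| ^ p).trans (ylS_two f p u v V hV u u ⟨le_rfl, huv.le⟩ ⟨le_rfl, huv.le⟩)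
  have hb : ∀ x ∈ {x | ∃ s ∈ Set.Icc u v, ∃ t ∈ Set.Icc u v, s < t ∧ x = |f t - f s|}, x ≤ V ^ (1/p) := by
    rintro x ⟨s, hs, t, ht, _, rfl⟩
    exact hVr t ht s hs
  have h0 : 0 ≤ oscNorm f u v := by
    apply Real.sSup_nonneg
    rintro x ⟨s, hs, t, ht, _, rfl⟩
    positivity
  refine ⟨h0, ?_, ?_⟩
  · have : oscNorm f u v ≤ V ^ (1/p) :=
      csSup_le ⟨_, u, ⟨le_rfl, huv.le⟩, v, ⟨huv.le, le_rfl⟩, huv, rfl⟩ hb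
    rw [one_div, Real.le_rpow_inv_iff_of_pos h0 hV0 hp] at this
    exact this
  · intro y hy z hz
    rcases lt_trichotomy y z with h | h | h
    · rw [abs_sub_comm]
      exact le_csSup ⟨_, hb⟩ ⟨y, hy, z, hz, h, rfl⟩
    · simpa [h] using h0
    · exact le_csSup ⟨_, hb⟩ ⟨z, hz, y, hy, h, rfl⟩

lemma yl_osc_le (f : ℝ → ℝ) (u v η : ℝ) (huv : u < v) (h : ∀ y ∈ Icc u v, ∀ z ∈ Icc u v, |f y - f z| ≤ η) :
    oscNorm f u v ≤ η := by
  refine csSup_le ⟨_, u, ⟨le_rfl, huv.le⟩, v, ⟨huv.le, le_rfl⟩, huv, rfl⟩ ?_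
  rintro x ⟨s, hs, t, ht, _, rfl⟩
  exact h t ht s hs

lemma yl_finite (f g : ℝ → ℝ) (a b : ℝ) (hab : a < b) (K : ℝ → ℝ → ℝ)
    (H : ∀ u v, a ≤ u → u < v → v ≤ b → ∀ x : ℕ → ℝ, Monotone x → (∀ i, x i ∈ Icc u v) → ∀ n, x 0 = u → x (n+1) = v →
      ∀ ξ ∈ Icc u v, |∑ i ∈ Finset.range (n+1), f (x i) * (g (x (i+1)) - g (x i)) - f ξ * (g v - g u)| ≤ K u v)
    (A : Finset ℝ) : ∃ J : ℝ → ℝ, J a = 0 ∧ ∀ u ∈ A, ∀ v ∈ A, a ≤ u → u < v → v ≤ b → ∀ ξ ∈ Icc u v,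
      |J v - J u - f ξ * (g v - g u)| ≤ K u v := by
  classical
  let B := A.filter (· ∈ Icc a b)
  have hB : ∀ v ∈ B, v ∈ Icc a b := fun v hv => (Finset.mem_filter.1 hv).2
  let t : ℕ → ℝ := fun i => if h : i < B.card then B.orderEmbOfFin rfl ⟨i, h⟩ else b
  have htm : Monotone t := by
    intro i j hij
    dsimp only [t]
    split_ifs with h1 h2 h2
    · exact (B.orderEmbOfFin rfl).monotone hij
    · exact (hB _ (B.orderEmbOfFin_mem rfl _)).2
    · omega
    · exact le_rfl
  have hidx : ∀ v, ∃ i, v ∈ B → t i = v := by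
    intro v
    by_cases hv : v ∈ B
    · have : v ∈ Set.range (B.orderEmbOfFin rfl) := by rw [Finset.range_orderEmbOfFin]; exact hv
      obtain ⟨i, hi⟩ := this
      exact ⟨i, fun _ => by simp [t, hi]⟩
    · exact ⟨0, fun h => absurd h hv⟩
  choose idx hidx using hidx
  let T : ℕ → ℝ := fun j => ∑ i ∈ Finset.range j, f (t i) * (g (t (i+1)) - g (t i))
  refine ⟨fun v => T (idx v) - T (idx a), by simp, ?_⟩
  intro u hu v hv hau huv hvb ξ hξ
  have hu' := hidx u (Finset.mem_filter.2 ⟨hu, hau, by linarith⟩)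
  have hv' := hidx v (Finset.mem_filter.2 ⟨hv, by linarith, hvb⟩)
  have hij : idx u < idx v := by
    by_contra h
    have := htm (not_lt.1 h)
    rw [hu', hv'] at this
    linarith
  obtain ⟨n, hn⟩ : ∃ n, idx v = idx u + (n+1) := ⟨idx v - idx u - 1, by omega⟩
  have := H u v hau huv hvb (fun k => t (idx u + min k (n+1))) (fun a b hab => htm (by omega))
    (fun i => ⟨hu'.symm.le.trans (htm (by omega)), (htm (by omega)).trans hv'.le⟩) n (by simpa using hu')
    (by simp [← hn, hv']) ξ hξ
  have e : T (idx v) - T (idx a) - (T (idx u) - T (idx a)) = ∑ i ∈ Finset.range (n+1),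
      f (t (idx u + min i (n+1))) * (g (t (idx u + min (i+1) (n+1))) - g (t (idx u + min i (n+1)))) := by
    have : T (idx v) = T (idx u) + ∑ i ∈ Finset.range (n+1), f (t (idx u + i)) * (g (t (idx u + i + 1)) - g (t (idx u + i))) := by
      dsimp only [T]
      rw [hn, Finset.sum_range_add]
    rw [this, show ∀ a b c : ℝ, a + b - c - (a - c) = b by intros; ring]
    apply Finset.sum_congr rfl
    intro i hi
    have hi := Finset.mem_range.1 hi
    rw [min_eq_left (by omega), min_eq_left (by omega), add_assoc]
  dsimp only
  rw [e]
  exact this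

lemma yl_J (f g : ℝ → ℝ) (a b : ℝ) (hab : a < b) (K : ℝ → ℝ → ℝ)
    (H : ∀ u v, a ≤ u → u < v → v ≤ b → ∀ x : ℕ → ℝ, Monotone x → (∀ i, x i ∈ Icc u v) → ∀ n, x 0 = u → x (n+1) = v →
      ∀ ξ ∈ Icc u v, |∑ i ∈ Finset.range (n+1), f (x i) * (g (x (i+1)) - g (x i)) - f ξ * (g v - g u)| ≤ K u v) :
    ∃ J : ℝ → ℝ, ∀ u v, a ≤ u → u < v → v ≤ b → ∀ ξ ∈ Icc u v,
      |J v - J u - f ξ * (g v - g u)| ≤ K u v := by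
  choose JA hJ0 hJ using yl_finite f g a b hab K H
  let F : Ultrafilter (Finset ℝ) := Ultrafilter.of atTop
  have hF : (F : Filter (Finset ℝ)) ≤ atTop := Ultrafilter.of_le _
  have hmem : ∀ v : ℝ, ∀ᶠ A in (F : Filter (Finset ℝ)), v ∈ A := by
    intro v
    apply hF
    filter_upwards [eventually_ge_atTop {v}] with A hA
    exact hA (by simp)
  have hlim : ∀ v, ∃ L, v ∈ Icc a b → Tendsto (fun A => JA A v) F (nhds L) := by
    intro v
    by_cases hv : v ∈ Icc a b
    · rcases hv.1.eq_or_lt with h | h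
      · refine ⟨0, fun _ => ?_⟩
        subst h
        simp only [hJ0]
        exact tendsto_const_nhds
      · have hm : ∀ᶠ A in (F : Filter (Finset ℝ)), JA A v ∈ Icc (f a * (g v - g a) - K a v) (f a * (g v - g a) + K a v) := by
          filter_upwards [hmem a, hmem v] with A h1 h2
          have := hJ A a h1 v h2 le_rfl h hv.2 a ⟨le_rfl, h.le⟩
          rw [hJ0, sub_zero, abs_le] at this
          exact ⟨by linarith [this.1], by linarith [this.2]⟩
        obtain ⟨L, -, hL⟩ := isCompact_Icc.ultrafilter_le_nhds' (F.map (fun A => JA A v)) hm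
        exact ⟨L, fun _ => hL⟩
    · exact ⟨0, fun h => absurd h hv⟩
  choose J hJl using hlim
  refine ⟨J, fun u v hau huv hvb ξ hξ => ?_⟩
  have h1 := hJl u ⟨hau, by linarith⟩
  have h2 := hJl v ⟨by linarith, hvb⟩
  refine le_of_tendsto (((h2.sub h1).sub_const (f ξ * (g v - g u))).abs) ?_
  filter_upwards [hmem u, hmem v] with A hu hv
  exact hJ A u hu v hv hau huv hvb ξ hξ

lemma yl_leb (f g : ℝ → ℝ) (a b : ℝ) (h : NoCommonDiscont f g a b) (η : ℝ) (hη : 0 < η) :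
    ∃ δ > 0, ∀ u v, a ≤ u → u < v → v ≤ b → v - u < δ →
      (∀ y ∈ Icc u v, ∀ z ∈ Icc u v, |f y - f z| ≤ η) ∨ (∀ y ∈ Icc u v, ∀ z ∈ Icc u v, |g y - g z| ≤ η) := by
  have aux : ∀ (F : ℝ → ℝ) (x : ℝ), ContinuousWithinAt F (Icc a b) x → ∃ r > 0, 
      ∀ y ∈ Metric.ball x r ∩ Icc a b, ∀ z ∈ Metric.ball x r ∩ Icc a b, |F y - F z| ≤ η := by
    intro F x hF
    obtain ⟨r, hr, h⟩ := Metric.continuousWithinAt_iff.1 hF (η/2) (by linarith)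
    refine ⟨r, hr, fun y hy z hz => ?_⟩
    have h1 := h hy.2 hy.1
    have h2 := h hz.2 hz.1
    have := dist_triangle_right (F y) (F z) (F x)
    rw [Real.dist_eq] at this
    linarith
  let good : Set ℝ → Prop := fun U => (∀ y ∈ U ∩ Icc a b, ∀ z ∈ U ∩ Icc a b, |f y - f z| ≤ η) ∨
    (∀ y ∈ U ∩ Icc a b, ∀ z ∈ U ∩ Icc a b, |g y - g z| ≤ η)
  obtain ⟨δ, hδ, hL⟩ := lebesgue_number_lemma_of_metric (s := Icc a b) (c := fun U : {U : Set ℝ // IsOpen U ∧ good U} => U.1)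
    isCompact_Icc (fun U => U.2.1) (by
      intro x hx
      rw [mem_iUnion]
      rcases h x hx with h | h
      · obtain ⟨r, hr, h⟩ := aux f x h
        exact ⟨⟨Metric.ball x r, Metric.isOpen_ball, Or.inl h⟩, Metric.mem_ball_self hr⟩
      · obtain ⟨r, hr, h⟩ := aux g x h
        exact ⟨⟨Metric.ball x r, Metric.isOpen_ball, Or.inr h⟩, Metric.mem_ball_self hr⟩)
  refine ⟨δ, hδ, fun u v hau huv hvb hd => ?_⟩
  obtain ⟨U, hU⟩ := hL u ⟨hau, by linarith⟩
  have hsub : ∀ y ∈ Icc u v, y ∈ U.1 ∩ Icc a b := by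
    intro y hy
    refine ⟨hU ?_, hau.trans hy.1, hy.2.trans hvb⟩
    rw [Metric.mem_ball, Real.dist_eq, abs_of_nonneg (by linarith [hy.1])]
    linarith [hy.2]
  rcases U.2.2 with h | h
  · exact Or.inl fun y hy z hz => h y (hsub y hy) z (hsub z hz)
  · exact Or.inr fun y hy z hz => h y (hsub y hy) z (hsub z hz)

lemma yl_amgm (α V W : ℝ) (h0 : 0 ≤ α) (h1 : α ≤ 1) (hV : 0 ≤ V) (hW : 0 ≤ W) : V ^ (1-α) * W ^ α ≤ V + W := by
  have := Real.geom_mean_le_arith_mean2_weighted (w₁ := 1-α) (w₂ := α) (by linarith) h0 hV hW (by ring)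
  nlinarith

lemma yl_final_alg (p q V W O : ℝ) (hp : 0 < p) (hV : 0 < V) :
    V ^ (1/p) * W ^ (1/q) * (O ^ (1 + p/q - p) / (V ^ (1/p)) ^ (1 + p/q - p)) =
      O ^ (1 + p/q - p) * V ^ (1-1/q) * W ^ (1/q) := by
  rw [← Real.rpow_mul hV.le]
  have : V ^ (1-1/q) = V ^ (1/p) / V ^ (1/p * (1 + p/q - p)) := by
    rw [← Real.rpow_sub hV]
    congr 1
    by_cases hq : q = 0
    · subst hq; simp; field_simp; ring
    · field_simp; ring
  rw [this]; ring

lemma yl_eta (θ θ' M M' ε : ℝ) (h : 0 < θ) (h' : 0 < θ') (hε : 0 < ε) :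
    ∃ η > 0, η ^ θ * M + η ^ θ' * M' < ε := by
  have hc : ContinuousAt (fun η : ℝ => η ^ θ * M + η ^ θ' * M') 0 :=
    ((Real.continuousAt_rpow_const 0 θ (Or.inr h.le)).mul continuousAt_const).add
      ((Real.continuousAt_rpow_const 0 θ' (Or.inr h'.le)).mul continuousAt_const)
  have h0 : (fun η : ℝ => η ^ θ * M + η ^ θ' * M') 0 < ε := by
    simp [Real.zero_rpow h.ne', Real.zero_rpow h'.ne', hε]
  obtain ⟨r, hr, hb⟩ := Metric.eventually_nhds_iff.1 (hc.eventually_lt_const h0)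
  refine ⟨r/2, by linarith, hb ?_⟩
  rw [Real.dist_eq, sub_zero, abs_of_pos (by linarith)]; linarith

theorem yl_main (p q : ℝ) (hp : 1 < p) (hq : 1 < q) (hpq : 1 < 1/q + 1/p) (a b : ℝ) (hab : a < b) (f g : ℝ → ℝ)
    (hnc : NoCommonDiscont f g a b) (hf : pVar f p a b < ⊤) (hg : pVar g q a b < ⊤) :
    ∃ I : ℝ, RSIntegral f g a b I ∧ ∀ ξ ∈ Icc a b,
      |I - f ξ * (g b - g a)| ≤ (ylC p q + 1) * (oscNorm f a b ^ (1 + p/q - p) * ylω f p a b ^ (1-1/q) * ylω g q a b ^ (1/q)) ∧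
      |I - f ξ * (g b - g a)| ≤ (ylC q p + 1) * (oscNorm g a b ^ (1 + q/p - q) * ylω g q a b ^ (1-1/p) * ylω f p a b ^ (1/p)) := by
  have hp0 : 0 < p := by linarith
  have hq0 : 0 < q := by linarith
  have hbf : BddAbove (ylS f p a b) := ⟨_, yl_pVar f p a b hp0 hf⟩
  have hbg : BddAbove (ylS g q a b) := ⟨_, yl_pVar g q a b hq0 hg⟩
  set A : ℝ → ℝ → ℝ := fun u v => (ylC p q + 1) * (oscNorm f u v ^ (1 + p/q - p) * ylω f p u v ^ (1-1/q) * ylω g q u v ^ (1/q)) with hA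
  set B : ℝ → ℝ → ℝ := fun u v => (ylC q p + 1) * (oscNorm g u v ^ (1 + q/p - q) * ylω g q u v ^ (1-1/p) * ylω f p u v ^ (1/p)) with hB
  have hVf : ∀ u v, a ≤ u → v ≤ b → ∀ r ∈ ylS f p u v, r ≤ ylω f p u v := fun u v hu hv r hr =>
    le_csSup (hbf.mono (ylS_mono f p u v a b hu hv)) hr
  have hVg : ∀ u v, a ≤ u → v ≤ b → ∀ r ∈ ylS g q u v, r ≤ ylω g q u v := fun u v hu hv r hr =>
    le_csSup (hbg.mono (ylS_mono g q u v a b hu hv)) hr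
  obtain ⟨J, hJ⟩ := yl_J f g a b hab (fun u v => min (A u v) (B u v)) (by
    intro u v hau huv hvb x hx hxI n h0 hn ξ hξ
    obtain ⟨o1, o2, o3⟩ := yl_osc f p u v _ hp0 huv (hVf u v hau hvb)
    obtain ⟨o1', o2', o3'⟩ := yl_osc g q u v _ hq0 huv (hVg u v hau hvb)
    have h1 := yl_coreA p q hp hq hpq f g u v _ _ _ o1 o2 o3 (hVf u v hau hvb) (hVg u v hau hvb) x hx hxI ξ hξ n
    have h2 := yl_coreB p q hp hq hpq f g u v _ _ _ o1' o2' o3' (hVf u v hau hvb) (hVg u v hau hvb) x hx hxI ξ hξ n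
    rw [h0, hn] at h1 h2
    exact le_min h1 h2)
  refine ⟨J b - J a, ?_, fun ξ hξ => ?_⟩
  swap
  · have := hJ a b le_rfl hab le_rfl ξ hξ
    exact ⟨this.trans (min_le_left _ _), this.trans (min_le_right _ _)⟩
  have hip : 1/p < 1 := by rw [div_lt_one hp0]; exact hp
  have hiq : 1/q < 1 := by rw [div_lt_one hq0]; exact hq
  have hθ : 0 < 1 + p/q - p := by
    have : 1 + p/q - p = p * (1/q + 1/p - 1) := by field_simp; ring
    rw [this]; exact mul_pos hp0 (by linarith)
  have hθ' : 0 < 1 + q/p - q := by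
    have : 1 + q/p - q = q * (1/q + 1/p - 1) := by field_simp
    rw [this]; exact mul_pos hq0 (by linarith)
  have hC1 := ylC_pos p q hq hpq
  have hC2 := ylC_pos q p hp (by linarith)
  intro ε hε
  set M := ylω f p a b + ylω g q a b with hM
  obtain ⟨η, hη, hηε⟩ := yl_eta (1 + p/q - p) (1 + q/p - q) ((ylC p q + 1) * M) ((ylC q p + 1) * M) ε hθ hθ' hε
  obtain ⟨δ, hδ, hL⟩ := yl_leb f g a b hnc η hη
  refine ⟨δ, hδ, ?_⟩
  intro n t ξ ht h0 hn hξ hmesh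
  set D := η ^ (1 + p/q - p) * (ylC p q + 1) + η ^ (1 + q/p - q) * (ylC q p + 1) with hD
  have hD0 : 0 ≤ D := by positivity
  have hstep : ∀ i : Fin n, |f (ξ i) * (g (t i.succ) - g (t i.castSucc)) - (J (t i.succ) - J (t i.castSucc))| ≤
      D * (ylω f p (t i.castSucc) (t i.succ) + ylω g q (t i.castSucc) (t i.succ)) := by
    intro i
    have hu : a ≤ t i.castSucc := by rw [← h0]; exact ht.monotone (Fin.zero_le _)
    have hv : t i.succ ≤ b := by rw [← hn]; exact ht.monotone (Fin.le_last _)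
    have huv : t i.castSucc < t i.succ := ht (Fin.castSucc_lt_succ)
    have hm := hmesh i
    have hxi := hξ i
    generalize t i.castSucc = u at *
    generalize t i.succ = v at *
    have h1 := hJ _ _ hu huv hv (ξ i) hxi
    rw [abs_sub_comm]
    have w1 := ylω_nonneg f p u v
    have w2 := ylω_nonneg g q u v
    obtain ⟨o1, -, -⟩ := yl_osc f p u v _ hp0 huv (hVf u v hu hv)
    obtain ⟨o1', -, -⟩ := yl_osc g q u v _ hq0 huv (hVg u v hu hv)
    rcases hL u v hu huv hv hm with h | h
    · have ho := yl_osc_le f u v η huv h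
      have am := yl_amgm (1/q) _ _ (by positivity) hiq.le w1 w2
      calc _ ≤ A u v := h1.trans (min_le_left _ _)
        _ = (ylC p q + 1) * (oscNorm f u v ^ (1 + p/q - p) * (ylω f p u v ^ (1-1/q) * ylω g q u v ^ (1/q))) := by
            rw [hA]; ring
        _ ≤ (ylC p q + 1) * (η ^ (1 + p/q - p) * (ylω f p u v + ylω g q u v)) := by gcongr
        _ = η ^ (1 + p/q - p) * (ylC p q + 1) * (ylω f p u v + ylω g q u v) := by ring
        _ ≤ _ := by
            rw [hD]
            gcongr
            have : 0 ≤ η ^ (1 + q/p - q) * (ylC q p + 1) := by positivity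
            linarith
    · have ho := yl_osc_le g u v η huv h
      have am := yl_amgm (1/p) _ _ (by positivity) hip.le w2 w1
      calc _ ≤ B u v := h1.trans (min_le_right _ _)
        _ = (ylC q p + 1) * (oscNorm g u v ^ (1 + q/p - q) * (ylω g q u v ^ (1-1/p) * ylω f p u v ^ (1/p))) := by
            rw [hB]; ring
        _ ≤ (ylC q p + 1) * (η ^ (1 + q/p - q) * (ylω g q u v + ylω f p u v)) := by gcongr
        _ = η ^ (1 + q/p - q) * (ylC q p + 1) * (ylω f p u v + ylω g q u v) := by ring
        _ ≤ _ := by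
            rw [hD]
            gcongr
            have : 0 ≤ η ^ (1 + p/q - p) * (ylC p q + 1) := by positivity
            linarith
  have htel : ∑ i : Fin n, (J (t i.succ) - J (t i.castSucc)) = J b - J a := by
    rw [← h0, ← hn]
    clear * -
    induction n with
    | zero => simp
    | succ n ih =>
      rw [Fin.sum_univ_castSucc]
      have := ih (fun i => t i.castSucc)
      simp only [Fin.castSucc_zero, Fin.succ_last, Fin.succ_castSucc] at this ⊢
      rw [this]; ring
  rw [← htel, ← Finset.sum_sub_distrib]
  have e1 := ylω_sum f p n t ht.monotone (by rw [h0, hn]; exact hbf)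
  have e2 := ylω_sum g q n t ht.monotone (by rw [h0, hn]; exact hbg)
  rw [h0, hn] at e1 e2
  calc _ ≤ ∑ i : Fin n, D * (ylω f p (t i.castSucc) (t i.succ) + ylω g q (t i.castSucc) (t i.succ)) :=
        (Finset.abs_sum_le_sum_abs _ _).trans (Finset.sum_le_sum fun i _ => hstep i)
    _ = D * (∑ i : Fin n, ylω f p (t i.castSucc) (t i.succ) + ∑ i : Fin n, ylω g q (t i.castSucc) (t i.succ)) := by
        rw [← Finset.mul_sum, Finset.sum_add_distrib]
    _ ≤ D * M := by rw [hM]; gcongr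
    _ = _ := by rw [hD]; ring
    _ < ε := hηε


/-- Remark 4 (second part): estimate with an arbitrary evaluation point `ξ ∈ [a;b]`. -/
theorem improved_loeve_young_min
    (p q : ℝ) (hp : 1 < p) (hq : 1 < q) (hpq : 1 / p + 1 / q > 1) :
    ∃ C : ℝ, 0 < C ∧ ∀ (a b : ℝ), a < b → ∀ f g : ℝ → ℝ,
      NoCommonDiscont f g a b → pVar f p a b < ⊤ → pVar g q a b < ⊤ →
      ∀ ξ ∈ Set.Icc a b,
        ∃ I : ℝ, RSIntegral f g a b I ∧
          |I - f ξ * (g b - g a)| ≤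
            2 * C * pVarNorm f p a b * pVarNorm g q a b *
              min (oscNorm f a b ^ (1 + p / q - p) / pVarNorm f p a b ^ (1 + p / q - p))
                (oscNorm g a b ^ (1 + q / p - q) / pVarNorm g q a b ^ (1 + q / p - q)) := by
  have hpq' : 1 < 1/q + 1/p := by linarith
  have hp0 : 0 < p := by linarith
  have hq0 : 0 < q := by linarith
  have hC1 := ylC_pos p q hq hpq'
  have hC2 := ylC_pos q p hp (by linarith)
  have hip : 1/p < 1 := by rw [div_lt_one hp0]; exact hp
  have hiq : 1/q < 1 := by rw [div_lt_one hq0]; exact hq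
  refine ⟨ylC p q + ylC q p + 1, by positivity, ?_⟩
  intro a b hab f g hnc hf hg ξ hξ
  obtain ⟨I, hI, hbd⟩ := yl_main p q hp hq hpq' a b hab f g hnc hf hg
  refine ⟨I, hI, ?_⟩
  obtain ⟨b1, b2⟩ := hbd ξ hξ
  have hVf := yl_pVar f p a b hp0 hf
  have hVg := yl_pVar g q a b hq0 hg
  have w1 : ylω f p a b ≤ (pVar f p a b).toReal := csSup_le (ylS_nonempty f p a b hab.le) hVf
  have w2 : ylω g q a b ≤ (pVar g q a b).toReal := csSup_le (ylS_nonempty g q a b hab.le) hVg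
  have n1 := ylω_nonneg f p a b
  have n2 := ylω_nonneg g q a b
  obtain ⟨o1, -, -⟩ := yl_osc f p a b _ hp0 hab hVf
  obtain ⟨o1', -, -⟩ := yl_osc g q a b _ hq0 hab hVg
  unfold pVarNorm
  generalize (pVar f p a b).toReal = V at *
  generalize (pVar g q a b).toReal = W at *
  have hV : 0 ≤ V := n1.trans w1
  have hW : 0 ≤ W := n2.trans w2
  have c1 : |I - f ξ * (g b - g a)| ≤ 2 * (ylC p q + ylC q p + 1) * (oscNorm f a b ^ (1 + p/q - p) * V ^ (1-1/q) * W ^ (1/q)) := by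
    refine b1.trans ?_
    have h1 : 0 ≤ 1 - 1/q := by linarith
    gcongr
    linarith
  have c2 : |I - f ξ * (g b - g a)| ≤ 2 * (ylC p q + ylC q p + 1) * (oscNorm g a b ^ (1 + q/p - q) * W ^ (1-1/p) * V ^ (1/p)) := by
    refine b2.trans ?_
    have h1 : 0 ≤ 1 - 1/p := by linarith
    gcongr
    linarith
  rcases hV.eq_or_lt with h | hV0
  · rw [← h, Real.zero_rpow (by linarith)] at c1
    rw [mul_zero, zero_mul, mul_zero] at c1
    exact c1.trans (by positivity)
  rcases hW.eq_or_lt with h | hW0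
  · rw [← h, Real.zero_rpow (by linarith)] at c2
    rw [mul_zero, zero_mul, mul_zero] at c2
    exact c2.trans (by positivity)
  rw [← yl_final_alg p q V W _ hp0 hV0] at c1
  rw [← yl_final_alg q p W V _ hq0 hW0] at c2
  rw [mul_assoc (2 * _), mul_assoc (2 * _), mul_min_of_nonneg _ _ (by positivity), mul_min_of_nonneg _ _ (by positivity)]
  refine le_min c1 (c2.trans (le_of_eq ?_))
  ring
end
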